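/- Let n ≥ 2 and 1 ≤ k ≤ n−1. Let u : ℝⁿ → ℝ be a smooth entire k-convex function which has quadratic growth and solves σ_k(λ(D²u(x))) = 1 for all x ∈ ℝⁿ. Assume there is a uniform constant A > 0 such that σ_{k+1}(λ(D²u(x))) ≥ −A for all x ∈ ℝⁿ. Then u is a quadratic polynomial, i.e. there exist a symmetric matrix A', a vector b ∈ ℝⁿ and c ∈ ℝ with u(x) = ½ xᵀA'x + b·x + c for all x. -/

import Mathlib

open scoped BigOperators

noncomputable section

/-- The positive orthant `Γₙ = (0,∞)ⁿ` in `ℝⁿ`. -/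
def PosOrthant (n : ℕ) : Set (Fin n → ℝ) := {lam | ∀ i, 0 < lam i}

/-- A convex invariant cone: an open cone `Γ ⊆ ℝⁿ` with vertex at the origin, `Γ ≠ ℝⁿ`,
which is convex, satisfies `Γ + Γₙ ⊆ Γ`, and is invariant under permutations of coordinates. -/
def IsConvexInvariantCone {n : ℕ} (Γ : Set (Fin n → ℝ)) : Prop :=
  IsOpen Γ ∧ Γ ≠ Set.univ ∧ Convex ℝ Γ ∧
    (∀ lam ∈ Γ, ∀ t : ℝ, 0 < t → t • lam ∈ Γ) ∧
    (∀ lam ∈ Γ, ∀ tau ∈ PosOrthant n, lam + tau ∈ Γ) ∧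
    (∀ lam ∈ Γ, ∀ σ : Equiv.Perm (Fin n), lam ∘ σ ∈ Γ)

/-- The partial derivative `∂f/∂λᵢ(λ)`. -/
def fpd {n : ℕ} (f : (Fin n → ℝ) → ℝ) (i : Fin n) (lam : Fin n → ℝ) : ℝ :=
  fderiv ℝ f lam (Pi.single i 1)

/-- A concave elliptic Hessian operator on a convex invariant cone `Γ`:
a `C²`, permutation-invariant, concave function `f` on `Γ` which is elliptic
(`∂f/∂λᵢ > 0`), positive, and positively homogeneous of degree one. -/
def IsConcaveEllipticHessianOp {n : ℕ} (Γ : Set (Fin n → ℝ)) (f : (Fin n → ℝ) → ℝ) : Prop :=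
  ContDiffOn ℝ 2 f Γ ∧ ConcaveOn ℝ Γ f ∧
    (∀ lam ∈ Γ, ∀ σ : Equiv.Perm (Fin n), f (lam ∘ σ) = f lam) ∧
    (∀ lam ∈ Γ, ∀ i, 0 < fpd f i lam) ∧
    (∀ lam ∈ Γ, 0 < f lam) ∧
    (∀ lam ∈ Γ, ∀ t : ℝ, 0 < t → f (t • lam) = t * f lam)

/-- Condition N: whenever `λ ∈ Γ` satisfies `f(λ) = 1` and `Σᵢ ∂f/∂λᵢ(λ) ≤ C` for some `C > 0`,
then `∂f/∂λᵢ(λ) ≥ 1/(N₁ C^{N₂})` for every `i`. -/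
def ConditionN {n : ℕ} (Γ : Set (Fin n → ℝ)) (f : (Fin n → ℝ) → ℝ) (N₁ N₂ : ℝ) : Prop :=
  ∀ lam ∈ Γ, f lam = 1 → ∀ C : ℝ, 0 < C → (∑ i, fpd f i lam) ≤ C →
    ∀ i, 1 / (N₁ * C ^ N₂) ≤ fpd f i lam

/-- The Hessian matrix `D²u(x)`. -/
def hessianMatrix {n : ℕ} (u : EuclideanSpace ℝ (Fin n) → ℝ) (x : EuclideanSpace ℝ (Fin n)) :
    Matrix (Fin n) (Fin n) ℝ :=
  fun i j => iteratedFDeriv ℝ 2 u x ![EuclideanSpace.single i 1, EuclideanSpace.single j 1]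

/-- The vector of eigenvalues `λ(D²u(x))` of the Hessian of `u` at `x`
(junk value `0` if the Hessian matrix fails to be symmetric). -/
def hessEigen {n : ℕ} (u : EuclideanSpace ℝ (Fin n) → ℝ) (x : EuclideanSpace ℝ (Fin n)) :
    Fin n → ℝ :=
  if h : (hessianMatrix u x).IsHermitian then h.eigenvalues else 0

/-- Condition D for a solution `u` of `F(D²u) = 1` on a set `Ω`: at every point, if an
eigenvalue `λᵢ` of `D²u` exceeds `D₁` then `∂f/∂λᵢ(λ) ⬝ λᵢ ≤ D₂`. -/
def ConditionD {n : ℕ} (f : (Fin n → ℝ) → ℝ) (u : EuclideanSpace ℝ (Fin n) → ℝ)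
    (Ω : Set (EuclideanSpace ℝ (Fin n))) (D₁ D₂ : ℝ) : Prop :=
  ∀ x ∈ Ω, ∀ i, D₁ < hessEigen u x i →
    fpd f i (hessEigen u x) * hessEigen u x i ≤ D₂

/-- The `k`-th elementary symmetric polynomial `σ_k` on `ℝⁿ`. -/
def esymmF (n k : ℕ) (lam : Fin n → ℝ) : ℝ :=
  ∑ s ∈ (Finset.univ : Finset (Fin n)).powersetCard k, ∏ i ∈ s, lam i

/-- The Gårding cone `Γ_k = {λ : σ_j(λ) > 0, j = 1,…,k}`. -/
def GammaK (n k : ℕ) : Set (Fin n → ℝ) :=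
  {lam | ∀ j : ℕ, 1 ≤ j → j ≤ k → 0 < esymmF n j lam}

/-- The cone `Γ̂_p` of vectors all of whose sums of `p` distinct coordinates are positive. -/
def GammaHat (n p : ℕ) : Set (Fin n → ℝ) :=
  {lam | ∀ s : Finset (Fin n), s.card = p → 0 < ∑ i ∈ s, lam i}

/-- The `p`-Monge–Ampère operator `M_p(λ) = ∏_{i₁<⋯<i_p} (λ_{i₁} + ⋯ + λ_{i_p})`. -/
def pMA (n p : ℕ) (lam : Fin n → ℝ) : ℝ :=
  ∏ s ∈ (Finset.univ : Finset (Fin n)).powersetCard p, ∑ i ∈ s, lam i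

/-- Quadratic growth: `u(x) ≥ C⁻¹|x|² − C` for some `C > 0`. -/
def QuadraticGrowth {n : ℕ} (u : EuclideanSpace ℝ (Fin n) → ℝ) : Prop :=
  ∃ C : ℝ, 0 < C ∧ ∀ x, C⁻¹ * ‖x‖ ^ 2 - C ≤ u x

/-- `u` is a quadratic polynomial: `u(x) = ½ xᵀAx + b·x + c` with `A` symmetric. -/
def IsQuadraticPolynomial {n : ℕ} (u : EuclideanSpace ℝ (Fin n) → ℝ) : Prop :=
  ∃ (A : Matrix (Fin n) (Fin n) ℝ) (b : Fin n → ℝ) (c : ℝ), A.IsSymm ∧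
    ∀ x, u x = (1 / 2) * (∑ i, ∑ j, A i j * x i * x j) + (∑ i, b i * x i) + c

/-!
Where an eigenvalue `λᵢ` of `D²u` exceeds `2A`, Newton's inequality and `σ_{k+1} ≥ -A` give
`λᵢ ∂σ_k/∂λᵢ ≤ 2`. This controls the bad terms in Pogorelov-type maximum principle arguments, which
then bound first the gradient and afterwards the second derivatives of `u` on a sublevel set.
Quadratic growth lets one apply this to every rescaling `r⁻² u(r x)`, which has the same Hessians,
so `D²u` is bounded on all of `ℝⁿ`. The linearised operator `tr (T D²·)`, with `T` the Newton tensor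
of `D²u`, is then uniformly elliptic, and it is divergence free. By concavity of the equation each
pure second derivative `∂²u/∂e²` is a subsolution, so `sup ∂²u/∂e² - ∂²u/∂e²` is a nonnegative
supersolution with infimum `0`. Such functions are small on most of a large ball; hence finitely
many of them are small at a common point, and along suitable points `D²u` tends to a matrix `Q` with
`σ_k(Q) = 1` and `D²u ≤ Q` everywhere. Strict monotonicity of `σ_k` on the Gårding cone forces
`D²u = Q`.
-/

open scoped ContDiff InnerProductSpace Matrix Topology

/-! ### Newton's inequalities -/

lemma second_deriv_nonpos_of_isLocalMax {f f' : ℝ → ℝ} {a c : ℝ}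
    (hf : ∀ᶠ t in 𝓝 a, HasDerivAt f (f' t) t) (hf' : HasDerivAt f' c a) (hmax : IsLocalMax f a) :
    c ≤ 0 := by
  have hderiv : deriv f =ᶠ[𝓝 a] f' := hf.mono fun _ ht => ht.deriv
  have hderiv₂ : deriv (deriv f) a = c := by rw [hderiv.deriv_eq, hf'.deriv]
  by_contra! hc
  have hmin : IsLocalMin f a :=
    isLocalMin_of_deriv_deriv_pos (hderiv₂ ▸ hc) hmax.deriv_eq_zero
      hf.self_of_nhds.continuousAt
  have hconst : f =ᶠ[𝓝 a] fun _ => f a := by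
    filter_upwards [hmin, hmax] with t h₁ h₂ using le_antisymm h₂ h₁
  have hzero : deriv f =ᶠ[𝓝 a] fun _ => 0 := by simpa using hconst.deriv
  have : deriv (deriv f) a = 0 := by rw [hzero.deriv_eq, deriv_const]
  exact hc.ne (this.symm.trans hderiv₂)

section RealRooted

open Polynomial

lemma laguerre_inequality_of_splits {p : ℝ[X]} (hp : p.Splits) (x : ℝ) :
    p.eval x * p.derivative.derivative.eval x ≤ p.derivative.eval x ^ 2 := by
  have hmonic (m : Multiset ℝ) :
      (m.map (X - C ·)).prod.eval x * (m.map (X - C ·)).prod.derivative.derivative.eval x ≤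
        (m.map (X - C ·)).prod.derivative.eval x ^ 2 := by
    induction m using Multiset.induction with
    | empty => simp
    | cons a m ih =>
      simp only [Multiset.map_cons, Multiset.prod_cons]
      set g := (m.map (X - C ·)).prod
      simp only [derivative_mul, derivative_add, derivative_sub, derivative_X, derivative_C,
        eval_mul, eval_add, eval_sub, eval_X, eval_C, sub_zero, one_mul]
      nlinarith [mul_nonneg (sq_nonneg (x - a)) (sub_nonneg.2 ih), sq_nonneg (g.eval x)]
  obtain ⟨m, hm⟩ := splits_iff_exists_multiset.1 hp
  rw [hm]
  simp only [derivative_mul, derivative_C, zero_mul, zero_add, eval_mul, eval_C]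
  nlinarith [mul_nonneg (sq_nonneg p.leadingCoeff) (sub_nonneg.2 (hmonic m))]

lemma splits_derivative {p : ℝ[X]} (hp : p.Splits) : p.derivative.Splits := by
  rw [splits_iff_card_roots] at hp ⊢
  have hroots := card_roots_le_derivative p
  have hcard := p.derivative.card_roots'
  have hdeg := natDegree_derivative_le p
  omega

lemma splits_iterate_derivative {p : ℝ[X]} (hp : p.Splits) (k : ℕ) :
    (derivative^[k] p).Splits := by
  induction k with
  | zero => exact hp
  | succ k ih => simpa only [Function.iterate_succ_apply'] using splits_derivative ih

-- The `k`-th derivative at `0` reads off the coefficients, with factorial weights in our favour.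
lemma coeff_mul_coeff_le_sq_of_splits {p : ℝ[X]} (hp : p.Splits) (k : ℕ) :
    p.coeff k * p.coeff (k + 2) ≤ p.coeff (k + 1) ^ 2 := by
  have hlag := laguerre_inequality_of_splits (splits_iterate_derivative hp k) 0
  rw [← Function.iterate_succ_apply' derivative k,
    ← Function.iterate_succ_apply' derivative (k + 1)] at hlag
  simp only [← coeff_zero_eq_eval_zero, coeff_iterate_derivative, zero_add,
    Nat.descFactorial_self, nsmul_eq_mul, Nat.factorial_succ, Nat.succ_eq_add_one] at hlag
  push_cast at hlag
  have hweighted : ((k : ℝ) + 2) * (p.coeff k * p.coeff (k + 2)) ≤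
      ((k : ℝ) + 1) * p.coeff (k + 1) ^ 2 := by
    refine le_of_mul_le_mul_left ?_ (by positivity : (0 : ℝ) < (k.factorial : ℝ) ^ 2 * (k + 1))
    rw [show k + 1 + 1 = k + 2 from rfl] at hlag
    linarith
  have hk : (0 : ℝ) ≤ k := k.cast_nonneg
  by_contra! hlt
  nlinarith [sq_nonneg (p.coeff (k + 1)), mul_nonneg hk (sub_nonneg.2 hlt.le)]

end RealRooted

/-! ### Elementary symmetric polynomials -/

section ElementarySymmetric

variable {ι : Type*}

/-- The `k`-th elementary symmetric polynomial in the variables `l i`, `i ∈ s`; with the variables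
allowed to run over subsets, its partial derivatives are again of this form. -/
def esymmOn (s : Finset ι) (k : ℕ) (l : ι → ℝ) : ℝ :=
  ∑ t ∈ s.powersetCard k, ∏ i ∈ t, l i

open Polynomial in
lemma coeff_prod_one_add_C_mul_X (s : Finset ι) (k : ℕ) (l : ι → ℝ) :
    (∏ i ∈ s, (1 + C (l i) * X) : ℝ[X]).coeff k = esymmOn s k l := by
  classical
  simp only [Finset.prod_one_add, finsetSum_coeff, Finset.prod_mul_distrib, Finset.prod_const,
    ← map_prod, coeff_C_mul, coeff_X_pow, mul_ite, mul_one, mul_zero]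
  rw [← Finset.sum_filter, esymmOn]
  congr 1
  ext t
  simp only [Finset.mem_filter, Finset.mem_powerset, Finset.mem_powersetCard, eq_comm]

open Polynomial in
lemma esymmOn_mul_esymmOn_le_sq (s : Finset ι) (k : ℕ) (l : ι → ℝ) :
    esymmOn s k l * esymmOn s (k + 2) l ≤ esymmOn s (k + 1) l ^ 2 := by
  simp only [← coeff_prod_one_add_C_mul_X]
  refine coeff_mul_coeff_le_sq_of_splits (Splits.prod fun i _ => ?_) k
  exact Splits.of_natDegree_le_one (by compute_degree)

@[simp] lemma esymmOn_zero (s : Finset ι) (l : ι → ℝ) : esymmOn s 0 l = 1 := by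
  simp [esymmOn]

@[simp] lemma esymmOn_one (s : Finset ι) (l : ι → ℝ) : esymmOn s 1 l = ∑ i ∈ s, l i := by
  simp [esymmOn, Finset.powersetCard_one]

lemma esymmOn_eq_zero {s : Finset ι} {k : ℕ} (hk : s.card < k) (l : ι → ℝ) :
    esymmOn s k l = 0 := by
  rw [esymmOn, Finset.powersetCard_eq_empty.2 hk, Finset.sum_empty]

lemma esymmOn_smul (s : Finset ι) (k : ℕ) (c : ℝ) (l : ι → ℝ) :
    esymmOn s k (c • l) = c ^ k * esymmOn s k l := by
  rw [esymmOn, esymmOn, Finset.mul_sum]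
  refine Finset.sum_congr rfl fun t ht => ?_
  simp only [Pi.smul_apply, smul_eq_mul, Finset.prod_mul_distrib, Finset.prod_const,
    (Finset.mem_powersetCard.1 ht).2]

variable [DecidableEq ι]

lemma sum_powersetCard_succ_sum_erase {M : Type*} [AddCommMonoid M] (s : Finset ι) (k : ℕ)
    (F : ι → Finset ι → M) :
    ∑ t ∈ s.powersetCard (k + 1), ∑ i ∈ t, F i (t.erase i) =
      ∑ i ∈ s, ∑ t ∈ (s.erase i).powersetCard k, F i t := by
  rw [Finset.sum_sigma', Finset.sum_sigma']
  refine Finset.sum_bij' (fun p _ => ⟨p.2, p.1.erase p.2⟩) (fun p _ => ⟨insert p.1 p.2, p.1⟩)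
    ?_ ?_ ?_ ?_ fun _ _ => rfl
  · rintro ⟨t, i⟩ h
    simp only [Finset.mem_sigma, Finset.mem_powersetCard] at h ⊢
    exact ⟨h.1.1 h.2, Finset.erase_subset_erase i h.1.1,
      by rw [Finset.card_erase_of_mem h.2]; omega⟩
  · rintro ⟨i, t⟩ h
    simp only [Finset.mem_sigma, Finset.mem_powersetCard, Finset.subset_erase] at h ⊢
    exact ⟨⟨Finset.insert_subset h.1 h.2.1.1, by rw [Finset.card_insert_of_notMem h.2.1.2]; omega⟩,
      Finset.mem_insert_self i t⟩
  · rintro ⟨t, i⟩ h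
    simp only [Finset.mem_sigma] at h
    simp only [Finset.insert_erase h.2]
  · rintro ⟨i, t⟩ h
    simp only [Finset.mem_sigma, Finset.mem_powersetCard, Finset.subset_erase] at h
    simp only [Finset.erase_insert h.2.1.2]

lemma esymmOn_insert_succ {a : ι} {s : Finset ι} (ha : a ∉ s) (k : ℕ) (l : ι → ℝ) :
    esymmOn (insert a s) (k + 1) l = esymmOn s (k + 1) l + l a * esymmOn s k l := by
  have hmem {j : ℕ} {t : Finset ι} (ht : t ∈ s.powersetCard j) : a ∉ t :=
    fun h => ha ((Finset.mem_powersetCard.1 ht).1 h)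
  rw [esymmOn, Finset.powersetCard_succ_insert ha, Finset.sum_union, Finset.sum_image, esymmOn,
    esymmOn, Finset.mul_sum]
  · exact congrArg _ (Finset.sum_congr rfl fun t ht => Finset.prod_insert (hmem ht))
  · intro t ht t' ht' h
    rw [← Finset.erase_insert (hmem ht), h, Finset.erase_insert (hmem ht')]
  · refine Finset.disjoint_left.2 fun t ht h => ?_
    obtain ⟨t', _, rfl⟩ := Finset.mem_image.1 h
    exact hmem ht (Finset.mem_insert_self a t')

lemma esymmOn_succ_eq_erase {i : ι} {s : Finset ι} (hi : i ∈ s) (k : ℕ) (l : ι → ℝ) :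
    esymmOn s (k + 1) l = esymmOn (s.erase i) (k + 1) l + l i * esymmOn (s.erase i) k l := by
  conv_lhs => rw [← Finset.insert_erase hi]
  exact esymmOn_insert_succ (Finset.notMem_erase i s) k l

lemma sum_mul_esymmOn_erase (s : Finset ι) (k : ℕ) (l : ι → ℝ) :
    ∑ i ∈ s, l i * esymmOn (s.erase i) k l = (k + 1) * esymmOn s (k + 1) l := by
  simp only [esymmOn, Finset.mul_sum]
  rw [← sum_powersetCard_succ_sum_erase s k fun i t => l i * ∏ j ∈ t, l j]
  refine Finset.sum_congr rfl fun t ht => ?_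
  rw [Finset.sum_congr rfl fun i hi => Finset.mul_prod_erase t l hi, Finset.sum_const,
    (Finset.mem_powersetCard.1 ht).2, nsmul_eq_mul, Nat.cast_succ]

lemma sum_esymmOn_erase (s : Finset ι) (k : ℕ) (l : ι → ℝ) :
    ∑ i ∈ s, esymmOn (s.erase i) k l = ((s.card : ℝ) - k) * esymmOn s k l := by
  cases k with
  | zero => simp
  | succ k =>
    have herase (i : ι) (hi : i ∈ s) : esymmOn (s.erase i) (k + 1) l =
        esymmOn s (k + 1) l - l i * esymmOn (s.erase i) k l := by
      rw [esymmOn_succ_eq_erase hi, add_sub_cancel_right]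
    rw [Finset.sum_congr rfl herase, Finset.sum_sub_distrib, sum_mul_esymmOn_erase,
      Finset.sum_const, nsmul_eq_mul]
    push_cast
    ring

lemma hasDerivAt_esymmOn_line (s : Finset ι) (k : ℕ) (l ξ : ι → ℝ) (t : ℝ) :
    HasDerivAt (fun t : ℝ => esymmOn s (k + 1) (l + t • ξ))
      (∑ i ∈ s, ξ i * esymmOn (s.erase i) k (l + t • ξ)) t := by
  have hcoord (i : ι) : HasDerivAt (fun t : ℝ => (l + t • ξ) i) (ξ i) t := by
    simpa using ((hasDerivAt_id t).mul_const (ξ i)).const_add (l i)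
  refine (HasDerivAt.fun_sum fun u _ =>
    HasDerivAt.fun_finsetProd fun i _ => hcoord i).congr_deriv ?_
  simp only [esymmOn, Finset.mul_sum, smul_eq_mul]
  rw [← sum_powersetCard_succ_sum_erase s k fun i u => ξ i * ∏ j ∈ u, (l + t • ξ) j]
  exact Finset.sum_congr rfl fun _ _ => Finset.sum_congr rfl fun _ _ => mul_comm _ _

end ElementarySymmetric

/-! ### Gårding cones -/

section GardingCone

variable {ι : Type*}

/-- Membership of `l` in the Gårding cone `Γ_k` of the variables indexed by `s`. The index `j = 0`
is included, harmlessly since `σ₀ = 1`, so that inductions on `k` start at a trivial case. -/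
def GardingPos (s : Finset ι) (k : ℕ) (l : ι → ℝ) : Prop :=
  ∀ j ≤ k, 0 < esymmOn s j l

/-- The quotient `σ_{k+1} / σ_k`, meaningful where `σ_k ≠ 0`. -/
def esymmRatio (s : Finset ι) (k : ℕ) (l : ι → ℝ) : ℝ :=
  esymmOn s (k + 1) l / esymmOn s k l

variable {s : Finset ι} {k m : ℕ} {l x y : ι → ℝ} {i : ι} {A : ℝ}

lemma GardingPos.mono {j : ℕ} (h : GardingPos s k l) (hj : j ≤ k) : GardingPos s j l :=
  fun i hi => h i (hi.trans hj)

lemma gardingPos_zero (s : Finset ι) (l : ι → ℝ) : GardingPos s 0 l := by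
  intro j hj
  rw [Nat.le_zero.1 hj, esymmOn_zero]
  exact one_pos

lemma GardingPos.succ (h : GardingPos s k l) (hk : 0 < esymmOn s (k + 1) l) :
    GardingPos s (k + 1) l := by
  intro j hj
  rcases hj.eq_or_lt with rfl | hlt
  · exact hk
  · exact h j (Nat.lt_succ_iff.1 hlt)

lemma GardingPos.erase [DecidableEq ι] (h : GardingPos s (k + 1) l) (hi : i ∈ s) :
    GardingPos (s.erase i) k l := by
  induction k with
  | zero => exact gardingPos_zero _ _
  | succ k ih =>
    have ih' := ih (h.mono (by omega))
    refine ih'.succ ?_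
    by_contra! hneg
    have hpos₂ := h (k + 2) le_rfl
    have hpos₁ := h (k + 1) (by omega)
    rw [esymmOn_succ_eq_erase hi] at hpos₂ hpos₁
    have hpos₀ := ih' k le_rfl
    have hnewton := esymmOn_mul_esymmOn_le_sq (s.erase i) k l
    set a := esymmOn (s.erase i) k l
    set b := esymmOn (s.erase i) (k + 1) l
    have hlt : a * -(l i * b) < a * esymmOn (s.erase i) (k + 2) l :=
      mul_lt_mul_of_pos_left (neg_lt_iff_pos_add.2 hpos₂) hpos₀
    nlinarith [mul_nonneg (neg_nonneg.2 hneg) hpos₁.le]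

lemma GardingPos.esymmOn_erase_pos [DecidableEq ι] (h : GardingPos s (k + 1) l) (hi : i ∈ s) :
    0 < esymmOn (s.erase i) k l :=
  h.erase hi k le_rfl

lemma GardingPos.esymmOn_succ_le (h : GardingPos s k l) :
    esymmOn s (k + 1) l ≤ esymmOn s 1 l * esymmOn s k l := by
  induction k with
  | zero => simp
  | succ k ih =>
    have hk := h k (by omega)
    have hk₁ := h (k + 1) le_rfl
    refine le_of_mul_le_mul_left ?_ hk
    calc esymmOn s k l * esymmOn s (k + 2) l
        ≤ esymmOn s (k + 1) l ^ 2 := esymmOn_mul_esymmOn_le_sq s k l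
      _ = esymmOn s (k + 1) l * esymmOn s (k + 1) l := sq _
      _ ≤ (esymmOn s 1 l * esymmOn s k l) * esymmOn s (k + 1) l := by
          gcongr; exact ih (h.mono (by omega))
      _ = esymmOn s k l * (esymmOn s 1 l * esymmOn s (k + 1) l) := by ring

lemma GardingPos.esymmOn_one_mul_pow_le (h : GardingPos s (m + 2) l) :
    esymmOn s 1 l * esymmOn s (m + 2) l ^ m ≤ esymmOn s (m + 1) l ^ (m + 1) := by
  induction m with
  | zero => simp
  | succ m ih =>
    have h₁ := h 1 (by omega)
    have hm₁ := h (m + 1) (by omega)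
    have hm₂ := h (m + 2) (by omega)
    have hm₃ := h (m + 3) (by omega)
    have hnewton := esymmOn_mul_esymmOn_le_sq s (m + 1) l
    refine le_of_mul_le_mul_left ?_ (pow_pos hm₁ (m + 1))
    calc esymmOn s (m + 1) l ^ (m + 1) * (esymmOn s 1 l * esymmOn s (m + 3) l ^ (m + 1))
        = esymmOn s 1 l * (esymmOn s (m + 1) l * esymmOn s (m + 3) l) ^ (m + 1) := by
          rw [mul_pow]; ring
      _ ≤ esymmOn s 1 l * (esymmOn s (m + 2) l ^ 2) ^ (m + 1) := by gcongr
      _ = (esymmOn s 1 l * esymmOn s (m + 2) l ^ m) * esymmOn s (m + 2) l ^ (m + 2) := by ring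
      _ ≤ esymmOn s (m + 1) l ^ (m + 1) * esymmOn s (m + 2) l ^ (m + 2) := by
          gcongr; exact ih (h.mono (by omega))

/-! ### Quasiconcavity of the elementary symmetric polynomials -/

lemma GardingPos.add_esymmRatio_erase [DecidableEq ι] (h : GardingPos s (k + 1) l) (hi : i ∈ s) :
    l i + esymmRatio (s.erase i) k l = esymmOn s (k + 1) l / esymmOn (s.erase i) k l := by
  have hpos := (h.esymmOn_erase_pos hi).ne'
  rw [esymmRatio, esymmOn_succ_eq_erase hi]
  field_simp
  ring

lemma GardingPos.mul_esymmRatio_succ [DecidableEq ι] (h : GardingPos s (k + 1) l) :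
    ((k : ℝ) + 2) * esymmRatio s (k + 1) l =
      ∑ i ∈ s, (l i - l i ^ 2 / (l i + esymmRatio (s.erase i) k l)) := by
  have hk := (h (k + 1) le_rfl).ne'
  have heuler := sum_mul_esymmOn_erase s (k + 1) l
  push_cast at heuler
  rw [esymmRatio, ← mul_div_assoc, show (k : ℝ) + 2 = k + 1 + 1 by ring, ← heuler, Finset.sum_div]
  refine Finset.sum_congr rfl fun i hi => ?_
  have hpos := (h.esymmOn_erase_pos hi).ne'
  rw [h.add_esymmRatio_erase hi, esymmOn_succ_eq_erase hi] at *
  field_simp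
  ring

lemma add_sq_div_add_le_sq_div_add_sq_div (a b : ℝ) {c d : ℝ} (hc : 0 < c) (hd : 0 < d) :
    (a + b) ^ 2 / (c + d) ≤ a ^ 2 / c + b ^ 2 / d := by
  rw [div_add_div _ _ hc.ne' hd.ne', div_le_div_iff₀ (by positivity) (by positivity)]
  nlinarith [sq_nonneg (a * d - b * c)]

-- The summands `a - a² / (a + q)` of the expansion of the next quotient are jointly superadditive
-- in `a` and `q` and increasing in `q`, so superadditivity passes from one quotient to the next.
lemma GardingPos.add_and_esymmRatio_add_le (hx : GardingPos s k x) (hy : GardingPos s k y) :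
    GardingPos s k (x + y) ∧ esymmRatio s k x + esymmRatio s k y ≤ esymmRatio s k (x + y) := by
  classical
  induction k generalizing s with
  | zero => exact ⟨gardingPos_zero _ _, by simp [esymmRatio, Finset.sum_add_distrib]⟩
  | succ k ih =>
    have hxy : GardingPos s (k + 1) (x + y) := by
      obtain ⟨hcone, hratio⟩ := ih (hx.mono k.le_succ) (hy.mono k.le_succ)
      have hrx : 0 < esymmRatio s k x := div_pos (hx (k + 1) le_rfl) (hx k k.le_succ)
      have hry : 0 < esymmRatio s k y := div_pos (hy (k + 1) le_rfl) (hy k k.le_succ)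
      exact hcone.succ ((div_pos_iff_of_pos_right (hcone k le_rfl)).1
        ((add_pos hrx hry).trans_le hratio))
    refine ⟨hxy, le_of_mul_le_mul_left ?_ (by positivity : (0 : ℝ) < k + 2)⟩
    rw [mul_add, hx.mul_esymmRatio_succ, hy.mul_esymmRatio_succ, hxy.mul_esymmRatio_succ,
      ← Finset.sum_add_distrib]
    refine Finset.sum_le_sum fun i hi => ?_
    have hpos {z : ι → ℝ} (hz : GardingPos s (k + 1) z) :
        0 < z i + esymmRatio (s.erase i) k z := by
      rw [hz.add_esymmRatio_erase hi]
      exact div_pos (hz (k + 1) le_rfl) (hz.esymmOn_erase_pos hi)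
    have hX := hpos hx
    have hY := hpos hy
    obtain ⟨-, hratio⟩ := ih (hx.erase hi) (hy.erase hi)
    have hXY : (x i + esymmRatio (s.erase i) k x) + (y i + esymmRatio (s.erase i) k y) ≤
        (x + y) i + esymmRatio (s.erase i) k (x + y) := by
      rw [Pi.add_apply]; linarith
    have hmono := div_le_div_of_nonneg_left (sq_nonneg ((x + y) i)) (add_pos hX hY) hXY
    have hjoint := add_sq_div_add_le_sq_div_add_sq_div (x i) (y i) hX hY
    rw [Pi.add_apply] at *
    linarith

lemma GardingPos.mul_le_sq_esymmOn_add (hx : GardingPos s k x) (hy : GardingPos s k y) :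
    4 ^ k * (esymmOn s k x * esymmOn s k y) ≤ esymmOn s k (x + y) ^ 2 := by
  classical
  induction k with
  | zero => simp
  | succ k ih =>
    have hxk := hx.mono k.le_succ
    have hyk := hy.mono k.le_succ
    obtain ⟨hxy, hratio⟩ := hxk.add_and_esymmRatio_add_le hyk
    have hfactor {z : ι → ℝ} (hz : GardingPos s k z) :
        esymmOn s (k + 1) z = esymmRatio s k z * esymmOn s k z :=
      (div_mul_cancel₀ _ (hz k le_rfl).ne').symm
    have hrx : 0 < esymmRatio s k x := div_pos (hx (k + 1) le_rfl) (hxk k le_rfl)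
    have hry : 0 < esymmRatio s k y := div_pos (hy (k + 1) le_rfl) (hyk k le_rfl)
    have hamgm : 4 * (esymmRatio s k x * esymmRatio s k y) ≤ esymmRatio s k (x + y) ^ 2 := by
      nlinarith [sq_nonneg (esymmRatio s k x - esymmRatio s k y)]
    have hposx := hxk k le_rfl
    have hposy := hyk k le_rfl
    rw [hfactor hxk, hfactor hyk, hfactor hxy]
    calc (4 : ℝ) ^ (k + 1) *
          (esymmRatio s k x * esymmOn s k x * (esymmRatio s k y * esymmOn s k y))
        = 4 * (esymmRatio s k x * esymmRatio s k y) *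
          (4 ^ k * (esymmOn s k x * esymmOn s k y)) := by ring
      _ ≤ esymmRatio s k (x + y) ^ 2 * esymmOn s k (x + y) ^ 2 :=
          mul_le_mul hamgm (ih hxk hyk) (by positivity) (by positivity)
      _ = (esymmRatio s k (x + y) * esymmOn s k (x + y)) ^ 2 := by ring

lemma GardingPos.eventually_line (h : GardingPos s k l) (ξ : ι → ℝ) :
    ∀ᶠ t in 𝓝 (0 : ℝ), GardingPos s k (l + t • ξ) := by
  classical
  have heach : ∀ j ∈ Finset.range (k + 1), ∀ᶠ t in 𝓝 (0 : ℝ), 0 < esymmOn s j (l + t • ξ) := by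
    intro j hj
    cases j with
    | zero => simp
    | succ j =>
      refine continuousAt_const.eventually_lt (hasDerivAt_esymmOn_line s j l ξ 0).continuousAt ?_
      simpa using h (j + 1) (Finset.mem_range_succ_iff.1 hj)
  rw [← Filter.eventually_all_finset] at heach
  filter_upwards [heach] with t ht j hj using ht j (Finset.mem_range_succ_iff.2 hj)

lemma GardingPos.isLocalMax_mul_reflect (h : GardingPos s k l) (ξ : ι → ℝ) :
    IsLocalMax (fun t : ℝ => esymmOn s k (l + t • ξ) * esymmOn s k (l + (-t) • ξ)) 0 := by
  have hneg : Filter.Tendsto (fun t : ℝ => -t) (𝓝 0) (𝓝 0) := by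
    simpa using (continuous_neg (G := ℝ)).tendsto 0
  filter_upwards [h.eventually_line ξ, hneg.eventually (h.eventually_line ξ)] with t ht ht'
  have hmid := ht.mul_le_sq_esymmOn_add ht'
  rw [show l + t • ξ + (l + (-t) • ξ) = (2 : ℝ) • l by module, esymmOn_smul, mul_pow, ← pow_mul,
    mul_comm k 2, pow_mul] at hmid
  norm_num at hmid
  simpa [sq] using hmid

lemma GardingPos.sum_sum_mul_esymmOn_erase_erase_nonpos [DecidableEq ι]
    (h : GardingPos s (k + 2) l) {ξ : ι → ℝ}
    (htangent : ∑ i ∈ s, ξ i * esymmOn (s.erase i) (k + 1) l = 0) :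
    ∑ i ∈ s, ∑ j ∈ s.erase i, ξ i * ξ j * esymmOn ((s.erase i).erase j) k l ≤ 0 := by
  set f : ℝ → ℝ := fun t => esymmOn s (k + 2) (l + t • ξ) with hf
  set f' : ℝ → ℝ := fun t => ∑ i ∈ s, ξ i * esymmOn (s.erase i) (k + 1) (l + t • ξ) with hf'
  set c := ∑ i ∈ s, ∑ j ∈ s.erase i, ξ i * ξ j * esymmOn ((s.erase i).erase j) k l with hc
  have hderiv (t : ℝ) : HasDerivAt f (f' t) t := hasDerivAt_esymmOn_line s (k + 1) l ξ t
  have hderiv₂ : HasDerivAt f' c 0 := by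
    refine (HasDerivAt.fun_sum fun i _ =>
      (hasDerivAt_esymmOn_line (s.erase i) k l ξ 0).const_mul (ξ i)).congr_deriv ?_
    simp only [hc, zero_smul, add_zero, Finset.mul_sum, mul_assoc]
  have hreflect (t : ℝ) : HasDerivAt (fun t => f (-t)) (-f' (-t)) t := by
    simpa [Function.comp_def] using (hderiv (-t)).scomp t (hasDerivAt_neg t)
  have hreflect₂ : HasDerivAt (fun t => -f' (-t)) c 0 := by
    have hneg : HasDerivAt f' c (-0) := by simpa using hderiv₂
    simpa [Function.comp_def] using (hneg.scomp 0 (hasDerivAt_neg (0 : ℝ))).fun_neg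
  have hnonpos := second_deriv_nonpos_of_isLocalMax
    (Filter.Eventually.of_forall fun t => (hderiv t).mul (hreflect t))
    ((hderiv₂.mul (hreflect 0)).add ((hderiv 0).mul hreflect₂)) (h.isLocalMax_mul_reflect ξ)
  have hf'0 : f' 0 = 0 := by simpa [hf'] using htangent
  have hf0 : 0 < f 0 := by simpa [hf] using h (k + 2) le_rfl
  simp only [neg_zero, hf'0] at hnonpos
  by_contra! hpos
  nlinarith [mul_pos hpos hf0]

/-! ### Bounds on the level set `σ_{k+1} = 1` -/

lemma mul_esymmOn_erase_le_two [DecidableEq ι] (hi : i ∈ s) (hA : 0 ≤ A)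
    (hone : esymmOn s (k + 1) l = 1) (hlow : -A ≤ esymmOn s (k + 2) l) (hbig : 2 * A ≤ l i) :
    l i * esymmOn (s.erase i) k l ≤ 2 := by
  have h₁ := esymmOn_succ_eq_erase hi k l
  have h₂ := esymmOn_succ_eq_erase hi (k + 1) l
  have hnewton := esymmOn_mul_esymmOn_le_sq (s.erase i) k l
  rw [hone] at h₁
  rw [h₂] at hlow
  change -A ≤ esymmOn (s.erase i) (k + 2) l + _ at hlow
  set g := esymmOn (s.erase i) k l
  set b := esymmOn (s.erase i) (k + 1) l
  set c := esymmOn (s.erase i) (k + 2) l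
  by_contra! hlt
  have hlg : l i * g = 1 - b := by linarith
  have hl : 0 < l i := by
    refine lt_of_le_of_ne (by linarith) fun h0 => ?_
    rw [← h0] at hlt
    linarith
  have hlower : (1 - b) * (-A - l i * b) ≤ b ^ 2 * l i := by
    calc (1 - b) * (-A - l i * b) ≤ (1 - b) * c :=
          mul_le_mul_of_nonneg_left (by linarith) (by linarith)
      _ = g * c * l i := by rw [← hlg]; ring
      _ ≤ b ^ 2 * l i := mul_le_mul_of_nonneg_right hnewton hl.le
  nlinarith [mul_pos (by linarith : 0 < -b - 1) (by linarith : 0 < l i - A)]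

lemma GardingPos.le_esymmOn_one (h : GardingPos s 2 l) (hi : i ∈ s) : l i ≤ esymmOn s 1 l := by
  classical
  have hsplit := esymmOn_succ_eq_erase hi 0 l
  have hpos := h.erase hi 1 le_rfl
  simp only [zero_add, esymmOn_zero, mul_one] at hsplit
  linarith

lemma GardingPos.esymmOn_one_le_pow (h : GardingPos s (m + 2) l) (hone : esymmOn s (m + 2) l = 1) :
    esymmOn s 1 l ≤ esymmOn s (m + 1) l ^ (m + 1) := by
  simpa [hone] using h.esymmOn_one_mul_pow_le

lemma GardingPos.le_sum_esymmOn_erase_pow [DecidableEq ι] (h : GardingPos s (m + 2) l)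
    (hone : esymmOn s (m + 2) l = 1) (hi : i ∈ s) :
    l i ≤ (∑ j ∈ s, esymmOn (s.erase j) (m + 1) l) ^ (m + 1) := by
  have hpos := h (m + 1) (by omega)
  have htrace : esymmOn s (m + 1) l ≤ ∑ j ∈ s, esymmOn (s.erase j) (m + 1) l := by
    have hcard : ((m + 2 : ℕ) : ℝ) ≤ s.card := by
      by_contra! hlt
      rw [esymmOn_eq_zero (by exact_mod_cast hlt)] at hone
      exact zero_ne_one hone
    rw [sum_esymmOn_erase]
    push_cast at hcard ⊢
    nlinarith
  calc l i ≤ esymmOn s 1 l := (h.mono (by omega)).le_esymmOn_one hi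
    _ ≤ esymmOn s (m + 1) l ^ (m + 1) := h.esymmOn_one_le_pow hone
    _ ≤ _ := pow_le_pow_left₀ hpos.le htrace (m + 1)

lemma sum_sq_mul_esymmOn_erase [DecidableEq ι] (s : Finset ι) (k : ℕ) (l : ι → ℝ) :
    ∑ j ∈ s, l j ^ 2 * esymmOn (s.erase j) k l =
      esymmOn s 1 l * esymmOn s (k + 1) l - (k + 2) * esymmOn s (k + 2) l := by
  have hterm (j : ι) (hj : j ∈ s) : l j ^ 2 * esymmOn (s.erase j) k l =
      l j * esymmOn s (k + 1) l - l j * esymmOn (s.erase j) (k + 1) l := by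
    rw [esymmOn_succ_eq_erase hj k l]; ring
  rw [Finset.sum_congr rfl hterm, Finset.sum_sub_distrib, ← Finset.sum_mul, sum_mul_esymmOn_erase,
    esymmOn_one]
  push_cast
  ring

lemma sum_sq_mul_esymmOn_erase_le [DecidableEq ι]
    (hone : esymmOn s (k + 1) l = 1) (hlow : -A ≤ esymmOn s (k + 2) l) :
    ∑ j ∈ s, l j ^ 2 * esymmOn (s.erase j) k l ≤ esymmOn s 1 l + (k + 2) * A := by
  rw [sum_sq_mul_esymmOn_erase, hone]
  nlinarith [mul_le_mul_of_nonneg_left hlow (by positivity : (0 : ℝ) ≤ k + 2)]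

lemma GardingPos.one_le_esymmOn_erase [DecidableEq ι] (h : GardingPos s (m + 2) l)
    (hone : esymmOn s (m + 2) l = 1) (htrace : 1 ≤ esymmOn s 1 l) (hi : i ∈ s) (hneg : l i ≤ 0) :
    1 ≤ esymmOn (s.erase i) (m + 1) l := by
  have hpos := h.erase hi m (by omega)
  have hle := h.esymmOn_one_le_pow hone
  have hsplit := esymmOn_succ_eq_erase hi m l
  have hm : 1 ≤ esymmOn s (m + 1) l := by
    by_contra! hlt
    have := pow_lt_one₀ (h (m + 1) (by omega)).le hlt (show m + 1 ≠ 0 by omega)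
    linarith
  nlinarith

lemma GardingPos.neg_div_four_le {i₁ : ι} (hA : 0 ≤ A) (h : GardingPos s (m + 2) l)
    (hone : esymmOn s (m + 2) l = 1) (hlow : -A ≤ esymmOn s (m + 3) l) (hi : i ∈ s) (hi₁ : i₁ ∈ s)
    (hmax : ∀ j ∈ s, l j ≤ l i₁) (hbig : 16 * (s.card + (m + 3) * A) ≤ l i₁) :
    -(l i₁ / 4) ≤ l i := by
  classical
  by_contra! hlt
  have hcard : (1 : ℝ) ≤ s.card := by exact_mod_cast Finset.card_pos.2 ⟨i, hi⟩
  have hmA : 0 ≤ (m + 3) * A := by positivity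
  have htrace : 1 ≤ esymmOn s 1 l := by
    linarith [(h.mono (by omega : 2 ≤ m + 2)).le_esymmOn_one hi₁]
  have htrace' : esymmOn s 1 l ≤ s.card * l i₁ := by
    simpa using Finset.sum_le_card_nsmul s l (l i₁) hmax
  have hsq : l i ^ 2 ≤ s.card * l i₁ + (m + 3) * A := by
    calc l i ^ 2 ≤ l i ^ 2 * esymmOn (s.erase i) (m + 1) l :=
          le_mul_of_one_le_right (sq_nonneg _)
            (h.one_le_esymmOn_erase hone htrace hi (by linarith))
      _ ≤ ∑ j ∈ s, l j ^ 2 * esymmOn (s.erase j) (m + 1) l :=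
          Finset.single_le_sum (f := fun j => l j ^ 2 * esymmOn (s.erase j) (m + 1) l)
            (fun j hj => mul_nonneg (sq_nonneg _) (h.esymmOn_erase_pos hj).le) hi
      _ ≤ esymmOn s 1 l + ((m + 1 : ℕ) + 2) * A := sum_sq_mul_esymmOn_erase_le hone hlow
      _ ≤ s.card * l i₁ + (m + 3) * A := by push_cast; linarith
  nlinarith

lemma GardingPos.le_esymmOn_erase [DecidableEq ι] (h : GardingPos s (k + 1) l)
    (hone : esymmOn s (k + 1) l = 1) {M : ℝ} (hM : 0 < M) (hl : ∀ j ∈ s, l j ≤ M) (hi : i ∈ s) :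
    1 / ((s.card + 1) * M) ≤ esymmOn (s.erase i) k l := by
  have hpos := h.esymmOn_erase_pos hi
  have htrace : esymmOn (s.erase i) 1 l ≤ s.card * M := by
    calc esymmOn (s.erase i) 1 l ≤ (s.erase i).card * M := by
          simpa using Finset.sum_le_card_nsmul (s.erase i) l M
            fun j hj => hl j (Finset.mem_of_mem_erase hj)
      _ ≤ s.card * M := by gcongr; exact Finset.erase_subset i s
  rw [div_le_iff₀ (by positivity)]
  calc 1 = esymmOn (s.erase i) (k + 1) l + l i * esymmOn (s.erase i) k l := by
        rw [← esymmOn_succ_eq_erase hi, hone]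
    _ ≤ s.card * M * esymmOn (s.erase i) k l + M * esymmOn (s.erase i) k l := by
        gcongr
        · exact (h.erase hi).esymmOn_succ_le.trans (by gcongr)
        · exact hl i hi
    _ = esymmOn (s.erase i) k l * ((s.card + 1) * M) := by ring

end GardingCone

/-! ### Newton tensors -/

section NewtonTensor

open Matrix

variable {ι : Type*} [DecidableEq ι] [Fintype ι]

/-- The Newton tensors `T_k(H)` of a matrix, given by `T_{k+1} = σ_{k+1} I - T_k H` where
`σ_{k+1} = tr (T_k H) / (k + 1)`. They are the derivatives of the functions `σ_{k+1}`. -/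
def newtonTensor : ℕ → Matrix ι ι ℝ → Matrix ι ι ℝ
  | 0, _ => 1
  | k + 1, H => ((newtonTensor k H * H).trace / (k + 1)) • 1 - newtonTensor k H * H

/-- The `k`-th elementary symmetric function of the eigenvalues of a matrix, computed from the
entries through the Newton tensors; see `matrixEsymm_eq_esymmOn_eigenvalues`. -/
def matrixEsymm : ℕ → Matrix ι ι ℝ → ℝ
  | 0, _ => 1
  | k + 1, H => (newtonTensor k H * H).trace / (k + 1)

/-- The directional derivative of `newtonTensor k` at `H` in the direction `X`. -/
def newtonTensorDeriv : ℕ → Matrix ι ι ℝ → Matrix ι ι ℝ → Matrix ι ι ℝ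
  | 0, _, _ => 0
  | k + 1, H, X =>
    ((newtonTensorDeriv k H X * H + newtonTensor k H * X).trace / (k + 1)) • 1 -
      (newtonTensorDeriv k H X * H + newtonTensor k H * X)

/-- The directional derivative of `matrixEsymm k` at `H` in the direction `X`. -/
def matrixEsymmDeriv : ℕ → Matrix ι ι ℝ → Matrix ι ι ℝ → ℝ
  | 0, _, _ => 0
  | k + 1, H, X => (newtonTensorDeriv k H X * H + newtonTensor k H * X).trace / (k + 1)

lemma newtonTensor_zero (H : Matrix ι ι ℝ) : newtonTensor 0 H = 1 := rfl

lemma newtonTensor_succ (k : ℕ) (H : Matrix ι ι ℝ) :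
    newtonTensor (k + 1) H = matrixEsymm (k + 1) H • 1 - newtonTensor k H * H := rfl

lemma matrixEsymm_zero (H : Matrix ι ι ℝ) : matrixEsymm 0 H = 1 := rfl

lemma matrixEsymm_succ (k : ℕ) (H : Matrix ι ι ℝ) :
    matrixEsymm (k + 1) H = (newtonTensor k H * H).trace / (k + 1) := rfl

lemma newtonTensorDeriv_zero (H X : Matrix ι ι ℝ) : newtonTensorDeriv 0 H X = 0 := rfl

lemma newtonTensorDeriv_succ (k : ℕ) (H X : Matrix ι ι ℝ) :
    newtonTensorDeriv (k + 1) H X = matrixEsymmDeriv (k + 1) H X • 1 -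
      (newtonTensorDeriv k H X * H + newtonTensor k H * X) := rfl

lemma matrixEsymmDeriv_succ (k : ℕ) (H X : Matrix ι ι ℝ) :
    matrixEsymmDeriv (k + 1) H X =
      (newtonTensorDeriv k H X * H + newtonTensor k H * X).trace / (k + 1) := rfl

/-! ### Derivatives of Newton tensors along curves -/

section Curve

variable {F G H : ℝ → Matrix ι ι ℝ} {F' G' X : Matrix ι ι ℝ} {t : ℝ}

omit [DecidableEq ι] in
lemma hasDerivAt_matrix_mul_apply (hF : ∀ i j, HasDerivAt (fun t => F t i j) (F' i j) t)
    (hG : ∀ i j, HasDerivAt (fun t => G t i j) (G' i j) t) (i j : ι) :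
    HasDerivAt (fun t => (F t * G t) i j) ((F' * G t + F t * G') i j) t := by
  simp only [Matrix.add_apply, mul_apply, ← Finset.sum_add_distrib]
  exact HasDerivAt.fun_sum fun l _ => (hF i l).mul (hG l j)

omit [DecidableEq ι] in
lemma hasDerivAt_trace (hF : ∀ i j, HasDerivAt (fun t => F t i j) (F' i j) t) :
    HasDerivAt (fun t => (F t).trace) F'.trace t :=
  HasDerivAt.fun_sum fun l _ => hF l l

lemma hasDerivAt_newtonTensor (k : ℕ) (hH : ∀ i j, HasDerivAt (fun t => H t i j) (X i j) t)
    (i j : ι) :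
    HasDerivAt (fun t => newtonTensor k (H t) i j) (newtonTensorDeriv k (H t) X i j) t := by
  induction k generalizing i j with
  | zero => exact hasDerivAt_const t _
  | succ k ih =>
    have hmul := hasDerivAt_matrix_mul_apply ih hH
    exact (((hasDerivAt_trace hmul).div_const (k + 1 : ℝ)).mul_const
      ((1 : Matrix ι ι ℝ) i j)).sub (hmul i j)

lemma hasDerivAt_matrixEsymm (k : ℕ) (hH : ∀ i j, HasDerivAt (fun t => H t i j) (X i j) t) :
    HasDerivAt (fun t => matrixEsymm k (H t)) (matrixEsymmDeriv k (H t) X) t := by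
  cases k with
  | zero => exact hasDerivAt_const t _
  | succ k =>
    exact (hasDerivAt_trace
      (hasDerivAt_matrix_mul_apply (hasDerivAt_newtonTensor k hH) hH)).div_const (k + 1 : ℝ)

end Curve

/-! ### Orthogonal invariance -/

section Orthogonal

variable {R : Matrix ι ι ℝ}

lemma conj_mul_conj (hR : Rᵀ * R = 1) (A B : Matrix ι ι ℝ) :
    (R * A * Rᵀ) * (R * B * Rᵀ) = R * (A * B) * Rᵀ := by
  calc (R * A * Rᵀ) * (R * B * Rᵀ) = R * A * (Rᵀ * R) * B * Rᵀ := by simp only [Matrix.mul_assoc]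
    _ = R * (A * B) * Rᵀ := by rw [hR, mul_one, Matrix.mul_assoc R]

lemma trace_conj (hR : Rᵀ * R = 1) (A : Matrix ι ι ℝ) : (R * A * Rᵀ).trace = A.trace := by
  rw [Matrix.mul_assoc, trace_mul_comm, Matrix.mul_assoc, hR, mul_one]

lemma conj_one (hR : Rᵀ * R = 1) : R * 1 * Rᵀ = 1 := by
  rw [mul_one, mul_eq_one_comm.1 hR]

lemma newtonTensor_conj (hR : Rᵀ * R = 1) (k : ℕ) (H : Matrix ι ι ℝ) :
    newtonTensor k (R * H * Rᵀ) = R * newtonTensor k H * Rᵀ := by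
  induction k with
  | zero => rw [newtonTensor_zero, newtonTensor_zero, conj_one hR]
  | succ k ih =>
    rw [newtonTensor_succ, newtonTensor_succ, matrixEsymm_succ, matrixEsymm_succ, ih,
      conj_mul_conj hR, trace_conj hR, mul_sub, sub_mul, Matrix.mul_smul,
      Matrix.smul_mul, conj_one hR]

lemma matrixEsymm_conj (hR : Rᵀ * R = 1) (k : ℕ) (H : Matrix ι ι ℝ) :
    matrixEsymm k (R * H * Rᵀ) = matrixEsymm k H := by
  cases k with
  | zero => rfl
  | succ k =>
    rw [matrixEsymm_succ, matrixEsymm_succ, newtonTensor_conj hR, conj_mul_conj hR, trace_conj hR]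

lemma newtonTensorDeriv_conj (hR : Rᵀ * R = 1) (k : ℕ) (H X : Matrix ι ι ℝ) :
    newtonTensorDeriv k (R * H * Rᵀ) (R * X * Rᵀ) = R * newtonTensorDeriv k H X * Rᵀ := by
  induction k with
  | zero => rw [newtonTensorDeriv_zero, newtonTensorDeriv_zero, mul_zero, zero_mul]
  | succ k ih =>
    rw [newtonTensorDeriv_succ, newtonTensorDeriv_succ, matrixEsymmDeriv_succ,
      matrixEsymmDeriv_succ, ih, newtonTensor_conj hR, conj_mul_conj hR, conj_mul_conj hR,
      ← add_mul, ← mul_add, trace_conj hR, mul_sub, sub_mul, Matrix.mul_smul,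
      Matrix.smul_mul, conj_one hR]

lemma matrixEsymmDeriv_conj (hR : Rᵀ * R = 1) (k : ℕ) (H X : Matrix ι ι ℝ) :
    matrixEsymmDeriv k (R * H * Rᵀ) (R * X * Rᵀ) = matrixEsymmDeriv k H X := by
  cases k with
  | zero => rfl
  | succ k =>
    rw [matrixEsymmDeriv_succ, matrixEsymmDeriv_succ, newtonTensorDeriv_conj hR,
      newtonTensor_conj hR, conj_mul_conj hR, conj_mul_conj hR, ← add_mul, ← mul_add,
      trace_conj hR]

lemma exists_orthogonal_eq_conj_diagonal {H : Matrix ι ι ℝ} (hH : H.IsHermitian) :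
    ∃ R : Matrix ι ι ℝ, Rᵀ * R = 1 ∧ H = R * diagonal hH.eigenvalues * Rᵀ := by
  refine ⟨hH.eigenvectorUnitary, ?_, ?_⟩
  · simpa only [star_eq_conjTranspose, conjTranspose_eq_transpose_of_trivial] using
      Unitary.coe_star_mul_self hH.eigenvectorUnitary
  · have hspec := hH.spectral_theorem
    rwa [Unitary.conjStarAlgAut_apply, star_eq_conjTranspose,
      conjTranspose_eq_transpose_of_trivial] at hspec

end Orthogonal

/-! ### Newton tensors of diagonal matrices -/

lemma newtonTensor_diagonal_and_matrixEsymm_diagonal (k : ℕ) (l : ι → ℝ) :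
    newtonTensor k (diagonal l) = diagonal (fun i => esymmOn (Finset.univ.erase i) k l) ∧
      matrixEsymm k (diagonal l) = esymmOn Finset.univ k l := by
  induction k with
  | zero => simp [newtonTensor_zero, matrixEsymm_zero]
  | succ k ih =>
    have htrace : matrixEsymm (k + 1) (diagonal l) = esymmOn Finset.univ (k + 1) l := by
      rw [matrixEsymm_succ, ih.1, diagonal_mul_diagonal, trace_diagonal,
        div_eq_iff (by positivity), mul_comm, ← sum_mul_esymmOn_erase]
      exact Finset.sum_congr rfl fun i _ => mul_comm _ _
    refine ⟨?_, htrace⟩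
    rw [newtonTensor_succ, htrace, ih.1, diagonal_mul_diagonal, ← diagonal_one, ← diagonal_smul,
      diagonal_sub]
    congr 1 with i
    rw [esymmOn_succ_eq_erase (Finset.mem_univ i) k l, Pi.smul_apply, smul_eq_mul, mul_one,
      mul_comm (l i), add_sub_cancel_right]

lemma newtonTensor_diagonal (k : ℕ) (l : ι → ℝ) :
    newtonTensor k (diagonal l) = diagonal (fun i => esymmOn (Finset.univ.erase i) k l) :=
  (newtonTensor_diagonal_and_matrixEsymm_diagonal k l).1

lemma matrixEsymm_diagonal (k : ℕ) (l : ι → ℝ) :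
    matrixEsymm k (diagonal l) = esymmOn Finset.univ k l :=
  (newtonTensor_diagonal_and_matrixEsymm_diagonal k l).2

lemma newtonTensorDeriv_succ_diagonal_apply (k : ℕ) (l : ι → ℝ) (X : Matrix ι ι ℝ) (i j : ι) :
    newtonTensorDeriv (k + 1) (diagonal l) X i j =
      matrixEsymmDeriv (k + 1) (diagonal l) X * (1 : Matrix ι ι ℝ) i j -
        (newtonTensorDeriv k (diagonal l) X i j * l j +
          esymmOn (Finset.univ.erase i) k l * X i j) := by
  rw [newtonTensorDeriv_succ, newtonTensor_diagonal, Matrix.sub_apply, Matrix.smul_apply,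
    smul_eq_mul, Matrix.add_apply, mul_diagonal, diagonal_mul]

lemma newtonTensorDeriv_diagonal_apply_ne (k : ℕ) (l : ι → ℝ) (X : Matrix ι ι ℝ) {i j : ι}
    (hij : i ≠ j) :
    newtonTensorDeriv (k + 1) (diagonal l) X i j =
      -X i j * esymmOn ((Finset.univ.erase i).erase j) k l := by
  have hj : j ∈ Finset.univ.erase i := Finset.mem_erase.2 ⟨hij.symm, Finset.mem_univ j⟩
  induction k with
  | zero => simp [newtonTensorDeriv_succ_diagonal_apply, newtonTensorDeriv_zero, hij]
  | succ k ih =>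
    rw [newtonTensorDeriv_succ_diagonal_apply, ih, esymmOn_succ_eq_erase hj k l, one_apply_ne hij]
    ring

omit [Fintype ι] in
lemma sum_sum_mul_esymmOn_erase_erase (s : Finset ι) (k : ℕ) (l x : ι → ℝ) :
    ∑ i ∈ s, (∑ j ∈ s.erase i, esymmOn ((s.erase i).erase j) k l * x j) * l i =
      (k + 1) * ∑ j ∈ s, esymmOn (s.erase j) (k + 1) l * x j := by
  simp only [Finset.sum_mul]
  rw [Finset.sum_comm' (t' := s) (s' := fun j => s.erase j)
    (by intro i j; simp only [Finset.mem_erase]; tauto), Finset.mul_sum]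
  refine Finset.sum_congr rfl fun j _ => ?_
  rw [← mul_assoc, ← sum_mul_esymmOn_erase, Finset.sum_mul]
  refine Finset.sum_congr rfl fun i _ => ?_
  rw [Finset.erase_right_comm]
  ring

lemma matrixEsymmDeriv_diagonal_and_newtonTensorDeriv_diagonal_apply_self (k : ℕ) (l : ι → ℝ)
    (X : Matrix ι ι ℝ) :
    matrixEsymmDeriv (k + 1) (diagonal l) X =
        ∑ j, esymmOn (Finset.univ.erase j) k l * X j j ∧
      ∀ i, newtonTensorDeriv (k + 1) (diagonal l) X i i =
        ∑ j ∈ Finset.univ.erase i, esymmOn ((Finset.univ.erase i).erase j) k l * X j j := by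
  induction k with
  | zero =>
    have hesymm : matrixEsymmDeriv 1 (diagonal l) X = ∑ j, X j j := by
      simp [matrixEsymmDeriv_succ, newtonTensorDeriv_zero, newtonTensor_zero, trace]
    exact ⟨by simpa using hesymm, fun i => by
      simp [newtonTensorDeriv_succ_diagonal_apply, newtonTensorDeriv_zero, hesymm]⟩
  | succ k ih =>
    have hesymm : matrixEsymmDeriv (k + 2) (diagonal l) X =
        ∑ j, esymmOn (Finset.univ.erase j) (k + 1) l * X j j := by
      rw [matrixEsymmDeriv_succ, div_eq_iff (by positivity), newtonTensor_diagonal]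
      simp only [trace, diag, Matrix.add_apply, mul_diagonal, diagonal_mul, ih.2]
      rw [Finset.sum_add_distrib, sum_sum_mul_esymmOn_erase_erase]
      push_cast
      ring
    refine ⟨hesymm, fun i => ?_⟩
    have herase (j : ι) (hj : j ∈ Finset.univ.erase i) :
        esymmOn (Finset.univ.erase j) (k + 1) l * X j j =
          esymmOn ((Finset.univ.erase i).erase j) (k + 1) l * X j j +
            esymmOn ((Finset.univ.erase i).erase j) k l * X j j * l i := by
      have hi : i ∈ Finset.univ.erase j :=
        Finset.mem_erase.2 ⟨(Finset.ne_of_mem_erase hj).symm, Finset.mem_univ i⟩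
      rw [esymmOn_succ_eq_erase hi k l, Finset.erase_right_comm]
      ring
    rw [newtonTensorDeriv_succ_diagonal_apply, hesymm, ih.2, one_apply_eq, mul_one,
      ← Finset.add_sum_erase _ _ (Finset.mem_univ i), Finset.sum_congr rfl herase,
      Finset.sum_add_distrib, Finset.sum_mul]
    ring

lemma matrixEsymmDeriv_diagonal (k : ℕ) (l : ι → ℝ) (X : Matrix ι ι ℝ) :
    matrixEsymmDeriv (k + 1) (diagonal l) X = ∑ j, esymmOn (Finset.univ.erase j) k l * X j j :=
  (matrixEsymmDeriv_diagonal_and_newtonTensorDeriv_diagonal_apply_self k l X).1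

lemma newtonTensorDeriv_diagonal_apply_self (k : ℕ) (l : ι → ℝ) (X : Matrix ι ι ℝ) (i : ι) :
    newtonTensorDeriv (k + 1) (diagonal l) X i i =
      ∑ j ∈ Finset.univ.erase i, esymmOn ((Finset.univ.erase i).erase j) k l * X j j :=
  (matrixEsymmDeriv_diagonal_and_newtonTensorDeriv_diagonal_apply_self k l X).2 i

/-! ### Newton tensors of symmetric matrices -/

lemma matrixEsymm_eq_esymmOn_eigenvalues {H : Matrix ι ι ℝ} (hH : H.IsHermitian) (k : ℕ) :
    matrixEsymm k H = esymmOn Finset.univ k hH.eigenvalues := by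
  obtain ⟨R, hR, hdiag⟩ := exists_orthogonal_eq_conj_diagonal hH
  conv_lhs => rw [hdiag]
  rw [matrixEsymm_conj hR, matrixEsymm_diagonal]

lemma matrixEsymmDeriv_eq_trace {H : Matrix ι ι ℝ} (hH : H.IsHermitian) (k : ℕ)
    (X : Matrix ι ι ℝ) : matrixEsymmDeriv (k + 1) H X = (newtonTensor k H * X).trace := by
  obtain ⟨R, hR, hdiag⟩ := exists_orthogonal_eq_conj_diagonal hH
  have hR' : R * Rᵀ = 1 := mul_eq_one_comm.1 hR
  have hX : X = R * (Rᵀ * X * R) * Rᵀ := by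
    calc X = (R * Rᵀ) * X * (R * Rᵀ) := by rw [hR', one_mul, mul_one]
      _ = R * (Rᵀ * X * R) * Rᵀ := by simp only [Matrix.mul_assoc]
  rw [hX, hdiag, matrixEsymmDeriv_conj hR, newtonTensor_conj hR, conj_mul_conj hR, trace_conj hR,
    matrixEsymmDeriv_diagonal, newtonTensor_diagonal]
  simp only [trace, diag, diagonal_mul]

-- Applied to third derivatives, this says that the Newton tensors of a Hessian are divergence free.
lemma sum_newtonTensorDeriv_apply_eq_zero (k : ℕ) {H : Matrix ι ι ℝ} (hH : H.IsHermitian)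
    {X : ι → Matrix ι ι ℝ} (hX : ∀ a b c, X a b c = X c b a) (j : ι) :
    ∑ i, newtonTensorDeriv k H (X i) i j = 0 := by
  induction k generalizing j with
  | zero => simp [newtonTensorDeriv_zero]
  | succ k ih =>
    have hleft : ∑ i, (newtonTensorDeriv k H (X i) * H) i j = 0 := by
      simp only [mul_apply]
      rw [Finset.sum_comm]
      simp only [← Finset.sum_mul, ih, zero_mul, Finset.sum_const_zero]
    have hright : ∑ i, (newtonTensor k H * X i) i j = (newtonTensor k H * X j).trace := by
      simp only [trace, diag, mul_apply]
      exact Finset.sum_congr rfl fun i _ => Finset.sum_congr rfl fun l _ => by rw [hX]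
    simp only [newtonTensorDeriv_succ, matrixEsymmDeriv_eq_trace hH, Matrix.sub_apply,
      Matrix.add_apply, Matrix.smul_apply, Finset.sum_sub_distrib, Finset.sum_add_distrib, hleft,
      hright]
    simp [one_apply]

-- Along a curve `H` in `{σ_{m+2} = 1}` with `H 0 = diagonal l`, `H' = X` and `H'' = Y`, the two
-- equations are the first and second derivatives of the constraint.
lemma GardingPos.sum_sum_esymmOn_erase_erase_mul_sq_le {m : ℕ} {l : ι → ℝ}
    (hl : GardingPos Finset.univ (m + 2) l) {X Y : Matrix ι ι ℝ} (hX : Xᵀ = X)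
    (hfirst : (newtonTensor (m + 1) (diagonal l) * X).trace = 0)
    (hsecond : (newtonTensorDeriv (m + 1) (diagonal l) X * X).trace +
      (newtonTensor (m + 1) (diagonal l) * Y).trace = 0) :
    ∑ i, ∑ j ∈ Finset.univ.erase i, esymmOn ((Finset.univ.erase i).erase j) m l * X i j ^ 2 ≤
      ∑ i, esymmOn (Finset.univ.erase i) (m + 1) l * Y i i := by
  have hsymm (i j : ι) : X j i = X i j := congrFun (congrFun hX i) j
  rw [newtonTensor_diagonal] at hfirst hsecond
  simp only [trace, diag, diagonal_mul] at hfirst hsecond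
  have hconcave := hl.sum_sum_mul_esymmOn_erase_erase_nonpos (ξ := fun i => X i i)
    (by simpa only [mul_comm] using hfirst)
  have hdiag (i : ι) : (newtonTensorDeriv (m + 1) (diagonal l) X * X) i i =
      ∑ j ∈ Finset.univ.erase i, X i i * X j j * esymmOn ((Finset.univ.erase i).erase j) m l -
        ∑ j ∈ Finset.univ.erase i, esymmOn ((Finset.univ.erase i).erase j) m l * X i j ^ 2 := by
    rw [mul_apply, ← Finset.add_sum_erase _ _ (Finset.mem_univ i),
      newtonTensorDeriv_diagonal_apply_self, Finset.sum_mul, sub_eq_add_neg,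
      ← Finset.sum_neg_distrib]
    congr 1
    · exact Finset.sum_congr rfl fun j _ => by ring
    · refine Finset.sum_congr rfl fun j hj => ?_
      rw [newtonTensorDeriv_diagonal_apply_ne m l X (Finset.ne_of_mem_erase hj).symm, hsymm i j]
      ring
  simp only [hdiag, Finset.sum_sub_distrib] at hsecond
  linarith

end NewtonTensor

/-! ### Directional derivatives -/

section Calculus

open Matrix

section Normed

variable {E : Type*} [NormedAddCommGroup E] [NormedSpace ℝ E]

/-- Smoothness of a real function. -/
abbrev IsSmooth (f : E → ℝ) : Prop := ContDiff ℝ ∞ f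

/-- The directional derivative `∂[e] f`, with the direction first so that it can be iterated. -/
def dirDeriv (e : E) (f : E → ℝ) : E → ℝ := fun x => fderiv ℝ f x e

notation:max "∂[" e "]" => dirDeriv e

variable {ι κ : Type*} {f g : E → ℝ}

lemma IsSmooth.differentiable (hf : IsSmooth f) : Differentiable ℝ f :=
  ContDiff.differentiable hf (by simp)

lemma IsSmooth.contDiff_fderiv (hf : IsSmooth f) : ContDiff ℝ ∞ (fderiv ℝ f) :=
  ContDiff.fderiv_right hf (by simp)

lemma IsSmooth.dirDeriv (hf : IsSmooth f) (e : E) : IsSmooth (∂[e] f) :=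
  hf.contDiff_fderiv.clm_apply contDiff_const

lemma hasDerivAt_line (hf : Differentiable ℝ f) (x e : E) (t : ℝ) :
    HasDerivAt (fun t : ℝ => f (x + t • e)) (∂[e] f (x + t • e)) t := by
  have hline : HasDerivAt (fun t : ℝ => x + t • e) e t := by
    simpa using ((hasDerivAt_id t).smul_const e).const_add x
  exact (hf (x + t • e)).hasFDerivAt.comp_hasDerivAt t hline

lemma dirDeriv_eq_of_hasDerivAt_line (hf : Differentiable ℝ f) {x e : E} {c : ℝ}
    (h : HasDerivAt (fun t : ℝ => f (x + t • e)) c 0) : ∂[e] f x = c := by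
  simpa using (hasDerivAt_line hf x e 0).unique h

lemma dirDeriv_smul_dir (f : E → ℝ) (c : ℝ) (a x : E) : ∂[c • a] f x = c * ∂[a] f x :=
  map_smul _ _ _

lemma dirDeriv_const_mul (hf : Differentiable ℝ f) (c : ℝ) (e x : E) :
    ∂[e] (fun x => c * f x) x = c * ∂[e] f x := by
  rw [_root_.dirDeriv, fderiv_const_mul (hf x)]
  rfl

lemma dirDeriv_mul (hf : Differentiable ℝ f) (hg : Differentiable ℝ g) (e x : E) :
    ∂[e] (fun x => f x * g x) x = ∂[e] f x * g x + f x * ∂[e] g x := by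
  simp only [_root_.dirDeriv, fderiv_fun_mul (hf x) (hg x), _root_.add_apply, _root_.smul_apply,
    smul_eq_mul]
  ring

lemma dirDeriv_sum (s : Finset κ) {f : κ → E → ℝ} (hf : ∀ i ∈ s, Differentiable ℝ (f i))
    (e x : E) : ∂[e] (fun x => ∑ i ∈ s, f i x) x = ∑ i ∈ s, ∂[e] (f i) x := by
  simp only [_root_.dirDeriv, fderiv_fun_sum fun i hi => hf i hi x, _root_.sum_apply]

lemma IsSmooth.dirDeriv_dirDeriv (hf : IsSmooth f) (a b x : E) :
    ∂[a] (∂[b] f) x = fderiv ℝ (fderiv ℝ f) x a b := by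
  have hdiff := hf.contDiff_fderiv.differentiable (by simp) x
  change fderiv ℝ (fun y => fderiv ℝ f y b) x a = _
  rw [fderiv_clm_apply hdiff (differentiableAt_const b)]
  simp

lemma IsSmooth.dirDeriv_comm (hf : IsSmooth f) (a b : E) : ∂[a] (∂[b] f) = ∂[b] (∂[a] f) := by
  ext x
  have hsymm : IsSymmSndFDerivAt ℝ f x := hf.contDiffAt.isSymmSndFDerivAt (by
    rw [minSmoothness_of_isRCLikeNormedField]; exact WithTop.coe_le_coe.2 le_top)
  rw [hf.dirDeriv_dirDeriv, hf.dirDeriv_dirDeriv, hsymm.eq a b]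

/-- The Hessian matrix of `f` at `x` with respect to the family of directions `b`. -/
def hessianIn (b : ι → E) (f : E → ℝ) (x : E) : Matrix ι ι ℝ :=
  of fun i j => ∂[b i] (∂[b j] f) x

lemma hessianIn_apply (b : ι → E) (f : E → ℝ) (x : E) (i j : ι) :
    hessianIn b f x i j = ∂[b i] (∂[b j] f) x := rfl

lemma IsSmooth.transpose_hessianIn (hf : IsSmooth f) (b : ι → E) (x : E) :
    (hessianIn b f x)ᵀ = hessianIn b f x := by
  ext i j
  rw [transpose_apply, hessianIn_apply, hessianIn_apply, hf.dirDeriv_comm]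

lemma IsSmooth.isHermitian_hessianIn (hf : IsSmooth f) (b : ι → E) (x : E) :
    (hessianIn b f x).IsHermitian := by
  rw [IsHermitian, conjTranspose_eq_transpose_of_trivial, hf.transpose_hessianIn]

lemma IsSmooth.hasDerivAt_hessianIn_line (hf : IsSmooth f) (b : ι → E) (x e : E) (t : ℝ)
    (i j : ι) :
    HasDerivAt (fun t : ℝ => hessianIn b f (x + t • e) i j)
      (hessianIn b (∂[e] f) (x + t • e) i j) t := by
  have hcomm : ∂[e] (∂[b i] (∂[b j] f)) = ∂[b i] (∂[b j] (∂[e] f)) := by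
    rw [(hf.dirDeriv _).dirDeriv_comm, hf.dirDeriv_comm]
  have hline := hasDerivAt_line ((hf.dirDeriv (b j)).dirDeriv (b i)).differentiable x e t
  rwa [hcomm] at hline

section DifferentiatedEquation

variable [Fintype ι] [DecidableEq ι] {b : ι → E} {k : ℕ} {c : ℝ}

lemma IsSmooth.trace_newtonTensor_mul_hessianIn_dirDeriv_eq_zero (hf : IsSmooth f)
    (heq : ∀ x, matrixEsymm (k + 1) (hessianIn b f x) = c) (x e : E) :
    (newtonTensor k (hessianIn b f x) * hessianIn b (∂[e] f) x).trace = 0 := by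
  have hderiv := hasDerivAt_matrixEsymm (k + 1) fun i j => hf.hasDerivAt_hessianIn_line b x e 0 i j
  simp only [heq, matrixEsymmDeriv_eq_trace (hf.isHermitian_hessianIn b _)] at hderiv
  simpa using hderiv.unique (hasDerivAt_const 0 c)

lemma IsSmooth.trace_newtonTensorDeriv_mul_add_trace_newtonTensor_mul_eq_zero (hf : IsSmooth f)
    (heq : ∀ x, matrixEsymm (k + 1) (hessianIn b f x) = c) (x e : E) :
    (newtonTensorDeriv k (hessianIn b f x) (hessianIn b (∂[e] f) x) *
        hessianIn b (∂[e] f) x).trace +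
      (newtonTensor k (hessianIn b f x) * hessianIn b (∂[e] (∂[e] f)) x).trace = 0 := by
  have hderiv := hasDerivAt_trace (hasDerivAt_matrix_mul_apply
    (hasDerivAt_newtonTensor k fun i j => hf.hasDerivAt_hessianIn_line b x e 0 i j)
    fun i j => (hf.dirDeriv e).hasDerivAt_hessianIn_line b x e 0 i j)
  simp only [hf.trace_newtonTensor_mul_hessianIn_dirDeriv_eq_zero heq, trace_add] at hderiv
  simpa using hderiv.unique (hasDerivAt_const 0 0)

end DifferentiatedEquation

end Normed

/-! ### Orthonormal frames -/

section Frame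

variable {E : Type*} [NormedAddCommGroup E] [InnerProductSpace ℝ E] {ι : Type*} [Fintype ι]
  {f : E → ℝ}

lemma dirDeriv_eq_sum (b : OrthonormalBasis ι ℝ E) (f : E → ℝ) (e x : E) :
    ∂[e] f x = ∑ i, ⟪b i, e⟫_ℝ * ∂[b i] f x := by
  simp only [dirDeriv]
  conv_lhs => rw [← b.sum_repr' e]
  simp only [map_sum, map_smul, smul_eq_mul]

lemma IsSmooth.dirDeriv_dirDeriv_eq_sum (hf : IsSmooth f) (b : OrthonormalBasis ι ℝ E)
    (v w x : E) : ∂[v] (∂[w] f) x =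
      ∑ i, ∑ j, ⟪b i, v⟫_ℝ * ⟪b j, w⟫_ℝ * hessianIn b f x i j := by
  rw [dirDeriv_eq_sum b]
  refine Finset.sum_congr rfl fun i _ => ?_
  rw [hf.dirDeriv_comm, dirDeriv_eq_sum b, Finset.mul_sum]
  refine Finset.sum_congr rfl fun j _ => ?_
  rw [hessianIn_apply, hf.dirDeriv_comm, mul_assoc]

/-- The matrix of scalar products expressing the orthonormal basis `b` in terms of `b'`. -/
def frameChange (b b' : OrthonormalBasis ι ℝ E) : Matrix ι ι ℝ :=
  of fun i j => ⟪b' j, b i⟫_ℝ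

lemma transpose_frameChange_mul_self [DecidableEq ι] (b b' : OrthonormalBasis ι ℝ E) :
    (frameChange b b')ᵀ * frameChange b b' = 1 := by
  ext i j
  simp only [mul_apply, transpose_apply, frameChange, of_apply, one_apply]
  rw [← orthonormal_iff_ite.1 b'.orthonormal i j, ← b.sum_inner_mul_inner]
  exact Finset.sum_congr rfl fun k _ => by rw [real_inner_comm (b k) (b' j)]

lemma IsSmooth.hessianIn_eq_conj (hf : IsSmooth f) (b b' : OrthonormalBasis ι ℝ E) (x : E) :
    hessianIn b f x = frameChange b b' * hessianIn b' f x * (frameChange b b')ᵀ := by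
  ext i j
  rw [hessianIn_apply, hf.dirDeriv_dirDeriv_eq_sum b']
  simp only [mul_apply, transpose_apply, Finset.sum_mul, frameChange, of_apply]
  rw [Finset.sum_comm]
  exact Finset.sum_congr rfl fun p _ => Finset.sum_congr rfl fun q _ => by ring

lemma IsSmooth.matrixEsymm_hessianIn_eq [DecidableEq ι] (hf : IsSmooth f)
    (b b' : OrthonormalBasis ι ℝ E) (k : ℕ) (x : E) :
    matrixEsymm k (hessianIn b f x) = matrixEsymm k (hessianIn b' f x) := by
  rw [hf.hessianIn_eq_conj b b', matrixEsymm_conj (transpose_frameChange_mul_self b b')]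

lemma IsSmooth.dirDeriv_dirDeriv_self_eq_sum [DecidableEq ι] (hf : IsSmooth f)
    {b : OrthonormalBasis ι ℝ E} {x : E} {l : ι → ℝ} (hdiag : hessianIn b f x = diagonal l)
    (e : E) : ∂[e] (∂[e] f) x = ∑ i, l i * ⟪b i, e⟫_ℝ ^ 2 := by
  rw [hf.dirDeriv_dirDeriv_eq_sum b, hdiag]
  refine Finset.sum_congr rfl fun i _ => ?_
  simp only [diagonal_apply, mul_ite, mul_zero, Finset.sum_ite_eq, Finset.mem_univ, if_true]
  ring

lemma IsSmooth.exists_hessianIn_eq_diagonal [FiniteDimensional ℝ E] {n : ℕ}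
    (hn : Module.finrank ℝ E = n) (hf : IsSmooth f) (x : E) :
    ∃ (b : OrthonormalBasis (Fin n) ℝ E) (l : Fin n → ℝ), hessianIn b f x = diagonal l := by
  set T : E →ₗ[ℝ] E :=
    (InnerProductSpace.toDual ℝ E).symm.toLinearEquiv.toLinearMap ∘ₗ fderiv ℝ (fderiv ℝ f) x
  have hT (v w : E) : ⟪T v, w⟫_ℝ = ∂[v] (∂[w] f) x := by
    rw [hf.dirDeriv_dirDeriv]
    exact InnerProductSpace.toDual_symm_apply
  have hsymm : T.IsSymmetric := fun v w => by
    rw [hT, real_inner_comm, hT, hf.dirDeriv_comm]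
  refine ⟨hsymm.eigenvectorBasis hn, hsymm.eigenvalues hn, ?_⟩
  ext i j
  rw [hessianIn_apply, ← hT, hsymm.apply_eigenvectorBasis hn, real_inner_smul_left,
    orthonormal_iff_ite.1 (hsymm.eigenvectorBasis hn).orthonormal, diagonal_apply, mul_ite,
    mul_one, mul_zero]
  rfl

lemma sq_inner_le_sq_norm (b : OrthonormalBasis ι ℝ E) (i : ι) (x : E) :
    ⟪b i, x⟫_ℝ ^ 2 ≤ ‖x‖ ^ 2 := by
  rw [← b.sum_sq_inner_right x]
  exact Finset.single_le_sum (f := fun i => ⟪b i, x⟫_ℝ ^ 2) (fun i _ => sq_nonneg _)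
    (Finset.mem_univ i)

lemma norm_fderiv_sq_eq_sum (b : OrthonormalBasis ι ℝ E) (f : E → ℝ) (x : E) :
    ‖fderiv ℝ f x‖ ^ 2 = ∑ j, ∂[b j] f x ^ 2 :=
  b.norm_dual (fderiv ℝ f x)

lemma IsSmooth.norm_fderiv_sq [FiniteDimensional ℝ E] (hf : IsSmooth f) :
    IsSmooth fun x => ‖fderiv ℝ f x‖ ^ 2 := by
  simp only [norm_fderiv_sq_eq_sum (stdOrthonormalBasis ℝ E)]
  exact ContDiff.sum fun j _ => (hf.dirDeriv _).pow 2

lemma IsSmooth.dirDeriv_norm_fderiv_sq (hf : IsSmooth f) (b : OrthonormalBasis ι ℝ E) (e : E) :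
    ∂[e] (fun x => ‖fderiv ℝ f x‖ ^ 2) =
      fun x => ∑ j, 2 * (∂[b j] f x * ∂[e] (∂[b j] f) x) := by
  ext x
  have hj (j : ι) := (hf.dirDeriv (b j)).differentiable
  simp only [norm_fderiv_sq_eq_sum b, sq]
  rw [dirDeriv_sum _ fun j _ => (hj j).fun_mul (hj j)]
  refine Finset.sum_congr rfl fun j _ => ?_
  rw [dirDeriv_mul (hj j) (hj j)]
  ring

lemma IsSmooth.dirDeriv_dirDeriv_norm_fderiv_sq (hf : IsSmooth f) (b : OrthonormalBasis ι ℝ E)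
    (e x : E) : ∂[e] (∂[e] (fun x => ‖fderiv ℝ f x‖ ^ 2)) x =
      ∑ j, 2 * (∂[e] (∂[b j] f) x ^ 2 + ∂[b j] f x * ∂[e] (∂[e] (∂[b j] f)) x) := by
  have hj (j : ι) := (hf.dirDeriv (b j)).differentiable
  have hej (j : ι) := ((hf.dirDeriv (b j)).dirDeriv e).differentiable
  rw [hf.dirDeriv_norm_fderiv_sq b, dirDeriv_sum _ fun j _ => ((hj j).fun_mul (hej j)).const_mul 2]
  refine Finset.sum_congr rfl fun j _ => ?_
  rw [dirDeriv_const_mul ((hj j).fun_mul (hej j)), dirDeriv_mul (hj j) (hej j)]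
  ring

lemma hasDerivAt_norm_sq_line (x e : E) (t : ℝ) :
    HasDerivAt (fun t : ℝ => ‖x + t • e‖ ^ 2) (2 * ⟪x + t • e, e⟫_ℝ) t := by
  have hline : HasDerivAt (fun t : ℝ => x + t • e) e t := by
    simpa using ((hasDerivAt_id t).smul_const e).const_add x
  exact hline.norm_sq

lemma hasDerivAt_inner_line (x e : E) (t : ℝ) :
    HasDerivAt (fun t : ℝ => ⟪x + t • e, e⟫_ℝ) (‖e‖ ^ 2) t := by
  simp only [inner_add_left, real_inner_smul_left, real_inner_self_eq_norm_sq]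
  simpa using ((hasDerivAt_id t).mul_const (‖e‖ ^ 2)).const_add ⟪x, e⟫_ℝ

end Frame

/-! ### The maximum principle along a line -/

-- The logarithmic derivative of the product is the sum of the logarithmic derivatives.
lemma logDeriv_test_of_isLocalMax {A Z q A' Z' q' : ℝ → ℝ} {A'' Z'' q'' : ℝ} (N : ℕ)
    (hA : ∀ t, HasDerivAt A (A' t) t) (hZ : ∀ t, HasDerivAt Z (Z' t) t)
    (hq : ∀ t, HasDerivAt q (q' t) t) (hA' : HasDerivAt A' A'' 0) (hZ' : HasDerivAt Z' Z'' 0)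
    (hq' : HasDerivAt q' q'' 0) (hA0 : 0 < A 0) (hZ0 : 0 < Z 0)
    (hmax : IsLocalMax (fun t => A t * Z t ^ N * Real.exp (q t)) 0) :
    A' 0 / A 0 + N * (Z' 0 / Z 0) + q' 0 = 0 ∧
      A'' / A 0 - (A' 0 / A 0) ^ 2 + N * (Z'' / Z 0 - (Z' 0 / Z 0) ^ 2) + q'' ≤ 0 := by
  have hApos : ∀ᶠ t in 𝓝 0, 0 < A t := (hA 0).continuousAt.eventually (lt_mem_nhds hA0)
  have hZpos : ∀ᶠ t in 𝓝 0, 0 < Z t := (hZ 0).continuousAt.eventually (lt_mem_nhds hZ0)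
  have hlog {t : ℝ} (hAt : 0 < A t) (hZt : 0 < Z t) :
      Real.log (A t * Z t ^ N * Real.exp (q t)) =
        Real.log (A t) + N * Real.log (Z t) + q t := by
    rw [Real.log_mul (by positivity) (by positivity),
      Real.log_mul (by positivity) (by positivity), Real.log_exp, Real.log_pow]
  have hmax_log : IsLocalMax (fun t => Real.log (A t) + N * Real.log (Z t) + q t) 0 := by
    filter_upwards [hmax, hApos, hZpos] with t ht hAt hZt
    rw [← hlog hAt hZt, ← hlog hA0 hZ0]
    exact Real.log_le_log (by positivity) ht
  have hderiv {t : ℝ} (hAt : 0 < A t) (hZt : 0 < Z t) :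
      HasDerivAt (fun t => Real.log (A t) + N * Real.log (Z t) + q t)
        (A' t / A t + N * (Z' t / Z t) + q' t) t :=
    (((hA t).log hAt.ne').add (((hZ t).log hZt.ne').const_mul (N : ℝ))).add (hq t)
  refine ⟨hmax_log.hasDerivAt_eq_zero (hderiv hA0 hZ0), ?_⟩
  refine le_of_eq_of_le ?_ (second_deriv_nonpos_of_isLocalMax
    (by filter_upwards [hApos, hZpos] with t hAt hZt using hderiv hAt hZt)
    (((hA'.div (hA 0) hA0.ne').add ((hZ'.div (hZ 0) hZ0.ne').const_mul (N : ℝ))).add hq') hmax_log)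
  field_simp

lemma isLocalMax_line {E : Type*} [NormedAddCommGroup E] [NormedSpace ℝ E] {w : E → ℝ} {x : E}
    (h : IsLocalMax w x) (e : E) : IsLocalMax (fun t : ℝ => w (x + t • e)) 0 := by
  have hline : Filter.Tendsto (fun t : ℝ => x + t • e) (𝓝 0) (𝓝 x) := by
    have hcont : Continuous fun t : ℝ => x + t • e := by fun_prop
    simpa using hcont.tendsto 0
  filter_upwards [hline.eventually h] with t ht
  simpa using ht

lemma IsSmooth.derivative_tests_of_isLocalMax_weighted {E : Type*} [NormedAddCommGroup E]
    [InnerProductSpace ℝ E] {w v : E → ℝ} (hw : IsSmooth w) (hv : IsSmooth v) {x e : E} {β c : ℝ}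
    {N : ℕ} (he : ‖e‖ = 1) (hwx : 0 < w x) (hvx : v x < c)
    (hmax : IsLocalMax (fun x => w x * (c - v x) ^ N * Real.exp (β * ‖x‖ ^ 2)) x) :
    ∂[e] w x / w x - N * (∂[e] v x / (c - v x)) + 2 * (β * ⟪x, e⟫_ℝ) = 0 ∧
      ∂[e] (∂[e] w) x / w x - (∂[e] w x / w x) ^ 2 -
        N * (∂[e] (∂[e] v) x / (c - v x) + (∂[e] v x / (c - v x)) ^ 2) + 2 * β ≤ 0 := by
  have hq (t : ℝ) : HasDerivAt (fun t : ℝ => β * ‖x + t • e‖ ^ 2) (β * (2 * ⟪x + t • e, e⟫_ℝ)) t :=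
    (hasDerivAt_norm_sq_line x e t).const_mul β
  have hq' : HasDerivAt (fun t : ℝ => β * (2 * ⟪x + t • e, e⟫_ℝ)) (2 * β) 0 := by
    refine (((hasDerivAt_inner_line x e 0).const_mul 2).const_mul β).congr_deriv ?_
    rw [he]
    ring
  obtain ⟨hfirst, hsecond⟩ := logDeriv_test_of_isLocalMax N (hasDerivAt_line hw.differentiable x e)
    (fun t => (hasDerivAt_line hv.differentiable x e t).const_sub c) hq
    (hasDerivAt_line (hw.dirDeriv e).differentiable x e 0)
    (hasDerivAt_line (hv.dirDeriv e).differentiable x e 0).fun_neg hq' (by simpa using hwx)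
    (by simpa using hvx) (isLocalMax_line hmax e)
  simp only [zero_smul, add_zero, neg_div, neg_sq] at hfirst hsecond
  exact ⟨by linear_combination hfirst, by linear_combination hsecond⟩

end Calculus

/-! ### Admissible solutions -/

/-- Smooth solutions of `σ_{k+1}(D²v) = 1` whose Hessians lie in the Gårding cone `Γ_{k+1}` and
satisfy `σ_{k+2}(D²v) ≥ -A`. The elementary symmetric functions are those of the Hessian matrix in
the standard basis. -/
structure IsAdmissibleSolution {n : ℕ} (k : ℕ) (A : ℝ) (v : EuclideanSpace ℝ (Fin n) → ℝ) :
    Prop where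
  smooth : IsSmooth v
  pos : ∀ x, ∀ j ≤ k + 1,
    0 < matrixEsymm j (hessianIn (EuclideanSpace.basisFun (Fin n) ℝ) v x)
  eq_one : ∀ x, matrixEsymm (k + 1) (hessianIn (EuclideanSpace.basisFun (Fin n) ℝ) v x) = 1
  neg_le : ∀ x, -A ≤ matrixEsymm (k + 2) (hessianIn (EuclideanSpace.basisFun (Fin n) ℝ) v x)

section AdmissibleSolution

variable {n k : ℕ} {A : ℝ} {v : EuclideanSpace ℝ (Fin n) → ℝ}

lemma IsAdmissibleSolution.matrixEsymm_hessianIn_eq_one (hv : IsAdmissibleSolution k A v)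
    (b : OrthonormalBasis (Fin n) ℝ (EuclideanSpace ℝ (Fin n))) (x : EuclideanSpace ℝ (Fin n)) :
    matrixEsymm (k + 1) (hessianIn b v x) = 1 := by
  rw [hv.smooth.matrixEsymm_hessianIn_eq b (EuclideanSpace.basisFun (Fin n) ℝ), hv.eq_one]

lemma IsAdmissibleSolution.esymmOn_of_hessianIn_eq_diagonal (hv : IsAdmissibleSolution k A v)
    {b : OrthonormalBasis (Fin n) ℝ (EuclideanSpace ℝ (Fin n))} {x : EuclideanSpace ℝ (Fin n)}
    {l : Fin n → ℝ} (hdiag : hessianIn b v x = Matrix.diagonal l) :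
    GardingPos Finset.univ (k + 1) l ∧ esymmOn Finset.univ (k + 1) l = 1 ∧
      -A ≤ esymmOn Finset.univ (k + 2) l := by
  have hesymm (j : ℕ) : esymmOn Finset.univ j l =
      matrixEsymm j (hessianIn (EuclideanSpace.basisFun (Fin n) ℝ) v x) := by
    rw [hv.smooth.matrixEsymm_hessianIn_eq _ b, hdiag, matrixEsymm_diagonal]
  exact ⟨fun j hj => hesymm j ▸ hv.pos x j hj, hesymm _ ▸ hv.eq_one x, hesymm _ ▸ hv.neg_le x⟩

lemma IsAdmissibleSolution.exists_hessianIn_eq_diagonal (hv : IsAdmissibleSolution k A v)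
    (x : EuclideanSpace ℝ (Fin n)) :
    ∃ (b : OrthonormalBasis (Fin n) ℝ (EuclideanSpace ℝ (Fin n))) (l : Fin n → ℝ),
      hessianIn b v x = Matrix.diagonal l :=
  hv.smooth.exists_hessianIn_eq_diagonal finrank_euclideanSpace_fin x

end AdmissibleSolution

/-! ### The gradient estimate -/

section GradientEstimate

section Algebra

variable {a q ζ β ρ A G L p s : ℝ}

lemma le_eigenvalue_of_gradient_critical (hq : 0 < q) (hζ : 0 < ζ) (hp : p ≠ 0)
    (hs : 2 * |s| ≤ a * |p|) (hcrit : L * (p * ζ) = q * (a * p - s)) : a * q / (2 * ζ) ≤ L := by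
  have hsp : s * p ≤ a * p ^ 2 / 2 := by
    calc s * p ≤ |s| * |p| := by rw [← abs_mul]; exact le_abs_self _
      _ ≤ a * |p| / 2 * |p| := mul_le_mul_of_nonneg_right (by linarith) (abs_nonneg p)
      _ = a * p ^ 2 / 2 := by rw [← sq_abs p]; ring
  rw [div_le_iff₀ (by positivity)]
  refine le_of_mul_le_mul_right (a := p ^ 2) ?_ (by positivity)
  calc a * q * p ^ 2 = 2 * (q * (a * p ^ 2 - a * p ^ 2 / 2)) := by ring
    _ ≤ 2 * (q * (a * p ^ 2 - s * p)) := by gcongr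
    _ = L * (2 * ζ) * p ^ 2 := by linear_combination (-2 * p) * hcrit

lemma mul_gradient_error_le_of_small_shift (ha : 1 ≤ a) (hq : 0 < q) (hζ : 0 < ζ) (hG : 0 ≤ G)
    (hs : 2 * |s| ≤ a * |p|) (hL : a * q / (2 * ζ) ≤ L) (hLG : L * G ≤ 2) :
    G * (2 * a * p ^ 2 + 4 * (a * p - s) ^ 2) ≤ 44 * a * p ^ 2 * ζ / q := by
  have hsq : 4 * s ^ 2 ≤ a ^ 2 * p ^ 2 := by
    simpa only [mul_pow, sq_abs, show (2 : ℝ) ^ 2 = 4 by norm_num] using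
      pow_le_pow_left₀ (by positivity) hs 2
  have herror : 2 * a * p ^ 2 + 4 * (a * p - s) ^ 2 ≤ 11 * a ^ 2 * p ^ 2 := by
    have hap : a * p ^ 2 ≤ a ^ 2 * p ^ 2 :=
      mul_le_mul_of_nonneg_right (le_self_pow₀ ha two_ne_zero) (sq_nonneg p)
    nlinarith [sq_nonneg (a * p + 2 * s)]
  have hGaq : G * (a * q) ≤ 4 * ζ := by
    rw [div_le_iff₀ (by positivity)] at hL
    nlinarith
  rw [le_div_iff₀ hq]
  calc G * (2 * a * p ^ 2 + 4 * (a * p - s) ^ 2) * q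
      ≤ G * (11 * a ^ 2 * p ^ 2) * q := by gcongr
    _ = G * (a * q) * (11 * a * p ^ 2) := by ring
    _ ≤ 4 * ζ * (11 * a * p ^ 2) := by gcongr
    _ = 44 * a * p ^ 2 * ζ := by ring

lemma gradient_error_le_of_large_shift (ha : 1 ≤ a) (hs : a * |p| ≤ 2 * |s|) :
    2 * a * p ^ 2 + 4 * (a * p - s) ^ 2 ≤ 44 * s ^ 2 := by
  have hsq : a ^ 2 * p ^ 2 ≤ 4 * s ^ 2 := by
    simpa only [mul_pow, sq_abs, show (2 : ℝ) ^ 2 = 4 by norm_num] using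
      pow_le_pow_left₀ (by positivity) hs 2
  have hap : a * p ^ 2 ≤ a ^ 2 * p ^ 2 :=
    mul_le_mul_of_nonneg_right (le_self_pow₀ ha two_ne_zero) (sq_nonneg p)
  nlinarith [sq_nonneg (a * p + 2 * s)]

lemma mul_gradient_error_le {y : ℝ} (ha : 1 ≤ a) (hq : 0 < q) (hqA : 8 * A ≤ q) (hζ : 0 < ζ)
    (hζ2 : ζ ≤ 2) (hG : 0 ≤ G) (hβ : 0 ≤ β) (hβρ : 44 * β * ρ ^ 2 ≤ 1) (hy : y ^ 2 ≤ ρ ^ 2)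
    (hLG : 2 * A ≤ L → L * G ≤ 2) (hcrit : L * (p * ζ) = q * (a * p - β * y)) :
    G * (2 * a * p ^ 2 + 4 * (a * p - β * y) ^ 2) ≤ 44 * a * p ^ 2 * ζ / q + β * G := by
  rcases le_total (2 * |β * y|) (a * |p|) with hs | hs
  · rcases eq_or_ne p 0 with rfl | hp
    · have hβy : β * y = 0 := by
        rw [abs_zero, mul_zero] at hs
        exact abs_nonpos_iff.1 (by linarith)
      simp only [hβy, mul_zero, sub_zero, ne_eq, OfNat.ofNat_ne_zero, not_false_eq_true, zero_pow,
        add_zero, zero_mul, zero_div, zero_add]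
      positivity
    · have hL := le_eigenvalue_of_gradient_critical hq hζ hp hs hcrit
      have hLA : 2 * A ≤ L := by
        refine le_trans ?_ hL
        rw [le_div_iff₀ (by positivity)]
        rcases le_total 0 A with hA | hA <;> nlinarith
      have hbound := mul_gradient_error_le_of_small_shift ha hq hζ hG hs hL (hLG hLA)
      exact hbound.trans (le_add_of_nonneg_right (mul_nonneg hβ hG))
  · have hshift : 44 * (β * y) ^ 2 ≤ β := by
      calc 44 * (β * y) ^ 2 = β * (44 * β * y ^ 2) := by ring
        _ ≤ β * (44 * β * ρ ^ 2) := by gcongr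
        _ ≤ β := mul_le_of_le_one_right hβ hβρ
    calc G * (2 * a * p ^ 2 + 4 * (a * p - β * y) ^ 2)
        ≤ G * β := by
          gcongr
          exact (gradient_error_le_of_large_shift ha hs).trans hshift
      _ = β * G := mul_comm _ _
      _ ≤ 44 * a * p ^ 2 * ζ / q + β * G := le_add_of_nonneg_left (by positivity)

variable {ι : Type*} [Fintype ι] [DecidableEq ι] {m : ℕ} {l p y : ι → ℝ}

lemma GardingPos.sum_esymmOn_erase_le_of_gradient_test (hl : GardingPos Finset.univ (m + 2) l)
    (hone : esymmOn Finset.univ (m + 2) l = 1) (hA : 0 ≤ A)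
    (hlow : -A ≤ esymmOn Finset.univ (m + 3) l) (ha : 1 ≤ a) (hq : 0 < q) (hqA : 8 * A ≤ q)
    (hζ : 0 < ζ) (hζ2 : ζ ≤ 2) (hβ : 0 ≤ β) (hβρ : 44 * β * ρ ^ 2 ≤ 1) (hy : ∀ i, y i ^ 2 ≤ ρ ^ 2)
    (hcrit : ∀ i, l i * (p i * ζ) = q * (a * p i - β * y i)) (hqs : q = ∑ i, (p i * ζ) ^ 2)
    (htest : ∑ i, esymmOn (Finset.univ.erase i) (m + 1) l *
      (2 * l i ^ 2 / q - 4 * (a * p i - β * y i) ^ 2 - 2 * a * (l i / ζ + p i ^ 2) + 2 * β) ≤ 0) :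
    β * ∑ i, esymmOn (Finset.univ.erase i) (m + 1) l ≤ (2 * a * (m + 2) + 44 * a) / ζ := by
  set G : ι → ℝ := fun i => esymmOn (Finset.univ.erase i) (m + 1) l
  have hG (i : ι) : 0 < G i := hl.esymmOn_erase_pos (Finset.mem_univ i)
  have heuler : ∑ i, l i * G i = m + 2 := by
    rw [sum_mul_esymmOn_erase, hone]
    push_cast
    ring
  have hsplit : ∑ i, G i *
      (2 * l i ^ 2 / q - 4 * (a * p i - β * y i) ^ 2 - 2 * a * (l i / ζ + p i ^ 2) + 2 * β) =
      ∑ i, 2 * l i ^ 2 / q * G i -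
        ∑ i, G i * (2 * a * p i ^ 2 + 4 * (a * p i - β * y i) ^ 2) -
        2 * a / ζ * ∑ i, l i * G i + 2 * β * ∑ i, G i := by
    rw [Finset.mul_sum, Finset.mul_sum, ← Finset.sum_sub_distrib, ← Finset.sum_sub_distrib,
      ← Finset.sum_add_distrib]
    exact Finset.sum_congr rfl fun i _ => by ring
  have hgood : 0 ≤ ∑ i, 2 * l i ^ 2 / q * G i :=
    Finset.sum_nonneg fun i _ => mul_nonneg (by positivity) (hG i).le
  have herror : ∑ i, G i * (2 * a * p i ^ 2 + 4 * (a * p i - β * y i) ^ 2) ≤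
      44 * a / ζ + β * ∑ i, G i := by
    calc _ ≤ ∑ i, (44 * a * p i ^ 2 * ζ / q + β * G i) :=
          Finset.sum_le_sum fun i _ =>
            mul_gradient_error_le ha hq hqA hζ hζ2 (hG i).le hβ hβρ (hy i)
              (mul_esymmOn_erase_le_two (Finset.mem_univ i) hA hone hlow) (hcrit i)
      _ = 44 * a / (ζ * q) * ∑ i, (p i * ζ) ^ 2 + β * ∑ i, G i := by
        rw [Finset.mul_sum, Finset.mul_sum, ← Finset.sum_add_distrib]
        refine Finset.sum_congr rfl fun i _ => ?_
        field_simp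
      _ = _ := by rw [← hqs]; field_simp
  have hgoal : (2 * a * (m + 2) + 44 * a) / ζ = 2 * a / ζ * (m + 2) + 44 * a / ζ := by ring
  rw [hsplit, heuler] at htest
  linarith

omit [DecidableEq ι] in
lemma exists_large_eigenvalue_of_gradient_critical (ha : 1 ≤ a) (hq : 1 < q) (hζ : 0 < ζ)
    (hζ2 : ζ ≤ 2) (hβ : 0 ≤ β) (hρ : 1 ≤ ρ) (hβρ : 44 * (Fintype.card ι + 1) * β * ρ ^ 2 ≤ 1)
    (hy : ∀ i, y i ^ 2 ≤ ρ ^ 2) (hcrit : ∀ i, l i * (p i * ζ) = q * (a * p i - β * y i))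
    (hqs : q = ∑ i, (p i * ζ) ^ 2) : ∃ i, a * q / (2 * ζ) ≤ l i := by
  by_contra! hsmall
  have hterm (i : ι) : (p i * ζ) ^ 2 ≤ 16 * β ^ 2 * ρ ^ 2 := by
    have hpβy : |p i| ≤ 2 * |β * y i| := by
      by_contra! hlt
      have hp : p i ≠ 0 := by
        rintro h
        rw [h, abs_zero] at hlt
        exact absurd hlt (not_lt.2 (by positivity))
      exact (hsmall i).not_ge (le_eigenvalue_of_gradient_critical (zero_lt_one.trans hq) hζ hp
        (hlt.le.trans (le_mul_of_one_le_left (abs_nonneg _) ha)) (hcrit i))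
    calc (p i * ζ) ^ 2 = |p i| ^ 2 * ζ ^ 2 := by rw [sq_abs, mul_pow]
      _ ≤ (2 * |β * y i|) ^ 2 * 2 ^ 2 := by gcongr
      _ = 16 * β ^ 2 * y i ^ 2 := by rw [mul_pow, sq_abs]; ring
      _ ≤ 16 * β ^ 2 * ρ ^ 2 := mul_le_mul_of_nonneg_left (hy i) (by positivity)
  have hρ2 : 1 ≤ ρ ^ 2 := one_le_pow₀ hρ
  have hcard : (0 : ℝ) ≤ Fintype.card ι := Nat.cast_nonneg _
  have hβ1 : β ≤ 1 := by
    have hββρ : β * 1 ≤ β * ρ ^ 2 := by gcongr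
    nlinarith [mul_nonneg hcard (mul_nonneg hβ (sq_nonneg ρ))]
  have hle : q ≤ 1 := by
    calc q ≤ ∑ _i : ι, 16 * β ^ 2 * ρ ^ 2 := hqs ▸ Finset.sum_le_sum fun i _ => hterm i
      _ = 16 * β * (Fintype.card ι * β * ρ ^ 2) := by
        rw [Finset.sum_const, Finset.card_univ, nsmul_eq_mul]
        ring
      _ ≤ 16 * 1 * (1 / 44) := by
        gcongr
        nlinarith [mul_nonneg hβ (sq_nonneg ρ)]
      _ ≤ 1 := by norm_num
  exact hq.not_ge hle

lemma GardingPos.mul_pow_le_of_gradient_test (hl : GardingPos Finset.univ (m + 2) l)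
    (hone : esymmOn Finset.univ (m + 2) l = 1) (hA : 0 ≤ A)
    (hlow : -A ≤ esymmOn Finset.univ (m + 3) l) (ha : 1 ≤ a) (hq : 1 < q) (hqA : 8 * A ≤ q)
    (hζ : 0 < ζ) (hζ2 : ζ ≤ 2) (hβ : 0 < β) (hρ : 1 ≤ ρ)
    (hβρ : 44 * (Fintype.card ι + 1) * β * ρ ^ 2 ≤ 1) (hy : ∀ i, y i ^ 2 ≤ ρ ^ 2)
    (hcrit : ∀ i, l i * (p i * ζ) = q * (a * p i - β * y i)) (hqs : q = ∑ i, (p i * ζ) ^ 2)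
    (htest : ∑ i, esymmOn (Finset.univ.erase i) (m + 1) l *
      (2 * l i ^ 2 / q - 4 * (a * p i - β * y i) ^ 2 - 2 * a * (l i / ζ + p i ^ 2) + 2 * β) ≤ 0) :
    q * ζ ^ m ≤ 2 * ((2 * a * (m + 2) + 44 * a) / β) ^ (m + 1) := by
  have hq0 : 0 < q := zero_lt_one.trans hq
  have hβρ' : 44 * β * ρ ^ 2 ≤ 1 := by
    have : 0 ≤ Fintype.card ι * (β * ρ ^ 2) := by positivity
    linarith
  obtain ⟨i, hi⟩ :=
    exists_large_eigenvalue_of_gradient_critical ha hq hζ hζ2 hβ.le hρ hβρ hy hcrit hqs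
  set D := (2 * a * (m + 2) + 44 * a) / β with hD
  have hsum : ∑ i, esymmOn (Finset.univ.erase i) (m + 1) l ≤ D / ζ := by
    have hβsum := hl.sum_esymmOn_erase_le_of_gradient_test hone hA hlow ha hq0 hqA hζ hζ2 hβ.le
      hβρ' hy hcrit hqs htest
    rwa [hD, div_right_comm, le_div_iff₀' hβ]
  have heig : a * q / (2 * ζ) ≤ (D / ζ) ^ (m + 1) :=
    hi.trans ((hl.le_sum_esymmOn_erase_pow hone (Finset.mem_univ i)).trans (pow_le_pow_left₀
      (Finset.sum_nonneg fun j _ => (hl.esymmOn_erase_pos (Finset.mem_univ j)).le) hsum _))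
  rw [div_pow, div_le_div_iff₀ (by positivity) (by positivity)] at heig
  have haq : a * q * ζ ^ m ≤ 2 * D ^ (m + 1) :=
    le_of_mul_le_mul_right (a := ζ) (by linear_combination heig) hζ
  nlinarith [pow_pos hζ m, mul_pos hq0 (pow_pos hζ m)]

end Algebra

variable {n m : ℕ} {A ρ β : ℝ} {v : EuclideanSpace ℝ (Fin n) → ℝ}

lemma IsSmooth.isCompact_sublevel {E : Type*} [NormedAddCommGroup E] [NormedSpace ℝ E]
    [ProperSpace E] {v : E → ℝ} (hv : IsSmooth v) {c : ℝ} (h : ∀ y, v y ≤ c → ‖y‖ ≤ ρ) :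
    IsCompact {y | v y ≤ c} :=
  Metric.isCompact_of_isClosed_isBounded (isClosed_le hv.continuous continuous_const)
    (isBounded_iff_forall_norm_le.2 ⟨ρ, h⟩)

lemma IsAdmissibleSolution.sum_esymmOn_erase_mul_dirDeriv_eq_zero {k : ℕ}
    (hv : IsAdmissibleSolution k A v)
    {b : OrthonormalBasis (Fin n) ℝ (EuclideanSpace ℝ (Fin n))} {x : EuclideanSpace ℝ (Fin n)}
    {l : Fin n → ℝ} (hdiag : hessianIn b v x = Matrix.diagonal l)
    (e : EuclideanSpace ℝ (Fin n)) :
    ∑ i, esymmOn (Finset.univ.erase i) k l * ∂[b i] (∂[b i] (∂[e] v)) x = 0 := by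
  have h := hv.smooth.trace_newtonTensor_mul_hessianIn_dirDeriv_eq_zero
    (hv.matrixEsymm_hessianIn_eq_one b) x e
  rw [hdiag, newtonTensor_diagonal] at h
  simpa only [Matrix.trace, Matrix.diag, Matrix.diagonal_mul, hessianIn_apply] using h

lemma dirDeriv_dirDeriv_of_hessianIn_eq_diagonal {E ι : Type*} [NormedAddCommGroup E]
    [NormedSpace ℝ E] [DecidableEq ι] {b : ι → E} {f : E → ℝ} {x : E} {l : ι → ℝ}
    (hdiag : hessianIn b f x = Matrix.diagonal l) (i j : ι) :
    ∂[b i] (∂[b j] f) x = if i = j then l i else 0 := by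
  rw [← hessianIn_apply, hdiag, Matrix.diagonal_apply]

lemma IsSmooth.gradient_tests_of_isLocalMax (hv : IsSmooth v)
    {b : OrthonormalBasis (Fin n) ℝ (EuclideanSpace ℝ (Fin n))} {x : EuclideanSpace ℝ (Fin n)}
    {l : Fin n → ℝ} (hdiag : hessianIn b v x = Matrix.diagonal l) {N : ℕ} {c : ℝ} (hvx : v x < c)
    (hpos : 0 < ‖fderiv ℝ v x‖ ^ 2)
    (hmax : IsLocalMax
      (fun x => ‖fderiv ℝ v x‖ ^ 2 * (c - v x) ^ N * Real.exp (β * ‖x‖ ^ 2)) x) (i : Fin n) :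
    2 * l i * ∂[b i] v x / ‖fderiv ℝ v x‖ ^ 2 - N * (∂[b i] v x / (c - v x)) +
        2 * (β * ⟪x, b i⟫_ℝ) = 0 ∧
      (2 * l i ^ 2 + 2 * ∑ j, ∂[b j] v x * ∂[b i] (∂[b i] (∂[b j] v)) x) / ‖fderiv ℝ v x‖ ^ 2 -
        (2 * l i * ∂[b i] v x / ‖fderiv ℝ v x‖ ^ 2) ^ 2 -
        N * (l i / (c - v x) + (∂[b i] v x / (c - v x)) ^ 2) + 2 * β ≤ 0 := by
  have htests := hv.norm_fderiv_sq.derivative_tests_of_isLocalMax_weighted hv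
    (b.orthonormal.norm_eq_one i) hpos hvx hmax
  have hfirst : ∂[b i] (fun x => ‖fderiv ℝ v x‖ ^ 2) x = 2 * l i * ∂[b i] v x := by
    simp only [hv.dirDeriv_norm_fderiv_sq b, dirDeriv_dirDeriv_of_hessianIn_eq_diagonal hdiag,
      mul_ite, mul_zero, Finset.sum_ite_eq, Finset.mem_univ, if_true]
    ring
  have hsecond : ∂[b i] (∂[b i] fun x => ‖fderiv ℝ v x‖ ^ 2) x =
      2 * l i ^ 2 + 2 * ∑ j, ∂[b j] v x * ∂[b i] (∂[b i] (∂[b j] v)) x := by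
    simp [hv.dirDeriv_dirDeriv_norm_fderiv_sq b, dirDeriv_dirDeriv_of_hessianIn_eq_diagonal hdiag,
      mul_add, Finset.sum_add_distrib, Finset.mul_sum]
  simpa only [hfirst, hsecond, dirDeriv_dirDeriv_of_hessianIn_eq_diagonal hdiag i i, if_true]
    using htests

lemma IsAdmissibleSolution.norm_fderiv_sq_mul_le_of_isLocalMax
    (hv : IsAdmissibleSolution (m + 1) A v) (hA : 0 ≤ A) (hρ : 1 ≤ ρ) (hβ : 0 < β)
    (hβρ : 44 * (n + 1) * β * ρ ^ 2 ≤ 1) {x : EuclideanSpace ℝ (Fin n)} (hx : ‖x‖ ≤ ρ)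
    (hvx : v x < 1) (hvx' : -1 ≤ v x) (hq : 1 < ‖fderiv ℝ v x‖ ^ 2)
    (hqA : 8 * A ≤ ‖fderiv ℝ v x‖ ^ 2)
    (hmax : IsLocalMax (fun x => ‖fderiv ℝ v x‖ ^ 2 * (1 - v x) ^ (2 * (m + 1)) *
      Real.exp (β * ‖x‖ ^ 2)) x) :
    ‖fderiv ℝ v x‖ ^ 2 * (1 - v x) ^ m ≤
      2 * ((2 * (m + 1) * (m + 2) + 44 * (m + 1)) / β) ^ (m + 1) := by
  obtain ⟨b, l, hdiag⟩ := hv.exists_hessianIn_eq_diagonal x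
  obtain ⟨hl, hone, hlow⟩ := hv.esymmOn_of_hessianIn_eq_diagonal hdiag
  have htests :=
    hv.smooth.gradient_tests_of_isLocalMax hdiag hvx (zero_lt_one.trans hq) hmax
  have hlinear := hv.sum_esymmOn_erase_mul_dirDeriv_eq_zero hdiag
  have hqs := norm_fderiv_sq_eq_sum b v x
  set q := ‖fderiv ℝ v x‖ ^ 2
  set ζ := 1 - v x with hζ
  have hζ0 : 0 < ζ := sub_pos.2 hvx
  have hq0 : 0 < q := zero_lt_one.trans hq
  push_cast at htests
  have hthird : ∑ i, esymmOn (Finset.univ.erase i) (m + 1) l *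
      (2 * ∑ j, ∂[b j] v x * ∂[b i] (∂[b i] (∂[b j] v)) x) / q = 0 := by
    rw [← Finset.sum_div, div_eq_zero_iff]
    simp only [Finset.mul_sum]
    rw [Finset.sum_comm]
    refine .inl (Finset.sum_eq_zero fun j _ => ?_)
    rw [← mul_zero (2 * ∂[b j] v x), ← hlinear (b j), Finset.mul_sum]
    exact Finset.sum_congr rfl fun i _ => by ring
  refine hl.mul_pow_le_of_gradient_test (p := fun i => ∂[b i] v x / ζ) (y := fun i => ⟪x, b i⟫_ℝ)
    hone hA hlow (by linarith [(Nat.cast_nonneg m : (0 : ℝ) ≤ m)]) hq hqA hζ0 (by linarith) hβ hρ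
    (by simpa using hβρ) (fun i => ?_) (fun i => ?_) ?_ ?_
  · rw [real_inner_comm]
    exact (sq_inner_le_sq_norm b i x).trans (pow_le_pow_left₀ (norm_nonneg x) hx 2)
  · have hfirst := (htests i).1
    field_simp at hfirst ⊢
    linear_combination hfirst / 2
  · simp only [div_mul_cancel₀ _ hζ0.ne', hqs]
  · refine le_of_eq_of_le ?_ (Finset.sum_nonpos (s := Finset.univ) fun i _ =>
      mul_nonpos_of_nonneg_of_nonpos
      (hl.esymmOn_erase_pos (Finset.mem_univ i)).le (htests i).2)
    rw [← sub_eq_zero, ← Finset.sum_sub_distrib, ← neg_eq_zero, ← Finset.sum_neg_distrib, ← hthird]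
    refine Finset.sum_congr rfl fun i _ => ?_
    have hfirst : 2 * l i * ∂[b i] v x / q =
        2 * ((m + 1) * (∂[b i] v x / ζ) - β * ⟪x, b i⟫_ℝ) := by
      linear_combination (htests i).1
    rw [hfirst]
    ring

lemma exists_norm_fderiv_sq_mul_le (n m : ℕ) (hA : 0 ≤ A) (hρ : 1 ≤ ρ) :
    ∃ C : ℝ, 0 < C ∧ ∀ v : EuclideanSpace ℝ (Fin n) → ℝ, IsAdmissibleSolution (m + 1) A v →
      (∀ y, -1 ≤ v y) → (∀ y, v y ≤ 1 → ‖y‖ ≤ ρ) →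
      ∀ y, v y ≤ 1 → ‖fderiv ℝ v y‖ ^ 2 * (1 - v y) ^ (2 * (m + 1)) ≤ C := by
  set β : ℝ := 1 / (44 * (n + 1) * ρ ^ 2) with hβ_def
  have hβ : 0 < β := by positivity
  have hβρ : 44 * (n + 1) * β * ρ ^ 2 ≤ 1 := by rw [hβ_def]; field_simp; exact le_rfl
  set D : ℝ := 2 * ((2 * (m + 1) * (m + 2) + 44 * (m + 1)) / β) ^ (m + 1)
  set M := max 1 (8 * A)
  have hM : 1 ≤ M := le_max_left _ _
  refine ⟨(M * 2 ^ (2 * (m + 1)) + D * 2 ^ (m + 2)) * Real.exp (β * ρ ^ 2), by positivity, ?_⟩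
  intro v hv hlow hbound y hy
  set W : EuclideanSpace ℝ (Fin n) → ℝ := fun x =>
    ‖fderiv ℝ v x‖ ^ 2 * (1 - v x) ^ (2 * (m + 1)) * Real.exp (β * ‖x‖ ^ 2)
  have hW : Continuous W := by
    have hcont := hv.smooth.continuous
    have hcont' := hv.smooth.norm_fderiv_sq.continuous
    fun_prop
  obtain ⟨x, hx, hxmax⟩ :=
    (hv.smooth.isCompact_sublevel hbound).exists_isMaxOn ⟨y, hy⟩ hW.continuousOn
  have hx1 : v x ≤ 1 := hx
  have hpow (k : ℕ) : (1 - v x) ^ k ≤ 2 ^ k :=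
    pow_le_pow_left₀ (by linarith) (by linarith [hlow x]) k
  have hpow0 (k : ℕ) : 0 ≤ (1 - v x) ^ k := pow_nonneg (by linarith) k
  have hmain : ‖fderiv ℝ v x‖ ^ 2 * (1 - v x) ^ (2 * (m + 1)) ≤
      M * 2 ^ (2 * (m + 1)) + D * 2 ^ (m + 2) := by
    rcases le_or_gt (‖fderiv ℝ v x‖ ^ 2) M with hq | hq
    · refine (mul_le_mul hq (hpow _) (hpow0 _) (by positivity)).trans ?_
      exact le_add_of_nonneg_right (by positivity)
    rcases hx1.eq_or_lt with hvx | hvx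
    · simp only [hvx, sub_self, ne_eq, mul_eq_zero, OfNat.ofNat_ne_zero, Nat.add_eq_zero_iff,
        one_ne_zero, and_false, or_self, not_false_eq_true, zero_pow, mul_zero]
      positivity
    have hloc : IsLocalMax W x := by
      filter_upwards [hv.smooth.continuous.continuousAt.eventually (gt_mem_nhds hvx)] with z hz
      exact hxmax (show v z ≤ 1 from hz.le)
    have hgrad := hv.norm_fderiv_sq_mul_le_of_isLocalMax hA hρ hβ hβρ (hbound x hx) hvx (hlow x)
      ((le_max_left _ _).trans_lt hq) ((le_max_right _ _).trans hq.le) hloc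
    calc _ = ‖fderiv ℝ v x‖ ^ 2 * (1 - v x) ^ m * (1 - v x) ^ (m + 2) := by ring
      _ ≤ D * 2 ^ (m + 2) := mul_le_mul hgrad (hpow _) (hpow0 _) (by positivity)
      _ ≤ _ := le_add_of_nonneg_left (by positivity)
  calc ‖fderiv ℝ v y‖ ^ 2 * (1 - v y) ^ (2 * (m + 1)) ≤ W y :=
        le_mul_of_one_le_right (mul_nonneg (sq_nonneg _) (pow_nonneg (by linarith) _))
          (Real.one_le_exp (by positivity))
    _ ≤ W x := hxmax hy
    _ ≤ _ := mul_le_mul hmain (Real.exp_le_exp.2 (by gcongr; exact hbound x hx))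
        (Real.exp_pos _).le (by positivity)

end GradientEstimate

/-! ### The Pogorelov-type Hessian estimate -/

section HessianEstimate

section Algebra

variable {a β A G E L p s : ℝ}

lemma mul_hessian_error_le_of_le_concavity (ha : 5 ≤ a) (hG : 0 ≤ G) (hs : 8 * s ^ 2 ≤ β)
    (h : 7 / 5 * G ≤ 2 * E * L) :
    G * ((a * p - 2 * s) ^ 2 + a * p ^ 2) - 2 * E * L * (a * p - 2 * s) ^ 2 ≤ β * G := by
  have hap : 5 * (a * p ^ 2) ≤ 2 * (a * p - 2 * s) ^ 2 + 8 * s ^ 2 := by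
    calc 5 * (a * p ^ 2) ≤ a * (a * p ^ 2) := mul_le_mul_of_nonneg_right ha (by positivity)
      _ ≤ 2 * (a * p - 2 * s) ^ 2 + 8 * s ^ 2 := by nlinarith [sq_nonneg (a * p - 2 * s - 2 * s)]
  have hgood := mul_le_mul_of_nonneg_right h (sq_nonneg (a * p - 2 * s))
  have herror : a * p ^ 2 ≤ 2 / 5 * (a * p - 2 * s) ^ 2 + β := by
    linarith [sq_nonneg s]
  linarith [mul_le_mul_of_nonneg_left herror hG]

lemma mul_hessian_error_le_of_mul_le (ha : 1 ≤ a) (hG : 0 ≤ G) (hE : 0 ≤ E) (hL : 0 < L)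
    (hs : 8 * s ^ 2 ≤ β) (h : G * L ≤ 16) :
    G * ((a * p - 2 * s) ^ 2 + a * p ^ 2) - 2 * E * L * (a * p - 2 * s) ^ 2 ≤
      48 * a ^ 2 * p ^ 2 / L + β * G := by
  have hap : a * p ^ 2 ≤ a ^ 2 * p ^ 2 :=
    mul_le_mul_of_nonneg_right (le_self_pow₀ ha two_ne_zero) (sq_nonneg p)
  have herror : (a * p - 2 * s) ^ 2 + a * p ^ 2 ≤ 3 * (a ^ 2 * p ^ 2) + β := by
    nlinarith [sq_nonneg (a * p + 2 * s)]
  have hGL : G * (3 * (a ^ 2 * p ^ 2)) ≤ 48 * a ^ 2 * p ^ 2 / L := by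
    rw [le_div_iff₀ hL]
    nlinarith [mul_le_mul_of_nonneg_right h (by positivity : 0 ≤ 3 * (a ^ 2 * p ^ 2))]
  have hgood : 0 ≤ 2 * E * L * (a * p - 2 * s) ^ 2 := by positivity
  linarith [mul_le_mul_of_nonneg_left herror hG]

variable {ι : Type*} [DecidableEq ι] {m : ℕ} {l : ι → ℝ} {i₁ : ι}

lemma GardingPos.mul_esymmOn_erase_le_or_mul_le {s : Finset ι} {i : ι}
    (hl : GardingPos s (m + 2) l) (hone : esymmOn s (m + 2) l = 1) (hA : 0 ≤ A)
    (hlow : -A ≤ esymmOn s (m + 3) l) (hi : i ∈ s) (hi₁ : i₁ ∈ s) (hne : i ≠ i₁)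
    (hmax : ∀ j ∈ s, l j ≤ l i₁) (hbig : 16 * (s.card + (m + 3) * A) ≤ l i₁)
    (htop : l i₁ * esymmOn (s.erase i₁) (m + 1) l ≤ 2) :
    7 / 5 * esymmOn (s.erase i) (m + 1) l ≤ 2 * esymmOn ((s.erase i₁).erase i) m l * l i₁ ∨
      esymmOn (s.erase i) (m + 1) l * l i₁ ≤ 16 := by
  have hL : 0 ≤ l i₁ := le_trans (by positivity) hbig
  rcases le_or_gt (esymmOn (s.erase i) (m + 1) l) (8 * esymmOn (s.erase i₁) (m + 1) l) with h | h
  · exact .inr (by nlinarith)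
  have hE := (hl.erase hi₁).esymmOn_erase_pos (Finset.mem_erase.2 ⟨hne, hi⟩)
  have hdiff : esymmOn (s.erase i) (m + 1) l - esymmOn (s.erase i₁) (m + 1) l =
      esymmOn ((s.erase i₁).erase i) m l * (l i₁ - l i) := by
    rw [esymmOn_succ_eq_erase (Finset.mem_erase.2 ⟨hne, hi⟩),
      esymmOn_succ_eq_erase (Finset.mem_erase.2 ⟨hne.symm, hi₁⟩), Finset.erase_right_comm]
    ring
  have hlower := hl.neg_div_four_le hA hone hlow hi hi₁ hmax hbig
  have hgap : esymmOn ((s.erase i₁).erase i) m l * (l i₁ - l i) ≤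
      esymmOn ((s.erase i₁).erase i) m l * (5 / 4 * l i₁) :=
    mul_le_mul_of_nonneg_left (by linarith) hE.le
  exact .inl (by linarith)

variable [Fintype ι] {ζ ρ C : ℝ} {V X Y y : ι → ℝ}

omit [DecidableEq ι] in
lemma mul_sum_le_of_hessian_test {K : ℝ} {G E : ι → ℝ} (ha : 5 ≤ a) (hζ : 0 < ζ) (hL : 0 < L)
    (hLζ : 1 ≤ L * ζ) (hG : ∀ i, 0 ≤ G i) (hE : ∀ i, 0 ≤ E i)
    (hcase : ∀ i, 7 / 5 * G i ≤ 2 * E i * L ∨ G i * L ≤ 16) (heuler : ∑ i, l i * G i = K)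
    (hβ : 0 ≤ β) (hβρ : 8 * β * ρ ^ 2 ≤ 1) (hy : ∀ i, y i ^ 2 ≤ ρ ^ 2) (hV : ∑ i, V i ^ 2 ≤ C)
    (hcrit : ∀ i, X i / L = a * (V i / ζ) - 2 * (β * y i))
    (hconcave : 2 * ∑ i, E i * X i ^ 2 ≤ ∑ i, G i * Y i)
    (htest : ∑ i, G i *
      (Y i / L - (X i / L) ^ 2 - a * (l i / ζ + (V i / ζ) ^ 2) + 2 * β) ≤ 0) :
    β * ∑ i, G i ≤ (a * K + 48 * a ^ 2 * C) / ζ := by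
  have hshift (i : ι) : 8 * (β * y i) ^ 2 ≤ β := by
    calc 8 * (β * y i) ^ 2 = β * (8 * β * y i ^ 2) := by ring
      _ ≤ β * (8 * β * ρ ^ 2) :=
        mul_le_mul_of_nonneg_left (mul_le_mul_of_nonneg_left (hy i) (by positivity)) hβ
      _ ≤ β := mul_le_of_le_one_right hβ hβρ
  have hterm (i : ι) : G i * ((X i / L) ^ 2 + a * (V i / ζ) ^ 2) - 2 * E i * L * (X i / L) ^ 2 ≤
      48 * a ^ 2 * (V i / ζ) ^ 2 / L + β * G i := by
    rw [hcrit]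
    rcases hcase i with h | h
    · exact (mul_hessian_error_le_of_le_concavity ha (hG i) (hshift i) h).trans
        (le_add_of_nonneg_left (by positivity))
    · exact mul_hessian_error_le_of_mul_le (by linarith) (hG i) (hE i) hL (hshift i) h
  have hexpand : ∑ i, G i * (Y i / L - (X i / L) ^ 2 - a * (l i / ζ + (V i / ζ) ^ 2) + 2 * β) =
      (∑ i, G i * Y i - 2 * ∑ i, E i * X i ^ 2) / L - a / ζ * K + 2 * β * ∑ i, G i -
        ∑ i, (G i * ((X i / L) ^ 2 + a * (V i / ζ) ^ 2) - 2 * E i * L * (X i / L) ^ 2) := by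
    rw [← heuler, Finset.mul_sum, Finset.mul_sum, Finset.mul_sum, ← Finset.sum_sub_distrib,
      Finset.sum_div, ← Finset.sum_sub_distrib, ← Finset.sum_add_distrib, ← Finset.sum_sub_distrib]
    refine Finset.sum_congr rfl fun i _ => ?_
    field_simp
    ring
  have herror : ∑ i, (48 * a ^ 2 * (V i / ζ) ^ 2 / L + β * G i) ≤
      48 * a ^ 2 * C / ζ + β * ∑ i, G i := by
    rw [Finset.sum_add_distrib, ← Finset.mul_sum]
    gcongr
    calc ∑ i, 48 * a ^ 2 * (V i / ζ) ^ 2 / L = 48 * a ^ 2 * (∑ i, V i ^ 2) / (ζ * (L * ζ)) := by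
          rw [Finset.mul_sum, Finset.sum_div]
          refine Finset.sum_congr rfl fun i _ => ?_
          field_simp
      _ ≤ 48 * a ^ 2 * C / ζ := by
        have hC : 0 ≤ C := (Finset.sum_nonneg fun i _ => sq_nonneg (V i)).trans hV
        gcongr
        exact le_mul_of_one_le_right hζ.le hLζ
  have hgood : 0 ≤ (∑ i, G i * Y i - 2 * ∑ i, E i * X i ^ 2) / L :=
    div_nonneg (sub_nonneg.2 hconcave) hL.le
  have hterms := Finset.sum_le_sum fun i (_ : i ∈ Finset.univ) => hterm i
  rw [hexpand] at htest
  rw [add_div, mul_div_right_comm]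
  linarith

lemma GardingPos.mul_pow_le_of_hessian_test (hl : GardingPos Finset.univ (m + 2) l)
    (hone : esymmOn Finset.univ (m + 2) l = 1) (hA : 0 ≤ A)
    (hlow : -A ≤ esymmOn Finset.univ (m + 3) l) (hmax : ∀ j, l j ≤ l i₁)
    (hbig : 16 * (Fintype.card ι + (m + 3) * A) ≤ l i₁) (hLζ : 1 ≤ l i₁ * ζ)
    (ha : 5 ≤ a) (hζ : 0 < ζ) (hβ : 0 < β) (hβρ : 8 * β * ρ ^ 2 ≤ 1)
    (hy : ∀ i, y i ^ 2 ≤ ρ ^ 2) (hV : ∑ i, V i ^ 2 ≤ C)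
    (hcrit : ∀ i, X i / l i₁ = a * (V i / ζ) - 2 * (β * y i))
    (hconcave : 2 * ∑ i ∈ Finset.univ.erase i₁,
      esymmOn ((Finset.univ.erase i₁).erase i) m l * X i ^ 2 ≤
        ∑ i, esymmOn (Finset.univ.erase i) (m + 1) l * Y i)
    (htest : ∑ i, esymmOn (Finset.univ.erase i) (m + 1) l *
      (Y i / l i₁ - (X i / l i₁) ^ 2 - a * (l i / ζ + (V i / ζ) ^ 2) + 2 * β) ≤ 0) :
    l i₁ * ζ ^ (m + 1) ≤ ((a * (m + 2) + 48 * a ^ 2 * C) / β) ^ (m + 1) := by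
  have hL : 0 < l i₁ := pos_of_mul_pos_left (zero_lt_one.trans_le hLζ) hζ.le
  have hbigA : 2 * A ≤ l i₁ := by
    refine le_trans ?_ hbig
    nlinarith [mul_nonneg (Nat.cast_nonneg m : (0 : ℝ) ≤ m) hA,
      (Nat.cast_nonneg (Fintype.card ι) : (0 : ℝ) ≤ Fintype.card ι)]
  have htop := mul_esymmOn_erase_le_two (Finset.mem_univ i₁) hA hone hlow hbigA
  have hE {i : ι} (hi : i ≠ i₁) : 0 < esymmOn ((Finset.univ.erase i₁).erase i) m l :=
    (hl.erase (Finset.mem_univ i₁)).esymmOn_erase_pos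
      (Finset.mem_erase.2 ⟨hi, Finset.mem_univ i⟩)
  have hsum := mul_sum_le_of_hessian_test (K := m + 2)
    (E := fun i => if i = i₁ then 0 else esymmOn ((Finset.univ.erase i₁).erase i) m l)
    ha hζ hL hLζ (fun i => (hl.esymmOn_erase_pos (Finset.mem_univ i)).le)
    (fun i => by split_ifs with hi; exacts [le_rfl, (hE hi).le]) (fun i => ?_) ?_ hβ.le hβρ hy hV
    hcrit (le_of_eq_of_le ?_ hconcave) htest
  · have hbound : ∑ i, esymmOn (Finset.univ.erase i) (m + 1) l ≤
        (a * (m + 2) + 48 * a ^ 2 * C) / β / ζ := by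
      rw [div_right_comm, le_div_iff₀ hβ]
      linarith
    have hpow := (hl.le_sum_esymmOn_erase_pow hone (Finset.mem_univ i₁)).trans
      (pow_le_pow_left₀ (Finset.sum_nonneg fun i _ =>
        (hl.esymmOn_erase_pos (Finset.mem_univ i)).le) hbound _)
    rwa [div_pow, le_div_iff₀ (by positivity)] at hpow
  · rcases eq_or_ne i i₁ with rfl | hi
    · exact .inr (by linarith)
    · simpa only [hi, if_false] using hl.mul_esymmOn_erase_le_or_mul_le hone hA hlow
        (Finset.mem_univ i) (Finset.mem_univ i₁) hi (fun j _ => hmax j) hbig htop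
  · rw [sum_mul_esymmOn_erase, hone]
    push_cast
    ring
  · rw [← Finset.add_sum_erase _ _ (Finset.mem_univ i₁), if_pos rfl, zero_mul, zero_add]
    exact congrArg _ (Finset.sum_congr rfl fun i hi => by rw [if_neg (Finset.ne_of_mem_erase hi)])

lemma two_mul_sum_erase_le_sum_sum_erase {f : ι → ι → ℝ} (hf : ∀ i j, f i j = f j i)
    (hf₀ : ∀ i, ∀ j ≠ i, 0 ≤ f i j) (i₁ : ι) :
    2 * ∑ i ∈ Finset.univ.erase i₁, f i₁ i ≤ ∑ i, ∑ j ∈ Finset.univ.erase i, f i j := by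
  rw [← Finset.add_sum_erase _ _ (Finset.mem_univ i₁), two_mul]
  gcongr with i hi
  rw [hf]
  have hi := (Finset.ne_of_mem_erase hi).symm
  exact Finset.single_le_sum (f := f i) (fun j hj => hf₀ i j (Finset.ne_of_mem_erase hj))
    (Finset.mem_erase.2 ⟨hi, Finset.mem_univ i₁⟩)

end Algebra

variable {n m : ℕ} {A ρ β C : ℝ} {v : EuclideanSpace ℝ (Fin n) → ℝ}
  {b : OrthonormalBasis (Fin n) ℝ (EuclideanSpace ℝ (Fin n))} {x : EuclideanSpace ℝ (Fin n)}
  {l : Fin n → ℝ}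

lemma IsAdmissibleSolution.two_mul_sum_esymmOn_mul_sq_le (hv : IsAdmissibleSolution (m + 1) A v)
    (hdiag : hessianIn b v x = Matrix.diagonal l) (i₁ : Fin n) :
    2 * ∑ i ∈ Finset.univ.erase i₁, esymmOn ((Finset.univ.erase i₁).erase i) m l *
        ∂[b i] (∂[b i₁] (∂[b i₁] v)) x ^ 2 ≤
      ∑ i, esymmOn (Finset.univ.erase i) (m + 1) l *
        ∂[b i] (∂[b i] (∂[b i₁] (∂[b i₁] v))) x := by
  obtain ⟨hl, -, -⟩ := hv.esymmOn_of_hessianIn_eq_diagonal hdiag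
  set w := ∂[b i₁] v
  have hw : IsSmooth w := hv.smooth.dirDeriv (b i₁)
  have heq := hv.matrixEsymm_hessianIn_eq_one b
  have hfirst := hv.smooth.trace_newtonTensor_mul_hessianIn_dirDeriv_eq_zero heq x (b i₁)
  have hsecond :=
    hv.smooth.trace_newtonTensorDeriv_mul_add_trace_newtonTensor_mul_eq_zero heq x (b i₁)
  rw [hdiag] at hfirst hsecond
  refine le_trans ?_
    (hl.sum_sum_esymmOn_erase_erase_mul_sq_le (hw.transpose_hessianIn b x) hfirst hsecond)
  refine le_of_eq_of_le ?_ (two_mul_sum_erase_le_sum_sum_erase (f := fun i j =>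
    esymmOn ((Finset.univ.erase i).erase j) m l * hessianIn b w x i j ^ 2) (fun i j => ?_)
    (fun i j hj => mul_nonneg ?_ (sq_nonneg _)) i₁)
  · simp only [hessianIn_apply, hw.dirDeriv_comm (b i₁)]
  · rw [Finset.erase_right_comm, hessianIn_apply, hw.dirDeriv_comm, hessianIn_apply]
  · exact ((hl.erase (Finset.mem_univ i)).esymmOn_erase_pos
      (Finset.mem_erase.2 ⟨hj, Finset.mem_univ j⟩)).le

lemma IsAdmissibleSolution.mul_pow_le_of_isLocalMax (hv : IsAdmissibleSolution (m + 1) A v)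
    (hA : 0 ≤ A) (hβ : 0 < β) (hβρ : 8 * β * ρ ^ 2 ≤ 1) (hx : ‖x‖ ≤ ρ) (hvx : v x < 1 / 2)
    (hC : ‖fderiv ℝ v x‖ ^ 2 ≤ C) (hdiag : hessianIn b v x = Matrix.diagonal l) {i₁ : Fin n}
    (hmax : ∀ j, l j ≤ l i₁) (hbig : 16 * (n + (m + 3) * A) ≤ l i₁)
    (hLζ : 1 ≤ l i₁ * (1 / 2 - v x))
    (hloc : IsLocalMax (fun x => ∂[b i₁] (∂[b i₁] v) x * (1 / 2 - v x) ^ (m + 6) *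
      Real.exp (β * ‖x‖ ^ 2)) x) :
    l i₁ * (1 / 2 - v x) ^ (m + 1) ≤
      (((m + 6) * (m + 2) + 48 * (m + 6) ^ 2 * C) / β) ^ (m + 1) := by
  obtain ⟨hl, hone, hlow⟩ := hv.esymmOn_of_hessianIn_eq_diagonal hdiag
  have hζ : 0 < 1 / 2 - v x := sub_pos.2 hvx
  have hentry (i : Fin n) : ∂[b i] (∂[b i] v) x = l i := by
    rw [dirDeriv_dirDeriv_of_hessianIn_eq_diagonal hdiag, if_pos rfl]
  have htests (i : Fin n) := ((hv.smooth.dirDeriv (b i₁)).dirDeriv (b i₁)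
    ).derivative_tests_of_isLocalMax_weighted hv.smooth (b.orthonormal.norm_eq_one i)
    (by rw [hentry]; exact pos_of_mul_pos_left (zero_lt_one.trans_le hLζ) hζ.le) hvx hloc
  simp only [hentry] at htests
  push_cast at htests
  refine hl.mul_pow_le_of_hessian_test (V := fun i => ∂[b i] v x) (y := fun i => ⟪x, b i⟫_ℝ)
    (X := fun i => ∂[b i] (∂[b i₁] (∂[b i₁] v)) x) hone hA hlow hmax
    (by rwa [Fintype.card_fin]) hLζ (by linarith [(Nat.cast_nonneg m : (0 : ℝ) ≤ m)]) hζ hβ hβρ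
    (fun i => ?_) ?_ (fun i => by linear_combination (htests i).1)
    (hv.two_mul_sum_esymmOn_mul_sq_le hdiag i₁) (Finset.sum_nonpos fun i _ =>
      mul_nonpos_of_nonneg_of_nonpos (hl.esymmOn_erase_pos (Finset.mem_univ i)).le (htests i).2)
  · rw [real_inner_comm]
    exact (sq_inner_le_sq_norm b i x).trans (pow_le_pow_left₀ (norm_nonneg x) hx 2)
  · rwa [← norm_fderiv_sq_eq_sum b]

lemma IsSmooth.dirDeriv_dirDeriv_self_le (hv : IsSmooth v)
    (hdiag : hessianIn b v x = Matrix.diagonal l) {M : ℝ} (hM : ∀ i, l i ≤ M)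
    (e : EuclideanSpace ℝ (Fin n)) : ∂[e] (∂[e] v) x ≤ M * ‖e‖ ^ 2 := by
  calc ∂[e] (∂[e] v) x = ∑ i, l i * ⟪b i, e⟫_ℝ ^ 2 := hv.dirDeriv_dirDeriv_self_eq_sum hdiag e
    _ ≤ ∑ i, M * ⟪b i, e⟫_ℝ ^ 2 := by gcongr with i; exact hM i
    _ = M * ‖e‖ ^ 2 := by rw [← Finset.mul_sum, b.sum_sq_inner_right]

lemma IsSmooth.continuous_dirDeriv_dirDeriv (hv : IsSmooth v) :
    Continuous fun z : EuclideanSpace ℝ (Fin n) × EuclideanSpace ℝ (Fin n) =>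
      ∂[z.2] (∂[z.2] v) z.1 := by
  simp only [hv.dirDeriv_dirDeriv]
  exact (((hv.contDiff_fderiv.continuous_fderiv (by simp)).comp continuous_fst).clm_apply
    continuous_snd).clm_apply continuous_snd

lemma mul_pow_le_of_trichotomy {L ζ B D : ℝ} (hζ : 0 ≤ ζ) (hζ2 : ζ ≤ 2) (hB : 0 ≤ B) (hD : 0 ≤ D)
    (h : B < L → 1 ≤ L * ζ → L * ζ ^ (m + 1) ≤ D) :
    L * ζ ^ (m + 6) ≤ B * 2 ^ (m + 6) + 2 ^ (m + 5) + D * 2 ^ 5 := by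
  have hpow (k : ℕ) : ζ ^ k ≤ 2 ^ k := pow_le_pow_left₀ hζ hζ2 k
  have hB' : 0 ≤ B * 2 ^ (m + 6) := by positivity
  have hD' : 0 ≤ D * 2 ^ 5 := by positivity
  have h2 : (0 : ℝ) ≤ 2 ^ (m + 5) := by positivity
  rcases le_or_gt L B with hL | hL
  · linarith [mul_le_mul hL (hpow (m + 6)) (by positivity) hB]
  rcases le_total (L * ζ) 1 with hLζ | hLζ
  · linarith [mul_le_mul hLζ (hpow (m + 5)) (by positivity) zero_le_one,
      show L * ζ ^ (m + 6) = L * ζ * ζ ^ (m + 5) by ring]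
  · linarith [mul_le_mul (h hL hLζ) (hpow 5) (by positivity) hD,
      show L * ζ ^ (m + 6) = L * ζ ^ (m + 1) * ζ ^ 5 by ring]

lemma norm_fderiv_sq_le_of_mul_le (hv : v x ≤ 1 / 2)
    (h : ‖fderiv ℝ v x‖ ^ 2 * (1 - v x) ^ m ≤ C) : ‖fderiv ℝ v x‖ ^ 2 ≤ C * 2 ^ m := by
  have hhalf : (1 / 2 : ℝ) ^ m ≤ (1 - v x) ^ m := pow_le_pow_left₀ (by norm_num) (by linarith) m
  have := (mul_le_mul_of_nonneg_left hhalf (sq_nonneg _)).trans h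
  rwa [one_div, inv_pow, ← div_eq_mul_inv, div_le_iff₀ (by positivity)] at this

/-- The quantity maximised in the Hessian estimate, as a function of a point and a direction. -/
def pogorelovWeight (β : ℝ) (N : ℕ) (v : EuclideanSpace ℝ (Fin n) → ℝ)
    (z : EuclideanSpace ℝ (Fin n) × EuclideanSpace ℝ (Fin n)) : ℝ :=
  ∂[z.2] (∂[z.2] v) z.1 * (1 / 2 - v z.1) ^ N * Real.exp (β * ‖z.1‖ ^ 2)

lemma IsSmooth.exists_pogorelovWeight_le (hv : IsSmooth v) (hbound : ∀ y, v y ≤ 1 → ‖y‖ ≤ ρ)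
    (β : ℝ) (N : ℕ) {y e : EuclideanSpace ℝ (Fin n)} (hy : v y ≤ 1 / 2) (he : ‖e‖ = 1) :
    ∃ x e₀, v x ≤ 1 / 2 ∧ ‖e₀‖ = 1 ∧ ∀ z d, v z ≤ 1 / 2 → ‖d‖ = 1 →
      pogorelovWeight β N v (z, d) ≤ pogorelovWeight β N v (x, e₀) := by
  have hcont : Continuous (pogorelovWeight β N v) := by
    have := hv.continuous
    have := hv.continuous_dirDeriv_dirDeriv
    unfold pogorelovWeight
    fun_prop
  have hcompact := (hv.isCompact_sublevel (c := 1 / 2) fun y hy => hbound y (by linarith)).prod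
    (isCompact_sphere (0 : EuclideanSpace ℝ (Fin n)) 1)
  obtain ⟨⟨x, e₀⟩, ⟨hx, he₀⟩, hmax⟩ :=
    hcompact.exists_isMaxOn ⟨(y, e), hy, by simpa using he⟩ hcont.continuousOn
  exact ⟨x, e₀, hx, by simpa using he₀, fun z d hz hd => hmax ⟨hz, by simpa using hd⟩⟩

lemma dirDeriv_dirDeriv_le_of_pogorelovWeight_le {N : ℕ} {y e : EuclideanSpace ℝ (Fin n)}
    (hβ : 0 ≤ β) (hC : 0 ≤ C) (hy : v y ≤ 1 / 4) (h : pogorelovWeight β N v (y, e) ≤ C) :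
    ∂[e] (∂[e] v) y ≤ C * 4 ^ N := by
  rcases le_or_gt (∂[e] (∂[e] v) y) 0 with h₀ | h₀
  · exact h₀.trans (by positivity)
  rw [← div_le_iff₀ (by positivity), div_eq_mul_inv, ← inv_pow]
  refine le_trans ?_ h
  calc ∂[e] (∂[e] v) y * 4⁻¹ ^ N ≤ ∂[e] (∂[e] v) y * (1 / 2 - v y) ^ N :=
        mul_le_mul_of_nonneg_left (pow_le_pow_left₀ (by norm_num) (by linarith) N) h₀.le
    _ ≤ pogorelovWeight β N v (y, e) := le_mul_of_one_le_right
        (mul_nonneg h₀.le (pow_nonneg (by linarith) N)) (Real.one_le_exp (by positivity))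

lemma IsAdmissibleSolution.pogorelovWeight_le (hv : IsAdmissibleSolution (m + 1) A v)
    (hA : 0 ≤ A) (hβ : 0 < β) (hβρ : 8 * β * ρ ^ 2 ≤ 1) (hlow : -1 ≤ v x)
    (hx : ‖x‖ ≤ ρ) (hvx : v x ≤ 1 / 2) (hC : ‖fderiv ℝ v x‖ ^ 2 ≤ C) {e : EuclideanSpace ℝ (Fin n)}
    (he : ‖e‖ = 1)
    (hmax : ∀ z d, v z ≤ 1 / 2 → ‖d‖ = 1 →
      pogorelovWeight β (m + 6) v (z, d) ≤ pogorelovWeight β (m + 6) v (x, e)) :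
    pogorelovWeight β (m + 6) v (x, e) ≤
      (16 * (n + (m + 3) * A) * 2 ^ (m + 6) + 2 ^ (m + 5) +
        (((m + 6) * (m + 2) + 48 * (m + 6) ^ 2 * C) / β) ^ (m + 1) * 2 ^ 5) *
          Real.exp (β * ρ ^ 2) := by
  obtain ⟨b, l, hdiag⟩ := hv.exists_hessianIn_eq_diagonal x
  have hn : Nonempty (Fin n) := by
    by_contra! hempty
    exact one_ne_zero (he.symm.trans (by simp [Subsingleton.elim e 0]))
  obtain ⟨i₁, hi₁⟩ := Finite.exists_max l
  have hζ : 0 ≤ 1 / 2 - v x := sub_nonneg.2 hvx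
  have hC₀ : 0 ≤ C := (sq_nonneg _).trans hC
  have hweight : pogorelovWeight β (m + 6) v (x, e) ≤
      l i₁ * (1 / 2 - v x) ^ (m + 6) * Real.exp (β * ‖x‖ ^ 2) := by
    unfold pogorelovWeight
    gcongr
    simpa [he] using hv.smooth.dirDeriv_dirDeriv_self_le hdiag hi₁ e
  refine hweight.trans (mul_le_mul (mul_pow_le_of_trichotomy hζ (by linarith) (by positivity)
    (by positivity) fun hbig hLζ => ?_) (Real.exp_le_exp.2 (by gcongr)) (Real.exp_pos _).le
    (by positivity))
  have hvx' : v x < 1 / 2 :=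
    sub_pos.1 (hζ.lt_of_ne fun h => by rw [← h, mul_zero] at hLζ; linarith)
  refine hv.mul_pow_le_of_isLocalMax hA hβ hβρ hx hvx' hC hdiag hi₁ hbig.le hLζ ?_
  filter_upwards [hv.smooth.continuous.continuousAt.eventually (gt_mem_nhds hvx')] with z hz
  rw [dirDeriv_dirDeriv_of_hessianIn_eq_diagonal hdiag, if_pos rfl]
  exact (hmax z (b i₁) hz.le (b.orthonormal.norm_eq_one i₁)).trans hweight

lemma exists_dirDeriv_dirDeriv_le (n m : ℕ) (hA : 0 ≤ A) (hρ : 1 ≤ ρ) :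
    ∃ C : ℝ, 0 < C ∧ ∀ v : EuclideanSpace ℝ (Fin n) → ℝ, IsAdmissibleSolution (m + 1) A v →
      (∀ y, -1 ≤ v y) → (∀ y, v y ≤ 1 → ‖y‖ ≤ ρ) →
      ∀ y, v y ≤ 1 / 4 → ∀ e : EuclideanSpace ℝ (Fin n), ‖e‖ = 1 → ∂[e] (∂[e] v) y ≤ C := by
  obtain ⟨Cg, hCg, hgrad⟩ := exists_norm_fderiv_sq_mul_le n m hA hρ
  set β : ℝ := 1 / (8 * ρ ^ 2) with hβ_def
  have hβρ : 8 * β * ρ ^ 2 ≤ 1 := by rw [hβ_def]; field_simp; exact le_rfl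
  refine ⟨(16 * (n + (m + 3) * A) * 2 ^ (m + 6) + 2 ^ (m + 5) +
    (((m + 6) * (m + 2) + 48 * (m + 6) ^ 2 * (Cg * 2 ^ (2 * (m + 1)))) / β) ^ (m + 1) * 2 ^ 5) *
      Real.exp (β * ρ ^ 2) * 4 ^ (m + 6), by positivity, ?_⟩
  intro v hv hlow hbound y hy e he
  obtain ⟨x, e₀, hx, he₀, hmax⟩ :=
    hv.smooth.exists_pogorelovWeight_le hbound β (m + 6) (y := y) (by linarith) he
  have hx1 : v x ≤ 1 := by linarith
  exact dirDeriv_dirDeriv_le_of_pogorelovWeight_le (by positivity) (by positivity) hy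
    ((hmax y e (by linarith) he).trans (hv.pogorelovWeight_le hA (by positivity) hβρ (hlow x)
      (hbound x hx1) hx (norm_fderiv_sq_le_of_mul_le hx (hgrad v hv hlow hbound x hx1)) he₀ hmax))

end HessianEstimate

/-! ### Global bounds on the Hessian -/

section Rescaling

variable {E : Type*} [NormedAddCommGroup E] [NormedSpace ℝ E] {u : E → ℝ}

lemma IsSmooth.comp_add_smul (hu : IsSmooth u) (x : E) (r : ℝ) :
    IsSmooth fun y => u (x + r • y) :=
  hu.comp (contDiff_const.add (contDiff_id.const_smul r))

lemma IsSmooth.dirDeriv_comp_add_smul (hu : IsSmooth u) (x : E) (r : ℝ) (e y : E) :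
    ∂[e] (fun y => u (x + r • y)) y = r * ∂[e] u (x + r • y) := by
  refine dirDeriv_eq_of_hasDerivAt_line (hu.comp_add_smul x r).differentiable ?_
  have hline := hasDerivAt_line hu.differentiable (x + r • y) (r • e) 0
  rw [dirDeriv_smul_dir, zero_smul, add_zero] at hline
  refine hline.congr_of_eventuallyEq (Filter.Eventually.of_forall fun t => ?_)
  simp only [smul_add, add_assoc, smul_comm r t]

/-- The rescaling `y ↦ r⁻² u(x + r y)`, which preserves second derivatives. -/
def quadraticRescale (u : E → ℝ) (x : E) (r : ℝ) : E → ℝ := fun y => u (x + r • y) / r ^ 2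

lemma IsSmooth.rescale (hu : IsSmooth u) (x : E) (r : ℝ) : IsSmooth (quadraticRescale u x r) :=
  (hu.comp_add_smul x r).div_const _

lemma IsSmooth.dirDeriv_dirDeriv_quadraticRescale (hu : IsSmooth u) (x : E) {r : ℝ} (hr : r ≠ 0)
    (e₁ e₂ y : E) :
    ∂[e₁] (∂[e₂] (quadraticRescale u x r)) y = ∂[e₁] (∂[e₂] u) (x + r • y) := by
  have hfirst : ∂[e₂] (quadraticRescale u x r) = fun y => r⁻¹ * ∂[e₂] u (x + r • y) := by
    have hmul : quadraticRescale u x r = fun y => (r ^ 2)⁻¹ * u (x + r • y) :=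
      funext fun y => div_eq_inv_mul _ _
    ext y
    rw [hmul, dirDeriv_const_mul (hu.comp_add_smul x r).differentiable,
      hu.dirDeriv_comp_add_smul]
    field_simp
  rw [hfirst, dirDeriv_const_mul ((hu.dirDeriv e₂).comp_add_smul x r).differentiable,
    (hu.dirDeriv e₂).dirDeriv_comp_add_smul, inv_mul_cancel_left₀ hr]

end Rescaling

section GlobalBounds

variable {n k m : ℕ} {A B C : ℝ} {u : EuclideanSpace ℝ (Fin n) → ℝ}

lemma IsAdmissibleSolution.rescale (hu : IsAdmissibleSolution k A u)
    (x : EuclideanSpace ℝ (Fin n)) {r : ℝ} (hr : r ≠ 0) :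
    IsAdmissibleSolution k A (quadraticRescale u x r) := by
  have hhess (y : EuclideanSpace ℝ (Fin n)) :
      hessianIn (EuclideanSpace.basisFun (Fin n) ℝ) (quadraticRescale u x r) y =
        hessianIn (EuclideanSpace.basisFun (Fin n) ℝ) u (x + r • y) := by
    ext i j
    simp only [hessianIn_apply, hu.smooth.dirDeriv_dirDeriv_quadraticRescale x hr]
  exact ⟨hu.smooth.rescale x r, fun y => by rw [hhess]; exact hu.pos _,
    fun y => by rw [hhess]; exact hu.eq_one _, fun y => by rw [hhess]; exact hu.neg_le _⟩

lemma norm_sq_le_quadraticRescale {E : Type*} [NormedAddCommGroup E] [NormedSpace ℝ E]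
    {u : E → ℝ} {r : ℝ} {x : E} (hB : 0 < B) (hgrowth : ∀ z, B⁻¹ * ‖z‖ ^ 2 - B ≤ u z)
    (hr : 1 ≤ r) (hxr : B⁻¹ * ‖x‖ ^ 2 + B ≤ r) (y : E) :
    B⁻¹ / 2 * ‖y‖ ^ 2 - 1 ≤ quadraticRescale u x r y := by
  have hnorm : r * ‖y‖ ≤ ‖x + r • y‖ + ‖x‖ := by
    simpa [norm_smul, abs_of_pos (zero_lt_one.trans_le hr)] using norm_sub_le (x + r • y) x
  have hnorm_sq : r ^ 2 * ‖y‖ ^ 2 / 2 - ‖x‖ ^ 2 ≤ ‖x + r • y‖ ^ 2 := by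
    have := pow_le_pow_left₀ (by positivity) hnorm 2
    nlinarith [sq_nonneg (‖x + r • y‖ - ‖x‖)]
  have hgrowth' := mul_le_mul_of_nonneg_left hnorm_sq (inv_pos.2 hB).le
  rw [quadraticRescale, le_div_iff₀ (by positivity)]
  nlinarith [hgrowth (x + r • y)]

lemma norm_le_of_inv_mul_norm_sq_le {E : Type*} [NormedAddCommGroup E] {y : E} (hB : 0 < B)
    (h : B⁻¹ / 2 * ‖y‖ ^ 2 ≤ 2) : ‖y‖ ≤ 4 * B + 1 := by
  have hsq : ‖y‖ ^ 2 ≤ 4 * B := by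
    have hdiv : B⁻¹ * ‖y‖ ^ 2 ≤ 4 := by linarith
    rw [inv_mul_le_iff₀ hB] at hdiv
    linarith
  nlinarith [sq_nonneg (‖y‖ - 1)]

lemma IsAdmissibleSolution.exists_dirDeriv_dirDeriv_le (hu : IsAdmissibleSolution (m + 1) A u)
    (hA : 0 ≤ A) (hgrowth : QuadraticGrowth u) :
    ∃ C : ℝ, 0 < C ∧ ∀ x, ∀ e : EuclideanSpace ℝ (Fin n), ‖e‖ = 1 → ∂[e] (∂[e] u) x ≤ C := by
  obtain ⟨B, hB, hgrowth⟩ := hgrowth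
  obtain ⟨C, hC, hest⟩ :=
    _root_.exists_dirDeriv_dirDeriv_le n m hA (le_max_left 1 (4 * B + 1))
  refine ⟨C, hC, fun x e he => ?_⟩
  set r : ℝ := B⁻¹ * ‖x‖ ^ 2 + B + 4 * |u x| + 1 with hr_def
  have hq : 0 ≤ B⁻¹ * ‖x‖ ^ 2 := by positivity
  have hr : 1 ≤ r := by linarith [abs_nonneg (u x)]
  have hr0 : r ≠ 0 := (zero_lt_one.trans_le hr).ne'
  have hlow := norm_sq_le_quadraticRescale (x := x) hB hgrowth hr (by linarith [abs_nonneg (u x)])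
  have hzero : quadraticRescale u x r 0 ≤ 1 / 4 := by
    rw [quadraticRescale, smul_zero, add_zero, div_le_iff₀ (by positivity)]
    nlinarith [le_abs_self (u x)]
  have := hest (quadraticRescale u x r) (hu.rescale x hr0)
    (fun y => le_trans (by linarith [(by positivity : 0 ≤ B⁻¹ / 2 * ‖y‖ ^ 2)]) (hlow y))
    (fun y hy => (norm_le_of_inv_mul_norm_sq_le hB (by linarith [hlow y])).trans
      (le_max_right _ _)) 0 hzero e he
  rwa [hu.smooth.dirDeriv_dirDeriv_quadraticRescale x hr0, smul_zero, add_zero] at this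

lemma abs_le_card_mul_of_le_of_sum_nonneg {ι : Type*} {s : Finset ι} {l : ι → ℝ}
    (hC : 0 ≤ C) (hle : ∀ i ∈ s, l i ≤ C) (hsum : 0 ≤ ∑ i ∈ s, l i) {i : ι} (hi : i ∈ s) :
    |l i| ≤ s.card * C := by
  classical
  have hcard : (1 : ℝ) ≤ s.card := by exact_mod_cast Finset.card_pos.2 ⟨i, hi⟩
  have hrest : ∑ j ∈ s.erase i, l j ≤ (s.card - 1) * C := by
    have := Finset.sum_le_card_nsmul (s.erase i) l C fun j hj => hle j (Finset.mem_of_mem_erase hj)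
    rwa [Finset.card_erase_of_mem hi, nsmul_eq_mul,
      Nat.cast_pred (Finset.card_pos.2 ⟨i, hi⟩)] at this
  rw [← Finset.add_sum_erase _ _ hi] at hsum
  exact abs_le.2 ⟨by linarith, (hle i hi).trans (le_mul_of_one_le_left hC hcard)⟩

lemma IsAdmissibleSolution.abs_eigenvalue_le_of_zero (hu : IsAdmissibleSolution 0 A u)
    (hA : 0 ≤ A) {x : EuclideanSpace ℝ (Fin n)}
    {b : OrthonormalBasis (Fin n) ℝ (EuclideanSpace ℝ (Fin n))}
    {l : Fin n → ℝ} (hdiag : hessianIn b u x = Matrix.diagonal l) (i : Fin n) :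
    |l i| ≤ 1 + 2 * A := by
  obtain ⟨-, hone, hlow⟩ := hu.esymmOn_of_hessianIn_eq_diagonal hdiag
  have hsq := sum_sq_mul_esymmOn_erase_le hone hlow
  rw [zero_add] at hone
  simp only [esymmOn_zero, mul_one, hone, Nat.cast_zero, zero_add] at hsq
  have hi := Finset.single_le_sum (f := fun j => l j ^ 2) (fun j _ => sq_nonneg _)
    (Finset.mem_univ i)
  refine abs_le_of_sq_le_sq ?_ (by linarith)
  nlinarith

/-- The eigenvalues of the Hessian of `u` are bounded by `M` in absolute value. They are read off
from the orthonormal bases in which the Hessian is diagonal. -/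
def HasHessianBound (u : EuclideanSpace ℝ (Fin n) → ℝ) (M : ℝ) : Prop :=
  ∀ x (b : OrthonormalBasis (Fin n) ℝ (EuclideanSpace ℝ (Fin n))) (l : Fin n → ℝ),
    hessianIn b u x = Matrix.diagonal l → ∀ i, |l i| ≤ M

lemma IsAdmissibleSolution.exists_hasHessianBound (hu : IsAdmissibleSolution k A u)
    (hA : 0 ≤ A) (hgrowth : QuadraticGrowth u) :
    ∃ M : ℝ, 1 ≤ M ∧ HasHessianBound u M := by
  rcases k with _ | m
  · exact ⟨1 + 2 * A, by linarith, fun x b l hdiag => hu.abs_eigenvalue_le_of_zero hA hdiag⟩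
  obtain ⟨C, hC, hle⟩ := hu.exists_dirDeriv_dirDeriv_le hA hgrowth
  refine ⟨n * C + 1, le_add_of_nonneg_left (by positivity), fun x b l hdiag i => ?_⟩
  have hpos := (hu.esymmOn_of_hessianIn_eq_diagonal hdiag).1 1 (by omega)
  rw [esymmOn_one] at hpos
  have hl (j : Fin n) : l j ≤ C := by
    simpa only [dirDeriv_dirDeriv_of_hessianIn_eq_diagonal hdiag, if_true] using
      hle x (b j) (b.orthonormal.norm_eq_one j)
  have := abs_le_card_mul_of_le_of_sum_nonneg hC.le (fun j _ => hl j) hpos.le (Finset.mem_univ i)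
  rw [Finset.card_fin] at this
  linarith

end GlobalBounds

/-! ### Divergence-free elliptic operators and the sliding paraboloid estimate -/

section Sliding

open Matrix MeasureTheory Metric
open scoped MatrixOrder Gradient

section MatrixOrder

variable {ι : Type*} [Fintype ι] {A B Z : Matrix ι ι ℝ}

lemma dotProduct_mulVec_le_of_le (h : A ≤ B) (ξ : ι → ℝ) : ξ ⬝ᵥ A *ᵥ ξ ≤ ξ ⬝ᵥ B *ᵥ ξ := by
  have hnonneg := (Matrix.le_iff.1 h).dotProduct_mulVec_nonneg ξ
  rw [star_trivial, sub_mulVec, dotProduct_sub] at hnonneg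
  linarith

lemma trace_mul_le_trace_mul_of_le (h : A ≤ B) (hZ : 0 ≤ Z) :
    (A * Z).trace ≤ (B * Z).trace := by
  classical
  obtain ⟨C, rfl⟩ := CStarAlgebra.nonneg_iff_eq_star_mul_self.mp hZ
  have hnonneg := ((Matrix.le_iff.1 h).mul_mul_conjTranspose_same C).trace_nonneg
  rw [trace_mul_comm, ← Matrix.mul_assoc, trace_mul_comm, sub_mul, trace_sub] at hnonneg
  exact sub_nonneg.1 hnonneg

lemma det_le_trace_pow_card [DecidableEq ι] (hZ : 0 ≤ Z) :
    Z.det ≤ Z.trace ^ Fintype.card ι := by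
  have hpsd := Matrix.nonneg_iff_posSemidef.1 hZ
  rw [hpsd.isHermitian.det_eq_prod_eigenvalues, hpsd.isHermitian.trace_eq_sum_eigenvalues,
    ← Finset.card_univ, ← Finset.prod_const]
  exact Finset.prod_le_prod (fun i _ => hpsd.eigenvalues_nonneg i) fun i hi =>
    Finset.single_le_sum (f := hpsd.isHermitian.eigenvalues)
      (fun j _ => hpsd.eigenvalues_nonneg j) hi

lemma isClosed_setOf_matrix_nonneg {ι : Type*} [Finite ι] :
    IsClosed {A : Matrix ι ι ℝ | 0 ≤ A} := by
  cases nonempty_fintype ι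
  simp only [Matrix.nonneg_iff_posSemidef, Matrix.posSemidef_iff_dotProduct_mulVec,
    Set.ofPred_and, Set.ofPred_forall]
  refine (isClosed_eq (by fun_prop) continuous_id).inter (isClosed_iInter fun ξ => ?_)
  exact isClosed_le continuous_const (by fun_prop)

end MatrixOrder

section Definitions

variable {E : Type*} [NormedAddCommGroup E] [NormedSpace ℝ E] {ι : Type*} [Fintype ι]
  [DecidableEq ι]

/-- Smooth coefficients of a uniformly elliptic operator `v ↦ tr (a D²v)`, in the coordinates
of the frame `b`. The columns of `a` are divergence free, so the operator is also `div (a ∇v)`. -/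
structure IsDivFreeElliptic (b : ι → E) (θ Θ : ℝ) (a : E → Matrix ι ι ℝ) : Prop where
  smooth : ∀ i j, IsSmooth fun x => a x i j
  lower : ∀ x, θ • 1 ≤ a x
  upper : ∀ x, a x ≤ Θ • 1
  div_eq_zero : ∀ x j, ∑ i, ∂[b i] (fun x => a x i j) x = 0

omit [DecidableEq ι] in
/-- A positive smooth supersolution of `tr (a D²v) = 0`. -/
structure IsPosSupersolution (b : ι → E) (a : E → Matrix ι ι ℝ) (v : E → ℝ) : Prop where
  smooth : IsSmooth v
  pos : ∀ x, 0 < v x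
  trace_nonpos : ∀ x, (a x * hessianIn b v x).trace ≤ 0

end Definitions

section LocalMin

variable {E : Type*} [NormedAddCommGroup E] [InnerProductSpace ℝ E] {v : E → ℝ} {x y : E} {c : ℝ}

lemma exists_isLocalMin_add_norm_sub_sq [FiniteDimensional ℝ E] (hv : Continuous v)
    (hpos : ∀ x, 0 < v x) {p : E} {r : ℝ} (hr : 0 < r) (hy : y ∈ ball p r) :
    ∃ x ∈ closedBall p (3 * r), v x ≤ 2 * v p ∧
      IsLocalMin (fun x => v x + v p / r ^ 2 / 2 * ‖x - y‖ ^ 2) x := by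
  have hp := hpos p
  have hmul : v p / r ^ 2 * r ^ 2 = v p := div_mul_cancel₀ _ (by positivity)
  have hcont : Continuous fun x => v x + v p / r ^ 2 / 2 * ‖x - y‖ ^ 2 := by fun_prop
  have hyp : dist p y < r := by rwa [dist_comm]
  have hpmem : p ∈ closedBall y (2 * r) := mem_closedBall.2 (by linarith)
  obtain ⟨x, -, hmin⟩ := (isCompact_closedBall y (2 * r)).exists_isMinOn ⟨p, hpmem⟩
    hcont.continuousOn
  have hmin_p := isMinOn_iff.1 hmin p hpmem
  have hpy : ‖p - y‖ ^ 2 ≤ r ^ 2 := by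
    rw [← dist_eq_norm]
    exact pow_le_pow_left₀ dist_nonneg hyp.le 2
  have hcpy := mul_le_mul_of_nonneg_left hpy (by positivity : 0 ≤ v p / r ^ 2)
  have hxy : dist x y < 2 * r := by
    by_contra! hge
    have hsq := pow_le_pow_left₀ (by positivity) hge 2
    rw [dist_eq_norm] at hsq
    have := mul_le_mul_of_nonneg_left hsq (by positivity : 0 ≤ v p / r ^ 2)
    nlinarith [hpos x]
  refine ⟨x, ?_, ?_, hmin.isLocalMin
    (Filter.mem_of_superset (isOpen_ball.mem_nhds hxy) ball_subset_closedBall)⟩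
  · have := dist_triangle x y p
    rw [mem_ball] at hy
    exact mem_closedBall.2 (by linarith)
  · have : 0 ≤ v p / r ^ 2 / 2 * ‖x - y‖ ^ 2 := by positivity
    linarith

lemma IsSmooth.derivative_tests_of_isLocalMin_add_norm_sub_sq (hv : IsSmooth v)
    (h : IsLocalMin (fun x => v x + c / 2 * ‖x - y‖ ^ 2) x) (e : E) :
    ∂[e] v x + c * ⟪x - y, e⟫_ℝ = 0 ∧ 0 ≤ ∂[e] (∂[e] v) x + c * ‖e‖ ^ 2 := by
  have hmax := isLocalMax_line h.neg e
  simp only [add_sub_right_comm] at hmax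
  have hfirst (t : ℝ) := ((hasDerivAt_line hv.differentiable x e t).add
    ((hasDerivAt_norm_sq_line (x - y) e t).const_mul (c / 2))).neg
  have hsecond := ((hasDerivAt_line (hv.dirDeriv e).differentiable x e 0).add
    ((hasDerivAt_inner_line (x - y) e 0).const_mul c)).neg
  have htest := second_deriv_nonpos_of_isLocalMax
    (.of_forall fun t => (hfirst t).congr_deriv
      (by rw [Pi.neg_apply, Pi.add_apply]; ring)) hsecond hmax
  have hcrit := hmax.hasDerivAt_eq_zero (hfirst 0)
  simp only [zero_smul, add_zero] at htest hcrit
  constructor <;> linarith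

end LocalMin

section GradientMap

variable {E : Type*} [NormedAddCommGroup E] [InnerProductSpace ℝ E] {ι : Type*} [Fintype ι]
  {v : E → ℝ} {p y : E} {r : ℝ}

lemma IsSmooth.dotProduct_hessianIn_mulVec (hv : IsSmooth v) (b : OrthonormalBasis ι ℝ E)
    (x e : E) :
    b.repr e ⬝ᵥ hessianIn b v x *ᵥ b.repr e = ∂[e] (∂[e] v) x := by
  rw [hv.dirDeriv_dirDeriv_eq_sum b]
  simp only [dotProduct, mulVec, Finset.mul_sum, b.repr_apply_apply]
  exact Finset.sum_congr rfl fun i _ => Finset.sum_congr rfl fun j _ => by ring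

lemma repr_dotProduct_repr (b : OrthonormalBasis ι ℝ E) (e : E) :
    b.repr e ⬝ᵥ b.repr e = ‖e‖ ^ 2 := by
  rw [← b.sum_sq_inner_right]
  simp only [dotProduct, b.repr_apply_apply, sq]

variable [DecidableEq ι]

lemma IsSmooth.posSemidef_one_add_smul_hessianIn (hv : IsSmooth v) (b : OrthonormalBasis ι ℝ E)
    {x : E} {c : ℝ} (h : ∀ e, 0 ≤ ‖e‖ ^ 2 + c * ∂[e] (∂[e] v) x) :
    0 ≤ 1 + c • hessianIn b v x := by
  refine Matrix.nonneg_iff_posSemidef.2 (.of_dotProduct_mulVec_nonneg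
    (isHermitian_one.add ((hv.isHermitian_hessianIn b x).smul (star_trivial c))) fun ξ => ?_)
  obtain ⟨e, rfl⟩ : ∃ e, ξ = b.repr e := ⟨b.repr.symm (WithLp.toLp 2 ξ), by simp⟩
  rw [star_trivial, add_mulVec, one_mulVec, smul_mulVec, dotProduct_add, dotProduct_smul,
    repr_dotProduct_repr, hv.dotProduct_hessianIn_mulVec, smul_eq_mul]
  exact h e

variable [FiniteDimensional ℝ E]

lemma exists_add_smul_gradient_eq (hv : IsSmooth v) (hpos : ∀ x, 0 < v x) (hr : 0 < r)
    (b : OrthonormalBasis ι ℝ E) (hy : y ∈ ball p r) :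
    ∃ x ∈ closedBall p (3 * r), v x ≤ 2 * v p ∧ x + (r ^ 2 / v p) • ∇ v x = y ∧
      0 ≤ 1 + (r ^ 2 / v p) • hessianIn b v x := by
  obtain ⟨x, hx, hvx, hmin⟩ := exists_isLocalMin_add_norm_sub_sq hv.continuous hpos hr hy
  have htests := hv.derivative_tests_of_isLocalMin_add_norm_sub_sq hmin
  have hp := hpos p
  have hmul : r ^ 2 / v p * (v p / r ^ 2) = 1 := by field_simp
  refine ⟨x, hx, hvx, ?_, hv.posSemidef_one_add_smul_hessianIn b fun e => ?_⟩
  · refine ext_inner_right ℝ fun e => ?_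
    have hgrad : ⟪∇ v x, e⟫_ℝ = ∂[e] v x := inner_gradient_left
    rw [inner_add_left, real_inner_smul_left, hgrad]
    have := congrArg (r ^ 2 / v p * ·) (htests e).1
    simp only [mul_add, ← mul_assoc, hmul, inner_sub_left] at this
    linarith
  · have := mul_nonneg (by positivity : 0 ≤ r ^ 2 / v p) (htests e).2
    rw [mul_add, ← mul_assoc, hmul] at this
    linarith

lemma IsSmooth.exists_hasFDerivAt_add_smul_gradient (hv : IsSmooth v) (b : OrthonormalBasis ι ℝ E)
    (c : ℝ) (x : E) :
    ∃ T : E →L[ℝ] E, HasFDerivAt (fun x => x + c • ∇ v x) T x ∧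
      T.det = (1 + c • hessianIn b v x).det := by
  set D : (E →L[ℝ] ℝ) →L[ℝ] E :=
    (InnerProductSpace.toDual ℝ E).symm.toContinuousLinearEquiv.toContinuousLinearMap
  have hgrad : HasFDerivAt (∇ v) (D ∘L fderiv ℝ (fderiv ℝ v) x) x :=
    D.hasFDerivAt.comp x (hv.contDiff_fderiv.differentiable (by simp) x).hasFDerivAt
  refine ⟨_, (hasFDerivAt_id x).add (hgrad.const_smul c), ?_⟩
  rw [ContinuousLinearMap.det, ← LinearMap.det_toMatrix b.toBasis]
  congr 1
  ext i j
  have hD (φ : E →L[ℝ] ℝ) (w : E) : ⟪w, D φ⟫_ℝ = φ w := by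
    rw [real_inner_comm]
    exact InnerProductSpace.toDual_symm_apply
  have hentry : ⟪b i, D (fderiv ℝ (fderiv ℝ v) x (b j))⟫_ℝ = hessianIn b v x i j := by
    rw [hD, hessianIn_apply, hv.dirDeriv_comm, hv.dirDeriv_dirDeriv]
  simp [LinearMap.toMatrix_apply, b.repr_apply_apply, hentry, one_apply]

variable {a : E → Matrix ι ι ℝ} {b : OrthonormalBasis ι ℝ E} {θ Θ : ℝ}

omit [FiniteDimensional ℝ E] in
lemma IsPosSupersolution.det_one_add_smul_hessianIn_le (hv : IsPosSupersolution b a v)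
    (ha : IsDivFreeElliptic b θ Θ a) (hθ : 0 < θ) {c : ℝ} (hc : 0 ≤ c) {x : E}
    (hpsd : 0 ≤ 1 + c • hessianIn b v x) :
    (1 + c • hessianIn b v x).det ≤ (Fintype.card ι * Θ / θ) ^ Fintype.card ι := by
  have hlower := trace_mul_le_trace_mul_of_le (ha.lower x) hpsd
  have hupper := trace_mul_le_trace_mul_of_le (ha.upper x) Matrix.PosSemidef.one.nonneg
  simp only [smul_mul_assoc, Matrix.one_mul, Matrix.mul_one, Matrix.trace_smul, smul_eq_mul,
    Matrix.trace_one] at hlower hupper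
  rw [Matrix.mul_add, Matrix.mul_one, Matrix.mul_smul, Matrix.trace_add (a x), Matrix.trace_smul,
    smul_eq_mul] at hlower
  have htrace : (1 + c • hessianIn b v x).trace ≤ Fintype.card ι * Θ / θ := by
    rw [le_div_iff₀ hθ]
    linarith [mul_nonpos_of_nonneg_of_nonpos hc (hv.trace_nonpos x)]
  exact (det_le_trace_pow_card hpsd).trans
    (pow_le_pow_left₀ (Matrix.nonneg_iff_posSemidef.1 hpsd).trace_nonneg htrace _)

-- The contact points of sliding paraboloids are mapped onto the ball by `x + (r² / v p) ∇v`,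
-- whose Jacobian is bounded there by the supersolution inequality.
lemma IsPosSupersolution.volume_ball_le_volume_sublevel [MeasurableSpace E] [BorelSpace E]
    (hv : IsPosSupersolution b a v) (ha : IsDivFreeElliptic b θ Θ a) (hθ : 0 < θ) (p : E)
    (hr : 0 < r) :
    volume (ball p r) ≤ ENNReal.ofReal ((Fintype.card ι * Θ / θ) ^ Fintype.card ι) *
      volume ({x | v x ≤ 2 * v p} ∩ closedBall p (3 * r)) := by
  set c := r ^ 2 / v p
  have hc : 0 ≤ c := div_nonneg (sq_nonneg r) (hv.pos p).le
  set S := {x | v x ≤ 2 * v p} ∩ closedBall p (3 * r) ∩ {x | 0 ≤ 1 + c • hessianIn b v x}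
  have hSclosed : IsClosed S := by
    refine ((isClosed_le hv.smooth.continuous continuous_const).inter isClosed_closedBall).inter
      (isClosed_setOf_matrix_nonneg.preimage (continuous_const.add (.const_smul ?_ c)))
    exact continuous_matrix fun i j => ((hv.smooth.dirDeriv (b j)).dirDeriv (b i)).continuous
  have hsub : ball p r ⊆ (fun x => x + c • ∇ v x) '' S := fun y hy => by
    obtain ⟨x, hx, hvx, hxy, hpsd⟩ := exists_add_smul_gradient_eq hv.smooth hv.pos hr b hy
    exact ⟨x, ⟨⟨hvx, hx⟩, hpsd⟩, hxy⟩
  choose T hT hTdet using hv.smooth.exists_hasFDerivAt_add_smul_gradient b c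
  have hdet (x : E) (hx : x ∈ S) :
      |(T x).det| ≤ (Fintype.card ι * Θ / θ) ^ Fintype.card ι := by
    rw [hTdet, abs_of_nonneg (Matrix.nonneg_iff_posSemidef.1 hx.2).det_nonneg]
    exact hv.det_one_add_smul_hessianIn_le ha hθ hc hx.2
  calc volume (ball p r) ≤ volume ((fun x => x + c • ∇ v x) '' S) := measure_mono hsub
    _ ≤ ∫⁻ x in S, ENNReal.ofReal |(T x).det| :=
        addHaar_image_le_lintegral_abs_det_fderiv volume hSclosed.measurableSet
          fun x _ => (hT x).hasFDerivWithinAt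
    _ ≤ ∫⁻ _ in S, ENNReal.ofReal ((Fintype.card ι * Θ / θ) ^ Fintype.card ι) :=
        setLIntegral_mono' hSclosed.measurableSet fun x hx => ENNReal.ofReal_le_ofReal (hdet x hx)
    _ = ENNReal.ofReal ((Fintype.card ι * Θ / θ) ^ Fintype.card ι) * volume S :=
        setLIntegral_const _ _
    _ ≤ _ := by gcongr; exact Set.inter_subset_left

end GradientMap

end Sliding

/-! ### The logarithm of a positive supersolution -/

section Caccioppoli

open Matrix MeasureTheory Metric
open scoped MatrixOrder

/-- The gradient of `f` in the coordinates of the frame `b`. -/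
def gradientIn {E ι : Type*} [NormedAddCommGroup E] [NormedSpace ℝ E] (b : ι → E) (f : E → ℝ)
    (x : E) : ι → ℝ :=
  fun i => ∂[b i] f x

section Log

variable {E : Type*} [NormedAddCommGroup E] [NormedSpace ℝ E] {ι : Type*} {v : E → ℝ}

lemma IsSmooth.dirDeriv_log (hv : IsSmooth v) (hpos : ∀ x, 0 < v x) (e : E) :
    ∂[e] (fun x => Real.log (v x)) = fun x => ∂[e] v x / v x := by
  ext x
  rw [_root_.dirDeriv, fderiv.log (hv.differentiable x) (hpos x).ne']
  exact (div_eq_inv_mul _ _).symm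

lemma IsSmooth.hessianIn_log (hv : IsSmooth v) (hpos : ∀ x, 0 < v x) (b : ι → E) (x : E) :
    hessianIn b (fun x => Real.log (v x)) x = (v x)⁻¹ • hessianIn b v x -
      vecMulVec (gradientIn b (fun x => Real.log (v x)) x)
        (gradientIn b (fun x => Real.log (v x)) x) := by
  ext i j
  have hderiv := ((hasDerivAt_line (hv.dirDeriv (b j)).differentiable x (b i) 0).div
    (hasDerivAt_line hv.differentiable x (b i) 0) (by simpa using (hpos x).ne'))
  have hdiff : Differentiable ℝ fun x => ∂[b j] v x / v x := by
    rw [← hv.dirDeriv_log hpos]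
    exact (IsSmooth.dirDeriv (hv.log fun x => (hpos x).ne') (b j)).differentiable
  simp only [hessianIn_apply, Matrix.sub_apply, Matrix.smul_apply, vecMulVec_apply, gradientIn,
    hv.dirDeriv_log hpos, smul_eq_mul]
  rw [dirDeriv_eq_of_hasDerivAt_line hdiff hderiv]
  have := (hpos x).ne'
  simp only [zero_smul, add_zero]
  field_simp

variable [Fintype ι] {b : ι → E} {a : E → Matrix ι ι ℝ}

lemma IsPosSupersolution.trace_mul_hessianIn_log_le (hv : IsPosSupersolution b a v) (x : E) :
    (a x * hessianIn b (fun x => Real.log (v x)) x).trace ≤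
      -(gradientIn b (fun x => Real.log (v x)) x ⬝ᵥ
        a x *ᵥ gradientIn b (fun x => Real.log (v x)) x) := by
  rw [hv.smooth.hessianIn_log hv.pos, Matrix.mul_sub, Matrix.mul_smul, trace_sub, trace_smul,
    mul_vecMulVec, trace_vecMulVec, dotProduct_comm, smul_eq_mul]
  linarith [mul_nonpos_of_nonneg_of_nonpos (inv_pos.2 (hv.pos x)).le (hv.trace_nonpos x)]

end Log

/-! ### The Caccioppoli inequality -/

section Divergence

variable {E : Type*} [NormedAddCommGroup E] [NormedSpace ℝ E] {ι : Type*} [Fintype ι]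
  [DecidableEq ι] {b : ι → E} {a : E → Matrix ι ι ℝ} {θ Θ : ℝ} {φ : E → ℝ}

lemma IsDivFreeElliptic.isSmooth_flux (ha : IsDivFreeElliptic b θ Θ a) (hφ : IsSmooth φ)
    (i : ι) :
    IsSmooth fun x => (a x *ᵥ gradientIn b φ x) i :=
  ContDiff.sum fun j _ => (ha.smooth i j).mul (hφ.dirDeriv (b j))

lemma IsDivFreeElliptic.sum_dirDeriv_flux (ha : IsDivFreeElliptic b θ Θ a) (hφ : IsSmooth φ)
    (x : E) :
    ∑ i, ∂[b i] (fun x => (a x *ᵥ gradientIn b φ x) i) x = (a x * hessianIn b φ x).trace := by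
  have hflux (i : ι) : ∂[b i] (fun x => (a x *ᵥ gradientIn b φ x) i) x =
      ∑ j, (∂[b i] (fun x => a x i j) x * ∂[b j] φ x + a x i j * ∂[b i] (∂[b j] φ) x) := by
    refine (dirDeriv_sum _ (fun j _ => ((ha.smooth i j).differentiable.fun_mul
      (hφ.dirDeriv (b j)).differentiable)) _ _).trans (Finset.sum_congr rfl fun j _ => ?_)
    exact dirDeriv_mul (ha.smooth i j).differentiable (hφ.dirDeriv (b j)).differentiable _ _
  have hdiv : ∑ i, ∑ j, ∂[b i] (fun x => a x i j) x * ∂[b j] φ x = 0 := by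
    rw [Finset.sum_comm]
    simp only [← Finset.sum_mul, ha.div_eq_zero x, zero_mul, Finset.sum_const_zero]
  simp only [hflux, Finset.sum_add_distrib, hdiv, zero_add, trace, diag_apply, mul_apply,
    hessianIn_apply]
  exact Finset.sum_congr rfl fun i _ => Finset.sum_congr rfl fun j _ => by
    rw [hφ.dirDeriv_comm]

omit [DecidableEq ι] in
lemma two_mul_dotProduct_mulVec_le {A : Matrix ι ι ℝ} (hA : 0 ≤ A) (ζ ξ : ι → ℝ) :
    2 * (ζ ⬝ᵥ A *ᵥ ξ) ≤ 1 / 2 * (ξ ⬝ᵥ A *ᵥ ξ) + 2 * (ζ ⬝ᵥ A *ᵥ ζ) := by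
  have hpsd := Matrix.nonneg_iff_posSemidef.1 hA
  have hnonneg := hpsd.dotProduct_mulVec_nonneg (ξ - (2 : ℝ) • ζ)
  have hsymm : ξ ⬝ᵥ A *ᵥ ζ = ζ ⬝ᵥ A *ᵥ ξ := by
    conv_lhs => rw [← hpsd.isHermitian.eq, conjTranspose_eq_transpose_of_trivial, mulVec_transpose,
      dotProduct_comm, ← dotProduct_mulVec]
  simp only [star_trivial, mulVec_sub, mulVec_smul, dotProduct_sub, sub_dotProduct,
    dotProduct_smul, smul_dotProduct, smul_eq_mul, hsymm] at hnonneg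
  linarith

end Divergence

lemma hasCompactSupport_sq_mul {X : Type*} [TopologicalSpace X] {η : X → ℝ}
    (hc : HasCompactSupport η) (g : X → ℝ) : HasCompactSupport fun x => η x ^ 2 * g x :=
  (hc.comp_left (g := fun t : ℝ => t ^ 2) (by simp)).mul_right

section Integral

variable {E : Type*} [NormedAddCommGroup E] [InnerProductSpace ℝ E]
  {ι : Type*} [Fintype ι] {η φ : E → ℝ}

lemma gradientIn_dotProduct_self (b : OrthonormalBasis ι ℝ E) (f : E → ℝ) (x : E) :
    gradientIn b f x ⬝ᵥ gradientIn b f x = ‖fderiv ℝ f x‖ ^ 2 := by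
  rw [norm_fderiv_sq_eq_sum b]
  simp only [dotProduct, gradientIn, sq]

variable [DecidableEq ι] {b : OrthonormalBasis ι ℝ E} {a : E → Matrix ι ι ℝ} {θ Θ : ℝ}

lemma IsDivFreeElliptic.sum_dirDeriv_sq_mul_flux_le (ha : IsDivFreeElliptic b θ Θ a)
    (hθ : 0 ≤ θ) (hφ : IsSmooth φ) (hη : IsSmooth η) {x : E}
    (hle : (a x * hessianIn b φ x).trace ≤ -(gradientIn b φ x ⬝ᵥ a x *ᵥ gradientIn b φ x)) :
    ∑ i, ∂[b i] (fun x => η x ^ 2 * (a x *ᵥ gradientIn b φ x) i) x ≤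
      2 * Θ * ‖fderiv ℝ η x‖ ^ 2 - θ / 2 * (η x ^ 2 * ‖fderiv ℝ φ x‖ ^ 2) := by
  have hdiv : ∑ i, ∂[b i] (fun x => η x ^ 2 * (a x *ᵥ gradientIn b φ x) i) x =
      2 * (gradientIn b η x ⬝ᵥ a x *ᵥ (η x • gradientIn b φ x)) +
        η x ^ 2 * (a x * hessianIn b φ x).trace := by
    rw [← ha.sum_dirDeriv_flux hφ, mulVec_smul, dotProduct_smul, dotProduct, smul_eq_mul,
      Finset.mul_sum, Finset.mul_sum, Finset.mul_sum, ← Finset.sum_add_distrib]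
    refine Finset.sum_congr rfl fun i _ => ?_
    simp only [sq]
    rw [dirDeriv_mul (hη.differentiable.fun_mul hη.differentiable)
      (ha.isSmooth_flux hφ i).differentiable, dirDeriv_mul hη.differentiable hη.differentiable,
      gradientIn]
    ring
  have hA : 0 ≤ a x := (Matrix.PosSemidef.one.smul hθ).nonneg.trans (ha.lower x)
  have hyoung := two_mul_dotProduct_mulVec_le hA (gradientIn b η x) (η x • gradientIn b φ x)
  have hupper := dotProduct_mulVec_le_of_le (ha.upper x) (gradientIn b η x)
  have hlower := dotProduct_mulVec_le_of_le (ha.lower x) (gradientIn b φ x)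
  rw [smul_mulVec, one_mulVec, dotProduct_smul, gradientIn_dotProduct_self, smul_eq_mul]
    at hupper hlower
  rw [mulVec_smul, smul_dotProduct, dotProduct_smul, dotProduct_smul] at hyoung
  simp only [smul_eq_mul] at hyoung
  rw [hdiv, mulVec_smul, dotProduct_smul, smul_eq_mul]
  nlinarith [mul_le_mul_of_nonneg_left hle (sq_nonneg (η x)),
    mul_le_mul_of_nonneg_left hlower (sq_nonneg (η x))]

variable [FiniteDimensional ℝ E] [MeasurableSpace E] [BorelSpace E]

lemma integrable_dirDeriv {f : E → ℝ} (hf : IsSmooth f)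
    (hc : HasCompactSupport f) (e : E) : Integrable (∂[e] f) :=
  (hf.dirDeriv e).continuous.integrable_of_hasCompactSupport (hc.fderiv_apply ℝ e)

lemma integral_dirDeriv_eq_zero {f : E → ℝ} (hf : IsSmooth f) (hc : HasCompactSupport f) (e : E) :
    ∫ x, ∂[e] f x = 0 := by
  have hparts := integral_mul_fderiv_eq_neg_fderiv_mul_of_integrable (μ := volume)
    (f := fun _ : E => (1 : ℝ)) (g := f) (v := e) (by simp)
    (by simpa only [one_mul] using! integrable_dirDeriv hf hc e)
    (by simpa using hf.continuous.integrable_of_hasCompactSupport hc)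
    (fun x _ => by simp) (fun x _ => hf.differentiable x)
  simpa [dirDeriv] using hparts

lemma integrable_sq_mul_norm_fderiv_sq (hη : IsSmooth η) (hc : HasCompactSupport η)
    (hφ : IsSmooth φ) : Integrable fun x => η x ^ 2 * ‖fderiv ℝ φ x‖ ^ 2 :=
  ((hη.continuous.pow 2).mul hφ.norm_fderiv_sq.continuous).integrable_of_hasCompactSupport
    (hasCompactSupport_sq_mul hc _)

lemma integrable_norm_fderiv_sq (hη : IsSmooth η) (hc : HasCompactSupport η) :
    Integrable fun x => ‖fderiv ℝ η x‖ ^ 2 :=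
  hη.norm_fderiv_sq.continuous.integrable_of_hasCompactSupport
    ((hc.fderiv ℝ).comp_left (g := fun T : E →L[ℝ] ℝ => ‖T‖ ^ 2) (by simp))

lemma IsDivFreeElliptic.integral_sq_mul_norm_fderiv_sq_le (ha : IsDivFreeElliptic b θ Θ a)
    (hθ : 0 ≤ θ) (hφ : IsSmooth φ) (hη : IsSmooth η) (hc : HasCompactSupport η)
    (hle : ∀ x, (a x * hessianIn b φ x).trace ≤
      -(gradientIn b φ x ⬝ᵥ a x *ᵥ gradientIn b φ x)) :
    θ / 2 * ∫ x, η x ^ 2 * ‖fderiv ℝ φ x‖ ^ 2 ≤ 2 * Θ * ∫ x, ‖fderiv ℝ η x‖ ^ 2 := by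
  have hsmooth (i : ι) : IsSmooth fun x => η x ^ 2 * (a x *ᵥ gradientIn b φ x) i :=
    (hη.pow 2).mul (ha.isSmooth_flux hφ i)
  have hsupp (i : ι) : HasCompactSupport fun x => η x ^ 2 * (a x *ᵥ gradientIn b φ x) i :=
    hasCompactSupport_sq_mul hc _
  have hint (i : ι) := integrable_dirDeriv (hsmooth i) (hsupp i) (b i)
  have hηφ := (integrable_sq_mul_norm_fderiv_sq hη hc hφ).const_mul (θ / 2)
  have hη' := (integrable_norm_fderiv_sq hη hc).const_mul (2 * Θ)
  have hmono := integral_mono (integrable_finsetSum Finset.univ fun i _ => hint i)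
    (hη'.sub hηφ) fun x => ha.sum_dirDeriv_sq_mul_flux_le hθ hφ hη (hle x)
  rw [integral_finsetSum _ fun i _ => hint i,
    Finset.sum_eq_zero fun i _ => integral_dirDeriv_eq_zero (hsmooth i) (hsupp i) (b i),
    integral_sub' hη' hηφ, integral_const_mul, integral_const_mul] at hmono
  linarith

omit [Fintype ι] [DecidableEq ι] [MeasurableSpace E] [BorelSpace E] in
variable (E) in
lemma exists_cutoff : ∃ B : ℝ, 0 < B ∧ ∀ (p : E) (r : ℝ), 0 < r → ∃ η : E → ℝ, IsSmooth η ∧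
    tsupport η ⊆ closedBall p (4 * r) ∧ (∀ x ∈ closedBall p (3 * r), η x = 1) ∧
    ∀ x, ‖fderiv ℝ η x‖ ^ 2 ≤ B / r ^ 2 := by
  let f : ContDiffBump (0 : E) := ⟨3, 4, by norm_num, by norm_num⟩
  have hf : IsSmooth (f : E → ℝ) := f.contDiff
  obtain ⟨B, hB⟩ := (f.hasCompactSupport.fderiv ℝ).exists_bound_of_continuous
    hf.contDiff_fderiv.continuous
  refine ⟨B ^ 2 + 1, by positivity, fun p r hr => ⟨fun x => f (r⁻¹ • (x - p)),
    hf.comp (contDiff_const.smul (contDiff_id.sub contDiff_const)), ?_, fun x hx => ?_,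
    fun x => ?_⟩⟩
  · refine closure_minimal (fun x hx => ?_) isClosed_closedBall
    have hlt : r⁻¹ • (x - p) ∈ ball 0 4 := f.support_eq.subset hx
    rw [mem_ball_zero_iff, norm_smul, norm_inv, Real.norm_of_nonneg hr.le,
      inv_mul_lt_iff₀ hr] at hlt
    rw [mem_closedBall, dist_eq_norm, mul_comm]
    exact hlt.le
  · refine f.one_of_mem_closedBall ?_
    rw [mem_closedBall, dist_eq_norm] at hx
    rwa [mem_closedBall_zero_iff, norm_smul, norm_inv, Real.norm_of_nonneg hr.le,
      inv_mul_le_iff₀ hr, mul_comm]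
  · rw [fderiv_comp_sub p (f := fun x => f (r⁻¹ • x)), fderiv_comp_smul, norm_smul, mul_pow,
      norm_inv, Real.norm_of_nonneg hr.le, inv_pow, ← div_eq_inv_mul]
    gcongr
    have := pow_le_pow_left₀ (norm_nonneg _) (hB (r⁻¹ • (x - p))) 2
    linarith

lemma exists_lintegral_norm_fderiv_log_sq_le (hθ : 0 < θ) (hΘ : 0 ≤ Θ) :
    ∃ C : ℝ, 0 ≤ C ∧ ∀ (a : E → Matrix ι ι ℝ) (v : E → ℝ), IsDivFreeElliptic b θ Θ a →
      IsPosSupersolution b a v → ∀ (p : E) (r : ℝ), 0 < r →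
      ∫⁻ x in closedBall p (3 * r), ENNReal.ofReal (‖fderiv ℝ (fun x => Real.log (v x)) x‖ ^ 2) ≤
        ENNReal.ofReal (C / r ^ 2) * volume (closedBall p (4 * r)) := by
  obtain ⟨B, hB, hcutoff⟩ := exists_cutoff E
  refine ⟨4 * Θ / θ * B, by positivity, fun a v ha hv p r hr => ?_⟩
  obtain ⟨η, hη, hsupp, hone, hgrad⟩ := hcutoff p r hr
  have hc : HasCompactSupport η := (isCompact_closedBall p (4 * r)).of_isClosed_subset
    (isClosed_tsupport η) hsupp
  set φ := fun x => Real.log (v x)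
  have hφ : IsSmooth φ := hv.smooth.log fun x => (hv.pos x).ne'
  have hcacc := ha.integral_sq_mul_norm_fderiv_sq_le hθ.le hφ hη hc hv.trace_mul_hessianIn_log_le
  have hzero (x : E) (hx : x ∉ closedBall p (4 * r)) : ‖fderiv ℝ η x‖ ^ 2 = 0 := by
    rw [Function.notMem_support.1 fun h => hx (hsupp (support_fderiv_subset ℝ h)), norm_zero,
      zero_pow two_ne_zero]
  calc ∫⁻ x in closedBall p (3 * r), ENNReal.ofReal (‖fderiv ℝ φ x‖ ^ 2)
      = ∫⁻ x in closedBall p (3 * r), ENNReal.ofReal (η x ^ 2 * ‖fderiv ℝ φ x‖ ^ 2) :=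
        setLIntegral_congr_fun isClosed_closedBall.measurableSet fun x hx => by
          simp only [hone x hx, one_pow, one_mul]
    _ ≤ ∫⁻ x, ENNReal.ofReal (η x ^ 2 * ‖fderiv ℝ φ x‖ ^ 2) := setLIntegral_le_lintegral _ _
    _ = ENNReal.ofReal (∫ x, η x ^ 2 * ‖fderiv ℝ φ x‖ ^ 2) :=
        (ofReal_integral_eq_lintegral_ofReal (integrable_sq_mul_norm_fderiv_sq hη hc hφ)
          (.of_forall fun x => by positivity)).symm
    _ ≤ ENNReal.ofReal (4 * Θ / θ * ∫ x, ‖fderiv ℝ η x‖ ^ 2) := by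
        refine ENNReal.ofReal_le_ofReal ?_
        rw [div_mul_eq_mul_div, le_div_iff₀ hθ]
        linarith
    _ = ENNReal.ofReal (4 * Θ / θ) * ∫⁻ x in closedBall p (4 * r),
          ENNReal.ofReal (‖fderiv ℝ η x‖ ^ 2) := by
        rw [← setIntegral_eq_integral_of_forall_compl_eq_zero hzero,
          ENNReal.ofReal_mul (by positivity), ofReal_integral_eq_lintegral_ofReal
            (integrable_norm_fderiv_sq hη hc).integrableOn (.of_forall fun x => sq_nonneg _)]
    _ ≤ ENNReal.ofReal (4 * Θ / θ) * ∫⁻ _ in closedBall p (4 * r),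
          ENNReal.ofReal (B / r ^ 2) := by
        gcongr with x
        exact hgrad x
    _ = ENNReal.ofReal (4 * Θ / θ * B / r ^ 2) * volume (closedBall p (4 * r)) := by
        rw [setLIntegral_const, ← mul_assoc, ← ENNReal.ofReal_mul (by positivity), mul_div_assoc']

end Integral

end Caccioppoli

/-! ### The Poincaré inequality on balls -/

section Density

open MeasureTheory Metric Matrix

section Poincare

lemma sq_intervalIntegral_le_intervalIntegral_sq {g : ℝ → ℝ} (hg : Continuous g) :
    (∫ t in (0 : ℝ)..1, g t) ^ 2 ≤ ∫ t in (0 : ℝ)..1, g t ^ 2 := by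
  set c := ∫ t in (0 : ℝ)..1, g t with hc
  have hvariance : 0 ≤ ∫ t in (0 : ℝ)..1, (g t - c) ^ 2 :=
    intervalIntegral.integral_nonneg zero_le_one fun t _ => sq_nonneg _
  have hexpand : ∫ t in (0 : ℝ)..1, (g t - c) ^ 2 = (∫ t in (0 : ℝ)..1, g t ^ 2) - c ^ 2 := by
    have hint (f : ℝ → ℝ) (hf : Continuous f) : IntervalIntegrable f volume 0 1 :=
      hf.intervalIntegrable _ _
    calc ∫ t in (0 : ℝ)..1, (g t - c) ^ 2
        = ∫ t in (0 : ℝ)..1, ((g t ^ 2 - 2 * c * g t) + c ^ 2) := by congr! 2; ring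
      _ = (∫ t in (0 : ℝ)..1, g t ^ 2) - 2 * c * c + c ^ 2 := by
        rw [intervalIntegral.integral_add (hint _ (by fun_prop)) (hint _ (by fun_prop)),
          intervalIntegral.integral_sub (hint _ (by fun_prop)) (hint _ (by fun_prop)),
          intervalIntegral.integral_const_mul, ← hc]
        simp
      _ = (∫ t in (0 : ℝ)..1, g t ^ 2) - c ^ 2 := by ring
  linarith

variable {E : Type*} [NormedAddCommGroup E] [NormedSpace ℝ E] {φ : E → ℝ}

lemma ofReal_sq_sub_le_lintegral_norm_fderiv_sq (hφ : ContDiff ℝ 1 φ) (x h : E) :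
    ENNReal.ofReal ((φ (x + h) - φ x) ^ 2) ≤ ENNReal.ofReal (‖h‖ ^ 2) *
      ∫⁻ t in Set.Ioc (0 : ℝ) 1, ENNReal.ofReal (‖fderiv ℝ φ (x + t • h)‖ ^ 2) := by
  have hfderiv : Continuous fun t : ℝ => fderiv ℝ φ (x + t • h) :=
    (hφ.continuous_fderiv one_ne_zero).comp (by fun_prop)
  have hnorm : Continuous fun t : ℝ => ‖fderiv ℝ φ (x + t • h)‖ ^ 2 := hfderiv.norm.pow 2
  have hderiv : Continuous fun t : ℝ => ∂[h] φ (x + t • h) := hfderiv.clm_apply continuous_const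
  have hFTC : ∫ t in (0 : ℝ)..1, ∂[h] φ (x + t • h) = φ (x + h) - φ x := by
    rw [intervalIntegral.integral_eq_sub_of_hasDerivAt
      (fun t _ => hasDerivAt_line (hφ.differentiable one_ne_zero) x h t)
      (hderiv.intervalIntegrable _ _)]
    simp
  have hle : (φ (x + h) - φ x) ^ 2 ≤
      ‖h‖ ^ 2 * ∫ t in (0 : ℝ)..1, ‖fderiv ℝ φ (x + t • h)‖ ^ 2 := by
    rw [← hFTC, ← intervalIntegral.integral_const_mul]
    refine (sq_intervalIntegral_le_intervalIntegral_sq hderiv).trans ?_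
    refine intervalIntegral.integral_mono_on zero_le_one ((hderiv.pow 2).intervalIntegrable _ _)
      ((continuous_const.mul hnorm).intervalIntegrable _ _) fun t _ => ?_
    rw [← mul_pow, mul_comm, ← sq_abs (∂[h] φ _)]
    exact pow_le_pow_left₀ (abs_nonneg _) ((fderiv ℝ φ (x + t • h)).le_opNorm h) 2
  rw [intervalIntegral.integral_of_le zero_le_one] at hle
  rw [← ofReal_integral_eq_lintegral_ofReal (hnorm.intervalIntegrable 0 1).1
    (.of_forall fun t => sq_nonneg _), ← ENNReal.ofReal_mul (sq_nonneg _)]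
  exact ENNReal.ofReal_le_ofReal hle

variable [MeasurableSpace E] [BorelSpace E]

lemma lintegral_lintegral_lintegral_add_smul [SecondCountableTopology E] (μ : Measure E)
    [SFinite μ] [μ.IsAddRightInvariant] {F : E → ENNReal} (hF : Measurable F) (s : Set E) :
    ∫⁻ x, ∫⁻ h in s, (∫⁻ t in Set.Ioc (0 : ℝ) 1, F (x + t • h)) ∂μ ∂μ = μ s * ∫⁻ x, F x ∂μ := by
  have hjoint : Measurable fun q : (E × E) × ℝ => F (q.1.1 + q.2 • q.1.2) :=
    hF.comp (Continuous.measurable (by fun_prop))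
  have hslice (h : E) : Measurable fun q : E × ℝ => F (q.1 + q.2 • h) :=
    hF.comp (Continuous.measurable (by fun_prop))
  calc ∫⁻ x, ∫⁻ h in s, (∫⁻ t in Set.Ioc (0 : ℝ) 1, F (x + t • h)) ∂μ ∂μ
      = ∫⁻ h in s, ∫⁻ x, (∫⁻ t in Set.Ioc (0 : ℝ) 1, F (x + t • h)) ∂μ ∂μ :=
        lintegral_lintegral_swap hjoint.lintegral_prod_right'.aemeasurable
    _ = ∫⁻ h in s, (∫⁻ t in Set.Ioc (0 : ℝ) 1, ∫⁻ x, F (x + t • h) ∂μ) ∂μ :=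
        lintegral_congr fun h => lintegral_lintegral_swap (hslice h).aemeasurable
    _ = μ s * ∫⁻ x, F x ∂μ := by
        simp [lintegral_add_right_eq_self, mul_comm]

variable (μ : Measure E) {p : E} {ρ : ℝ}

lemma setLIntegral_closedBall_sq_sub_le [μ.IsAddLeftInvariant] (hφ : ContDiff ℝ 1 φ) {x : E}
    (hx : x ∈ closedBall p ρ) :
    ∫⁻ y in closedBall p ρ, ENNReal.ofReal ((φ y - φ x) ^ 2) ∂μ ≤
      ENNReal.ofReal (4 * ρ ^ 2) * ∫⁻ h in closedBall (0 : E) (2 * ρ),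
        (∫⁻ t in Set.Ioc (0 : ℝ) 1, (closedBall p ρ).indicator
          (fun z => ENNReal.ofReal (‖fderiv ℝ φ z‖ ^ 2)) (x + t • h)) ∂μ := by
  rw [← lintegral_indicator measurableSet_closedBall, ← lintegral_add_left_eq_self _ x,
    ← lintegral_indicator measurableSet_closedBall,
    ← lintegral_const_mul' _ _ ENNReal.ofReal_ne_top]
  refine lintegral_mono fun h => ?_
  by_cases hy : x + h ∈ closedBall p ρ
  · have hh : ‖h‖ ≤ 2 * ρ := by
      have htri := dist_triangle_right (x + h) x p
      rw [dist_self_add_left] at htri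
      linarith [mem_closedBall.1 hx, mem_closedBall.1 hy]
    rw [Set.indicator_of_mem hy, Set.indicator_of_mem (mem_closedBall_zero_iff.2 hh)]
    refine (ofReal_sq_sub_le_lintegral_norm_fderiv_sq hφ x h).trans (mul_le_mul' ?_ ?_)
    · refine ENNReal.ofReal_le_ofReal ?_
      nlinarith [pow_le_pow_left₀ (norm_nonneg _) hh 2]
    · refine setLIntegral_mono' measurableSet_Ioc fun t ht => ?_
      rw [Set.indicator_of_mem
        ((convex_closedBall p ρ).add_smul_mem hx hy (Set.Ioc_subset_Icc_self ht))]
  · rw [Set.indicator_of_notMem hy]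
    exact zero_le

lemma setLIntegral_setLIntegral_sq_sub_le [SecondCountableTopology E] [SFinite μ]
    [μ.IsAddLeftInvariant] [μ.IsAddRightInvariant] (hφ : ContDiff ℝ 1 φ) (p : E) (ρ : ℝ) :
    ∫⁻ x in closedBall p ρ, ∫⁻ y in closedBall p ρ, ENNReal.ofReal ((φ y - φ x) ^ 2) ∂μ ∂μ ≤
      ENNReal.ofReal (4 * ρ ^ 2) * μ (closedBall (0 : E) (2 * ρ)) *
        ∫⁻ x in closedBall p ρ, ENNReal.ofReal (‖fderiv ℝ φ x‖ ^ 2) ∂μ := by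
  have hF : Measurable ((closedBall p ρ).indicator
      fun z => ENNReal.ofReal (‖fderiv ℝ φ z‖ ^ 2)) :=
    ((hφ.continuous_fderiv one_ne_zero).norm.pow 2).measurable.ennreal_ofReal.indicator
      measurableSet_closedBall
  refine (setLIntegral_mono' measurableSet_closedBall fun x hx =>
    setLIntegral_closedBall_sq_sub_le μ hφ hx).trans ((setLIntegral_le_lintegral _ _).trans ?_)
  rw [lintegral_const_mul' _ _ ENNReal.ofReal_ne_top,
    lintegral_lintegral_lintegral_add_smul μ hF, lintegral_indicator measurableSet_closedBall,
    mul_assoc]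

omit [NormedAddCommGroup E] [NormedSpace ℝ E] [BorelSpace E] in
lemma ofReal_mul_measure_mul_measure_le {c : ℝ} {B S T : Set E}
    (hS : MeasurableSet S) (hT : MeasurableSet T) (hSB : S ⊆ B) (hTB : T ⊆ B)
    (hc : ∀ x ∈ S, ∀ y ∈ T, c ≤ (φ y - φ x) ^ 2) :
    ENNReal.ofReal c * μ T * μ S ≤
      ∫⁻ x in B, ∫⁻ y in B, ENNReal.ofReal ((φ y - φ x) ^ 2) ∂μ ∂μ :=
  calc ENNReal.ofReal c * μ T * μ S
      = ∫⁻ _ in S, ∫⁻ _ in T, ENNReal.ofReal c ∂μ ∂μ := by simp only [setLIntegral_const]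
    _ ≤ ∫⁻ x in S, ∫⁻ y in T, ENNReal.ofReal ((φ y - φ x) ^ 2) ∂μ ∂μ :=
        setLIntegral_mono' hS fun x hx => setLIntegral_mono' hT fun y hy =>
          ENNReal.ofReal_le_ofReal (hc x hx y hy)
    _ ≤ ∫⁻ x in B, ∫⁻ y in B, ENNReal.ofReal ((φ y - φ x) ^ 2) ∂μ ∂μ :=
        (lintegral_mono fun x => lintegral_mono_set hTB).trans (lintegral_mono_set hSB)

lemma addHaar_closedBall_mul_eq [FiniteDimensional ℝ E] (μ : Measure E) [μ.IsAddHaarMeasure]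
    (p q : E) {r s : ℝ} (hr : 0 < r) (hs : 0 ≤ s) :
    μ (closedBall p (s * r)) = ENNReal.ofReal (s ^ Module.finrank ℝ E) * μ (ball q r) := by
  rw [Measure.addHaar_closedBall _ _ (by positivity), Measure.addHaar_ball_of_pos _ _ hr,
    ← mul_assoc, ← ENNReal.ofReal_mul (by positivity), mul_pow]

end Poincare

/-! ### Density of the superlevel sets of a supersolution -/

lemma hessianIn_add_const {E ι : Type*} [NormedAddCommGroup E] [NormedSpace ℝ E] (b : ι → E)
    (v : E → ℝ) (c : ℝ) : hessianIn b (fun x => v x + c) = hessianIn b v := by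
  have hdir (e : E) : ∂[e] (fun x => v x + c) = ∂[e] v := by
    ext x
    simp only [dirDeriv, fderiv_add_const]
  ext x i j
  rw [hessianIn_apply, hessianIn_apply, hdir]

variable {E : Type*} [NormedAddCommGroup E] [InnerProductSpace ℝ E] [FiniteDimensional ℝ E]
  [MeasurableSpace E] [BorelSpace E] {ι : Type*} [Fintype ι] [DecidableEq ι]
  {b : OrthonormalBasis ι ℝ E} {a : E → Matrix ι ι ℝ} {θ Θ : ℝ}

lemma exists_setLIntegral_setLIntegral_sq_log_sub_le (hθ : 0 < θ) (hΘ : 0 ≤ Θ) :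
    ∃ C : ℝ, 0 ≤ C ∧ ∀ (a : E → Matrix ι ι ℝ) (v : E → ℝ), IsDivFreeElliptic b θ Θ a →
      IsPosSupersolution b a v → ∀ (p : E) (r : ℝ), 0 < r →
      ∫⁻ x in closedBall p (3 * r), ∫⁻ y in closedBall p (3 * r),
        ENNReal.ofReal ((Real.log (v y) - Real.log (v x)) ^ 2) ≤
          ENNReal.ofReal C * (volume (ball p r) * volume (ball p r)) := by
  obtain ⟨C, hC, hgrad⟩ := exists_lintegral_norm_fderiv_log_sq_le (b := b) hθ hΘ
  set d := Module.finrank ℝ E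
  refine ⟨36 * C * 6 ^ d * 4 ^ d, by positivity, fun a v ha hv p r hr => ?_⟩
  have hlog : IsSmooth fun x => Real.log (v x) := hv.smooth.log fun x => (hv.pos x).ne'
  have hsix : volume (closedBall (0 : E) (2 * (3 * r))) =
      ENNReal.ofReal (6 ^ d) * volume (ball p r) := by
    rw [← mul_assoc, show (2 * 3 : ℝ) = 6 by norm_num]
    exact addHaar_closedBall_mul_eq volume 0 p hr (by norm_num)
  have hfour := addHaar_closedBall_mul_eq volume p p hr (show (0 : ℝ) ≤ 4 by norm_num)
  calc _ ≤ ENNReal.ofReal (4 * (3 * r) ^ 2) * volume (closedBall (0 : E) (2 * (3 * r))) *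
        ∫⁻ x in closedBall p (3 * r),
          ENNReal.ofReal (‖fderiv ℝ (fun x => Real.log (v x)) x‖ ^ 2) :=
        setLIntegral_setLIntegral_sq_sub_le volume (hlog.of_le (by simp)) p (3 * r)
    _ ≤ ENNReal.ofReal (4 * (3 * r) ^ 2) * (ENNReal.ofReal (6 ^ d) * volume (ball p r)) *
        (ENNReal.ofReal (C / r ^ 2) * (ENNReal.ofReal (4 ^ d) * volume (ball p r))) := by
        rw [hsix, ← hfour]
        gcongr
        exact hgrad a v ha hv p r hr
    _ = ENNReal.ofReal (4 * (3 * r) ^ 2) * ENNReal.ofReal (6 ^ d) * ENNReal.ofReal (C / r ^ 2) *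
        ENNReal.ofReal (4 ^ d) * (volume (ball p r) * volume (ball p r)) := by ring
    _ = _ := by
        rw [← ENNReal.ofReal_mul (by positivity), ← ENNReal.ofReal_mul (by positivity),
          ← ENNReal.ofReal_mul (by positivity)]
        congr 2
        field_simp
        ring

lemma exists_ofReal_sq_mul_volume_superlevel_le (hθ : 0 < θ) (hΘ : 0 ≤ Θ) :
    ∃ K : ℝ, 0 < K ∧ ∀ (a : E → Matrix ι ι ℝ) (v : E → ℝ), IsDivFreeElliptic b θ Θ a →
      IsPosSupersolution b a v → ∀ (p : E) (r Λ m : ℝ), 0 < r → 0 ≤ Λ →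
      2 * v p * Real.exp Λ ≤ m →
      ENNReal.ofReal (Λ ^ 2) * volume ({x | m ≤ v x} ∩ closedBall p (3 * r)) ≤
        ENNReal.ofReal K * volume (ball p r) := by
  obtain ⟨C, hC, hlog⟩ := exists_setLIntegral_setLIntegral_sq_log_sub_le (b := b) hθ hΘ
  set D := (Fintype.card ι * Θ / θ) ^ Fintype.card ι
  have hD : 0 ≤ D := by positivity
  refine ⟨D * C + 1, by positivity, fun a v ha hv p r Λ m hr hΛ hm => ?_⟩
  set S := {x | v x ≤ 2 * v p} ∩ closedBall p (3 * r)
  set T := {x | m ≤ v x} ∩ closedBall p (3 * r)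
  have hSmeas : MeasurableSet S :=
    (measurableSet_le hv.smooth.continuous.measurable measurable_const).inter
      measurableSet_closedBall
  have hTmeas : MeasurableSet T :=
    (measurableSet_le measurable_const hv.smooth.continuous.measurable).inter
      measurableSet_closedBall
  have hgap : ∀ x ∈ S, ∀ y ∈ T, Λ ^ 2 ≤ (Real.log (v y) - Real.log (v x)) ^ 2 := by
    refine fun x hx y hy => pow_le_pow_left₀ hΛ ?_ 2
    have hle := Real.log_le_log (mul_pos (hv.pos x) (Real.exp_pos Λ))
      ((mul_le_mul_of_nonneg_right hx.1 (Real.exp_pos Λ).le).trans (hm.trans hy.1))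
    rw [Real.log_mul (hv.pos x).ne' (Real.exp_pos Λ).ne', Real.log_exp] at hle
    linarith
  have hprod := (ofReal_mul_measure_mul_measure_le volume hSmeas hTmeas Set.inter_subset_right
    Set.inter_subset_right hgap).trans (hlog a v ha hv p r hr)
  have hball0 : volume (ball p r) ≠ 0 := (measure_ball_pos volume p hr).ne'
  rw [← ENNReal.mul_le_mul_iff_left hball0 measure_ball_lt_top.ne]
  calc ENNReal.ofReal (Λ ^ 2) * volume T * volume (ball p r)
      ≤ ENNReal.ofReal (Λ ^ 2) * volume T * (ENNReal.ofReal D * volume S) := by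
        gcongr
        exact hv.volume_ball_le_volume_sublevel ha hθ p hr
    _ = ENNReal.ofReal D * (ENNReal.ofReal (Λ ^ 2) * volume T * volume S) := by ring
    _ ≤ ENNReal.ofReal D * (ENNReal.ofReal C * (volume (ball p r) * volume (ball p r))) := by
        gcongr
    _ = ENNReal.ofReal (D * C) * volume (ball p r) * volume (ball p r) := by
        rw [ENNReal.ofReal_mul hD]
        ring
    _ ≤ ENNReal.ofReal (D * C + 1) * volume (ball p r) * volume (ball p r) := by
        gcongr
        linarith

lemma IsDivFreeElliptic.exists_volume_superlevel_le (ha : IsDivFreeElliptic b θ Θ a)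
    (hθ : 0 < θ) (hΘ : 0 ≤ Θ) {v : E → ℝ} (hv : IsSmooth v)
    (htr : ∀ x, (a x * hessianIn b v x).trace ≤ 0) (hinf : IsGLB (Set.range v) 0) {m δ : ℝ}
    (hm : 0 < m) (hδ : 0 < δ) :
    ∃ p, ∀ r, 0 < r → volume ({x | m ≤ v x} ∩ closedBall p (3 * r)) ≤
      ENNReal.ofReal δ * volume (ball p r) := by
  obtain ⟨K, hK, hdensity⟩ := exists_ofReal_sq_mul_volume_superlevel_le (b := b) hθ hΘ
  set Λ := √(K / δ)
  have hΛ : Λ ^ 2 = K / δ := Real.sq_sqrt (by positivity)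
  set ε := m / 4 * Real.exp (-Λ)
  have hε : 0 < ε := by positivity
  obtain ⟨_, ⟨p, rfl⟩, -, hp⟩ := hinf.exists_between hε
  have hnonneg (x : E) : 0 ≤ v x := hinf.1 ⟨x, rfl⟩
  have hsuper : IsPosSupersolution b a fun x => v x + ε :=
    ⟨hv.add contDiff_const, fun x => by linarith [hnonneg x],
      fun x => by simpa only [hessianIn_add_const] using htr x⟩
  refine ⟨p, fun r hr => ?_⟩
  have hlevel : 2 * (v p + ε) * Real.exp Λ ≤ m := by
    have hexp : ε * Real.exp Λ = m / 4 := by rw [mul_assoc, ← Real.exp_add]; simp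
    nlinarith [Real.exp_pos Λ]
  have hle := hdensity a _ ha hsuper p r Λ m hr (Real.sqrt_nonneg _) hlevel
  have hpos : ENNReal.ofReal (K / δ) ≠ 0 := by
    rw [Ne, ENNReal.ofReal_eq_zero, not_le]
    positivity
  rw [← ENNReal.mul_le_mul_iff_right hpos ENNReal.ofReal_ne_top, ← mul_assoc,
    ← ENNReal.ofReal_mul (by positivity), div_mul_cancel₀ _ hδ.ne', ← hΛ]
  refine (mul_le_mul_right (measure_mono ?_) _).trans hle
  exact Set.inter_subset_inter_left _ fun x (hx : m ≤ v x) =>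
    show m ≤ v x + ε by linarith

lemma IsDivFreeElliptic.exists_forall_lt_of_isGLB_zero (ha : IsDivFreeElliptic b θ Θ a)
    (hθ : 0 < θ) (hΘ : 0 ≤ Θ) {κ : Type*} [Finite κ] {v : κ → E → ℝ}
    (hv : ∀ k, IsSmooth (v k)) (htr : ∀ k x, (a x * hessianIn b (v k) x).trace ≤ 0)
    (hinf : ∀ k, IsGLB (Set.range (v k)) 0) {m : ℝ} (hm : 0 < m) :
    ∃ x, ∀ k, v k x < m := by
  cases nonempty_fintype κ
  set δ : ℝ := 1 / (Fintype.card κ + 1) with hδ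
  choose p hp using fun k =>
    ha.exists_volume_superlevel_le hθ hΘ (hv k) (htr k) (hinf k) hm (show 0 < δ by positivity)
  set r : ℝ := 1 + ∑ k, ‖p k‖
  have hr : 0 < r := by positivity
  have hpr (k : κ) : ‖p k‖ ≤ r := by
    linarith [Finset.single_le_sum (fun k _ => norm_nonneg (p k)) (Finset.mem_univ k)]
  by_contra! hcover
  have hsubset : ball (0 : E) r ⊆ ⋃ k, {x | m ≤ v k x} ∩ closedBall (p k) (3 * r) := by
    intro x hx
    obtain ⟨k, hk⟩ := hcover x
    refine Set.mem_iUnion.2 ⟨k, hk, ?_⟩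
    rw [mem_closedBall, dist_eq_norm]
    linarith [norm_sub_le x (p k), hpr k, mem_ball_zero_iff.1 hx]
  have hle : volume (ball (0 : E) r) ≤
      ENNReal.ofReal (Fintype.card κ * δ) * volume (ball (0 : E) r) :=
    calc volume (ball (0 : E) r)
        ≤ ∑ k, volume ({x | m ≤ v k x} ∩ closedBall (p k) (3 * r)) :=
          (measure_mono hsubset).trans (measure_iUnion_fintype_le _ _)
      _ ≤ ∑ _ : κ, ENNReal.ofReal δ * volume (ball (0 : E) r) :=
          Finset.sum_le_sum fun k _ => by
            rw [← Measure.addHaar_ball_center volume (p k)]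
            exact hp k r hr
      _ = ENNReal.ofReal (Fintype.card κ * δ) * volume (ball (0 : E) r) := by
          rw [Finset.sum_const, nsmul_eq_mul, ENNReal.ofReal_mul (by positivity),
            Finset.card_univ, mul_assoc, ENNReal.ofReal_natCast]
  have hlt : ENNReal.ofReal (Fintype.card κ * δ) < 1 := by
    rw [ENNReal.ofReal_lt_one, hδ, mul_one_div, div_lt_one (by positivity)]
    linarith
  refine hle.not_gt ?_
  simpa only [one_mul] using (ENNReal.mul_lt_mul_iff_left
    (measure_ball_pos volume (0 : E) hr).ne' measure_ball_lt_top.ne).2 hlt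

end Density

/-! ### The linearized operator -/

section LinearizedOperator

open Matrix
open scoped MatrixOrder

section Conjugation

variable {ι : Type*} {l : ι → ℝ} {c : ℝ} {R : Matrix ι ι ℝ}

lemma conj_le_conj [Fintype ι] {B C : Matrix ι ι ℝ} (h : B ≤ C) (R : Matrix ι ι ℝ) :
    R * B * Rᵀ ≤ R * C * Rᵀ := by
  classical
  simpa only [star_eq_conjTranspose, conjTranspose_eq_transpose_of_trivial] using
    star_right_conjugate_le_conjugate h R

lemma diagonal_le_diagonal_of_le [DecidableEq ι] {m : ι → ℝ} (h : ∀ i, l i ≤ m i) :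
    diagonal l ≤ diagonal m := by
  rw [Matrix.le_iff, diagonal_sub]
  exact PosSemidef.diagonal fun i => sub_nonneg.2 (h i)

variable [Fintype ι] [DecidableEq ι]

lemma conj_diagonal_const (hR : Rᵀ * R = 1) (c : ℝ) : R * diagonal (fun _ => c) * Rᵀ = c • 1 := by
  rw [← smul_one_eq_diagonal, Matrix.mul_smul, Matrix.smul_mul, conj_one hR]

lemma conj_diagonal_le_smul_one (hR : Rᵀ * R = 1) (h : ∀ i, l i ≤ c) :
    R * diagonal l * Rᵀ ≤ c • 1 := by
  rw [← conj_diagonal_const hR]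
  exact conj_le_conj (diagonal_le_diagonal_of_le h) R

lemma smul_one_le_conj_diagonal (hR : Rᵀ * R = 1) (h : ∀ i, c ≤ l i) :
    c • 1 ≤ R * diagonal l * Rᵀ := by
  rw [← conj_diagonal_const hR]
  exact conj_le_conj (diagonal_le_diagonal_of_le h) R

end Conjugation

lemma abs_esymmOn_le {ι : Type*} {s : Finset ι} {l : ι → ℝ} {M : ℝ} (h : ∀ i ∈ s, |l i| ≤ M)
    (hM : 0 ≤ M) (k : ℕ) : |esymmOn s k l| ≤ (1 + M) ^ s.card := by
  classical
  induction s using Finset.induction_on generalizing k with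
  | empty =>
    rcases k.eq_zero_or_pos with rfl | hk
    · simp
    · simp [esymmOn_eq_zero (Finset.card_empty.trans_lt hk)]
  | insert a s ha ih =>
    have hs := ih fun i hi => h i (Finset.mem_insert_of_mem hi)
    cases k with
    | zero =>
      rw [esymmOn_zero, abs_one]
      exact one_le_pow₀ (by linarith)
    | succ k =>
      rw [esymmOn_insert_succ ha, Finset.card_insert_of_notMem ha, pow_succ]
      calc |esymmOn s (k + 1) l + l a * esymmOn s k l|
          ≤ |esymmOn s (k + 1) l| + |l a| * |esymmOn s k l| := by
            rw [← abs_mul]; exact abs_add_le _ _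
        _ ≤ (1 + M) ^ s.card + M * (1 + M) ^ s.card :=
            add_le_add (hs _) (mul_le_mul (h a (Finset.mem_insert_self a s)) (hs _)
              (abs_nonneg _) hM)
        _ = (1 + M) ^ s.card * (1 + M) := by ring

lemma IsSmooth.newtonTensor_apply {E ι : Type*} [NormedAddCommGroup E] [NormedSpace ℝ E]
    [Fintype ι] [DecidableEq ι] {H : E → Matrix ι ι ℝ} (hH : ∀ i j, IsSmooth fun x => H x i j)
    (k : ℕ) (i j : ι) : IsSmooth fun x => newtonTensor k (H x) i j := by
  induction k generalizing i j with
  | zero => exact contDiff_const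
  | succ k ih =>
    have hmul (i j : ι) : IsSmooth fun x => (newtonTensor k (H x) * H x) i j := by
      simp only [mul_apply]
      exact ContDiff.sum fun l _ => (ih i l).mul (hH l j)
    simp only [newtonTensor_succ, matrixEsymm_succ, trace, diag, Matrix.sub_apply,
      Matrix.smul_apply, smul_eq_mul]
    exact (((ContDiff.sum fun l _ => hmul l l).div_const _).mul contDiff_const).sub (hmul i j)

lemma IsSmooth.sum_dirDeriv_newtonTensor_hessianIn_eq_zero {E ι : Type*} [NormedAddCommGroup E]
    [NormedSpace ℝ E] [Fintype ι] [DecidableEq ι] {f : E → ℝ} (hf : IsSmooth f) (b : ι → E)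
    (k : ℕ) (x : E) (j : ι) :
    ∑ i, ∂[b i] (fun x => newtonTensor k (hessianIn b f x) i j) x = 0 := by
  have hsmooth := IsSmooth.newtonTensor_apply (H := hessianIn b f)
    (fun i j => (hf.dirDeriv (b j)).dirDeriv (b i)) k
  have hderiv (i : ι) : ∂[b i] (fun x => newtonTensor k (hessianIn b f x) i j) x =
      newtonTensorDeriv k (hessianIn b f x) (hessianIn b (∂[b i] f) x) i j := by
    refine dirDeriv_eq_of_hasDerivAt_line (hsmooth i j).differentiable ?_
    simpa only [zero_smul, add_zero] using
      hasDerivAt_newtonTensor k (fun p q => hf.hasDerivAt_hessianIn_line b x (b i) 0 p q) i j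
  simp only [hderiv]
  refine sum_newtonTensorDeriv_apply_eq_zero k (hf.isHermitian_hessianIn b x) (fun p q r => ?_) j
  rw [hessianIn_apply, hessianIn_apply, hf.dirDeriv_comm (b r) (b p),
    (hf.dirDeriv _).dirDeriv_comm (b q) (b p)]

lemma IsSmooth.newtonTensor_hessianIn_eq_conj_diagonal {E ι : Type*} [NormedAddCommGroup E]
    [InnerProductSpace ℝ E] [Fintype ι] [DecidableEq ι] {f : E → ℝ} (hf : IsSmooth f)
    (b : OrthonormalBasis ι ℝ E) {b' : OrthonormalBasis ι ℝ E} {x : E} {l : ι → ℝ}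
    (hdiag : hessianIn b' f x = diagonal l) (k : ℕ) :
    newtonTensor k (hessianIn b f x) = frameChange b b' *
      diagonal (fun i => esymmOn (Finset.univ.erase i) k l) * (frameChange b b')ᵀ := by
  rw [hf.hessianIn_eq_conj b b', newtonTensor_conj (transpose_frameChange_mul_self b b'), hdiag,
    newtonTensor_diagonal]

variable {n k : ℕ} {A M : ℝ} {u : EuclideanSpace ℝ (Fin n) → ℝ}

lemma IsAdmissibleSolution.isDivFreeElliptic (hu : IsAdmissibleSolution k A u) (hM : 0 < M)
    (hbound : HasHessianBound u M)
    (b : OrthonormalBasis (Fin n) ℝ (EuclideanSpace ℝ (Fin n))) :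
    IsDivFreeElliptic b (1 / ((n + 1) * M)) ((1 + M) ^ n)
      fun x => newtonTensor k (hessianIn b u x) := by
  refine ⟨IsSmooth.newtonTensor_apply (fun i j => (hu.smooth.dirDeriv (b j)).dirDeriv (b i)) k,
    fun x => ?_, fun x => ?_, hu.smooth.sum_dirDeriv_newtonTensor_hessianIn_eq_zero b k⟩
  · obtain ⟨b', l, hdiag⟩ := hu.exists_hessianIn_eq_diagonal x
    obtain ⟨hpos, hone, -⟩ := hu.esymmOn_of_hessianIn_eq_diagonal hdiag
    rw [hu.smooth.newtonTensor_hessianIn_eq_conj_diagonal b hdiag]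
    refine smul_one_le_conj_diagonal (transpose_frameChange_mul_self b b') fun i => ?_
    simpa only [Finset.card_fin] using hpos.le_esymmOn_erase hone hM
      (fun j _ => (le_abs_self _).trans (hbound x b' l hdiag j)) (Finset.mem_univ i)
  · obtain ⟨b', l, hdiag⟩ := hu.exists_hessianIn_eq_diagonal x
    rw [hu.smooth.newtonTensor_hessianIn_eq_conj_diagonal b hdiag]
    refine conj_diagonal_le_smul_one (transpose_frameChange_mul_self b b') fun i => ?_
    calc esymmOn (Finset.univ.erase i) k l ≤ (1 + M) ^ (Finset.univ.erase i).card :=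
          (le_abs_self _).trans (abs_esymmOn_le (fun j _ => hbound x b' l hdiag j) hM.le k)
      _ ≤ (1 + M) ^ n := pow_le_pow_right₀ (by linarith) (card_finset_fin_le _)

-- The equation is concave, so its second derivative in the direction `e` leaves a sign.
lemma IsAdmissibleSolution.trace_newtonTensor_mul_hessianIn_dirDeriv_dirDeriv_nonneg
    (hu : IsAdmissibleSolution k A u)
    (b : OrthonormalBasis (Fin n) ℝ (EuclideanSpace ℝ (Fin n))) (e x : EuclideanSpace ℝ (Fin n)) :
    0 ≤ (newtonTensor k (hessianIn b u x) * hessianIn b (∂[e] (∂[e] u)) x).trace := by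
  obtain ⟨b', l, hdiag⟩ := hu.exists_hessianIn_eq_diagonal x
  have hpos := (hu.esymmOn_of_hessianIn_eq_diagonal hdiag).1
  have hR := transpose_frameChange_mul_self b b'
  rw [hu.smooth.hessianIn_eq_conj b b', ((hu.smooth.dirDeriv e).dirDeriv e).hessianIn_eq_conj b b',
    newtonTensor_conj hR, conj_mul_conj hR, trace_conj hR]
  have hfirst := hu.smooth.trace_newtonTensor_mul_hessianIn_dirDeriv_eq_zero
    (hu.matrixEsymm_hessianIn_eq_one b') x e
  have hsecond := hu.smooth.trace_newtonTensorDeriv_mul_add_trace_newtonTensor_mul_eq_zero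
    (hu.matrixEsymm_hessianIn_eq_one b') x e
  rcases k with _ | m
  · rw [newtonTensorDeriv_zero, zero_mul, trace_zero, zero_add] at hsecond
    exact hsecond.ge
  rw [hdiag] at hfirst hsecond ⊢
  have hconcave := hpos.sum_sum_esymmOn_erase_erase_mul_sq_le
    ((hu.smooth.dirDeriv e).transpose_hessianIn b' x) hfirst hsecond
  rw [newtonTensor_diagonal]
  simp only [trace, diag, diagonal_mul]
  refine le_trans (Finset.sum_nonneg fun i _ => Finset.sum_nonneg fun j hj => ?_) hconcave
  exact mul_nonneg ((hpos.erase (Finset.mem_univ i)).esymmOn_erase_pos hj).le (sq_nonneg _)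

end LinearizedOperator

/-! ### Strict monotonicity of the equation -/

section MatrixCone

open Matrix
open scoped MatrixOrder

variable {ι : Type*} [Fintype ι] [DecidableEq ι] {k : ℕ} {H Q : Matrix ι ι ℝ}

omit [Fintype ι] [DecidableEq ι] in
lemma isHermitian_add_smul_vecMulVec_self (hH : H.IsHermitian) (t : ℝ) (v : ι → ℝ) :
    (H + t • vecMulVec v v).IsHermitian := by
  refine hH.add ?_
  rw [IsHermitian, conjTranspose_smul, conjTranspose_vecMulVec]
  simp only [star_trivial]

lemma vecMul_newtonTensorDeriv_vecMulVec_self (hH : H.IsHermitian) (k : ℕ) (v : ι → ℝ) :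
    v ᵥ* newtonTensorDeriv k H (vecMulVec v v) = 0 := by
  induction k with
  | zero => rw [newtonTensorDeriv_zero, vecMul_zero]
  | succ k ih =>
    rw [newtonTensorDeriv_succ, matrixEsymmDeriv_eq_trace hH, vecMul_sub, vecMul_add, vecMul_smul,
      vecMul_one, ← vecMul_vecMul, ih, zero_vecMul, zero_add, mul_vecMulVec, trace_vecMulVec,
      vecMul_vecMulVec, dotProduct_comm, sub_self]

omit [Fintype ι] [DecidableEq ι] in
lemma hasDerivAt_add_smul_apply (H X : Matrix ι ι ℝ) (t : ℝ) (i j : ι) :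
    HasDerivAt (fun t : ℝ => (H + t • X) i j) (X i j) t := by
  simpa using ((hasDerivAt_id t).mul_const (X i j)).const_add (H i j)

lemma dotProduct_newtonTensor_add_smul_vecMulVec_self (hH : H.IsHermitian) (k : ℕ) (v : ι → ℝ)
    (t : ℝ) :
    v ⬝ᵥ newtonTensor k (H + t • vecMulVec v v) *ᵥ v = v ⬝ᵥ newtonTensor k H *ᵥ v := by
  have hderiv (t : ℝ) :
      HasDerivAt (fun t => v ⬝ᵥ newtonTensor k (H + t • vecMulVec v v) *ᵥ v) 0 t := by
    have hentries := hasDerivAt_newtonTensor k fun i j =>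
      hasDerivAt_add_smul_apply H (vecMulVec v v) t i j
    have hsum : HasDerivAt (fun t => v ⬝ᵥ newtonTensor k (H + t • vecMulVec v v) *ᵥ v)
        (v ⬝ᵥ newtonTensorDeriv k (H + t • vecMulVec v v) (vecMulVec v v) *ᵥ v) t :=
      HasDerivAt.fun_sum fun i _ => (HasDerivAt.fun_sum fun j _ =>
        (hentries i j).mul_const (v j)).const_mul (v i)
    rwa [dotProduct_mulVec, vecMul_newtonTensorDeriv_vecMulVec_self
      (isHermitian_add_smul_vecMulVec_self hH t v), zero_dotProduct] at hsum
  simpa using is_const_of_deriv_eq_zero (fun t => (hderiv t).differentiableAt)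
    (fun t => (hderiv t).deriv) t 0

lemma matrixEsymm_add_smul_vecMulVec_self (hH : H.IsHermitian) (k : ℕ) (v : ι → ℝ) (t : ℝ) :
    matrixEsymm (k + 1) (H + t • vecMulVec v v) =
      matrixEsymm (k + 1) H + t * (v ⬝ᵥ newtonTensor k H *ᵥ v) := by
  set c := v ⬝ᵥ newtonTensor k H *ᵥ v
  have hderiv (t : ℝ) :
      HasDerivAt (fun t => matrixEsymm (k + 1) (H + t • vecMulVec v v) - t * c) 0 t := by
    have hesymm := hasDerivAt_matrixEsymm (k + 1) fun i j =>
      hasDerivAt_add_smul_apply H (vecMulVec v v) t i j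
    rw [matrixEsymmDeriv_eq_trace (isHermitian_add_smul_vecMulVec_self hH t v), mul_vecMulVec,
      trace_vecMulVec, dotProduct_comm, dotProduct_newtonTensor_add_smul_vecMulVec_self hH]
      at hesymm
    exact (hesymm.fun_sub (hasDerivAt_mul_const c)).congr_deriv (sub_self c)
  have hconst := is_const_of_deriv_eq_zero (fun t => (hderiv t).differentiableAt)
    (fun t => (hderiv t).deriv) t 0
  simp only [zero_smul, add_zero, zero_mul, sub_zero] at hconst
  linarith

/-- The Gårding cone `Γ_k` of symmetric matrices. -/
structure IsGardingMatrix (k : ℕ) (H : Matrix ι ι ℝ) : Prop where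
  isHermitian : H.IsHermitian
  pos : ∀ j ≤ k, 0 < matrixEsymm j H

lemma IsGardingMatrix.posDef_newtonTensor (h : IsGardingMatrix (k + 1) H) {j : ℕ} (hj : j ≤ k) :
    (newtonTensor j H).PosDef := by
  obtain ⟨R, hR, hH⟩ := exists_orthogonal_eq_conj_diagonal h.isHermitian
  have hcone : GardingPos Finset.univ (k + 1) h.isHermitian.eigenvalues := fun j hj => by
    rw [← matrixEsymm_eq_esymmOn_eigenvalues]
    exact h.pos j hj
  rw [hH, newtonTensor_conj hR, newtonTensor_diagonal, ← conjTranspose_eq_transpose_of_trivial,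
    ← star_eq_conjTranspose, (IsUnit.of_mul_eq_one_right Rᵀ hR).posDef_star_right_conjugate_iff]
  exact posDef_diagonal_iff.2 fun i => hcone.erase (Finset.mem_univ i) j hj

lemma IsGardingMatrix.matrixEsymm_le_add_vecMulVec_self (h : IsGardingMatrix (k + 1) H) {j : ℕ}
    (hj : j ≤ k) (v : ι → ℝ) : matrixEsymm (j + 1) H ≤ matrixEsymm (j + 1) (H + vecMulVec v v) := by
  have hnonneg := (h.posDef_newtonTensor hj).posSemidef.dotProduct_mulVec_nonneg v
  have hadd := matrixEsymm_add_smul_vecMulVec_self h.isHermitian j v 1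
  rw [one_smul, one_mul] at hadd
  rw [star_trivial] at hnonneg
  linarith

lemma IsGardingMatrix.matrixEsymm_lt_add_vecMulVec_self (h : IsGardingMatrix (k + 1) H)
    {v : ι → ℝ} (hv : v ≠ 0) :
    matrixEsymm (k + 1) H < matrixEsymm (k + 1) (H + vecMulVec v v) := by
  have hpos := (h.posDef_newtonTensor le_rfl).dotProduct_mulVec_pos hv
  have hadd := matrixEsymm_add_smul_vecMulVec_self h.isHermitian k v 1
  rw [one_smul, one_mul] at hadd
  rw [star_trivial] at hpos
  linarith

lemma IsGardingMatrix.add_vecMulVec_self (h : IsGardingMatrix (k + 1) H) (v : ι → ℝ) :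
    IsGardingMatrix (k + 1) (H + vecMulVec v v) := by
  refine ⟨by simpa only [one_smul] using isHermitian_add_smul_vecMulVec_self h.isHermitian 1 v,
    fun j hj => ?_⟩
  rcases j with _ | j
  · exact one_pos
  · exact (h.pos (j + 1) hj).trans_le (h.matrixEsymm_le_add_vecMulVec_self (by omega) v)

lemma IsGardingMatrix.matrixEsymm_le_add_sum_vecMulVec_self {κ : Type*}
    (h : IsGardingMatrix (k + 1) H) (w : κ → ι → ℝ) (s : Finset κ) :
    matrixEsymm (k + 1) H ≤ matrixEsymm (k + 1) (H + ∑ i ∈ s, vecMulVec (w i) (w i)) := by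
  classical
  induction s using Finset.induction_on generalizing H with
  | empty => rw [Finset.sum_empty, add_zero]
  | insert a s ha ih =>
    rw [Finset.sum_insert ha, ← add_assoc]
    exact (h.matrixEsymm_le_add_vecMulVec_self le_rfl (w a)).trans (ih (h.add_vecMulVec_self (w a)))

omit [DecidableEq ι] in
lemma exists_eq_sum_vecMulVec_self_of_nonneg (hH : 0 ≤ H) :
    ∃ w : ι → ι → ℝ, H = ∑ i, vecMulVec (w i) (w i) := by
  classical
  obtain ⟨C, rfl⟩ := CStarAlgebra.nonneg_iff_eq_star_mul_self.mp hH
  refine ⟨C, ?_⟩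
  ext i j
  simp only [mul_apply, Matrix.sum_apply, vecMulVec_apply, star_apply, star_trivial]

lemma IsGardingMatrix.matrixEsymm_lt_of_lt (h : IsGardingMatrix (k + 1) H) (hlt : H < Q) :
    matrixEsymm (k + 1) H < matrixEsymm (k + 1) Q := by
  obtain ⟨w, hw⟩ := exists_eq_sum_vecMulVec_self_of_nonneg (sub_nonneg.2 hlt.le)
  obtain ⟨i, hi⟩ : ∃ i, w i ≠ 0 := by
    by_contra! hzero
    simp only [hzero, vecMulVec_zero, Finset.sum_const_zero] at hw
    exact hlt.ne (sub_eq_zero.1 hw).symm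
  have hQ : Q = H + vecMulVec (w i) (w i) +
      ∑ j ∈ Finset.univ.erase i, vecMulVec (w j) (w j) := by
    rw [add_assoc, Finset.add_sum_erase _ (fun j => vecMulVec (w j) (w j)) (Finset.mem_univ i),
      ← hw, add_sub_cancel]
  rw [hQ]
  exact (h.matrixEsymm_lt_add_vecMulVec_self hi).trans_le
    ((h.add_vecMulVec_self (w i)).matrixEsymm_le_add_sum_vecMulVec_self w _)

end MatrixCone

section Continuity

variable {ι : Type*} [Fintype ι] [DecidableEq ι]

lemma continuous_newtonTensor (k : ℕ) :
    Continuous (newtonTensor k : Matrix ι ι ℝ → Matrix ι ι ℝ) := by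
  induction k with
  | zero => exact continuous_const
  | succ k ih =>
    have hmul := ih.matrix_mul continuous_id
    exact ((hmul.matrix_trace.div_const _).smul continuous_const).sub hmul

lemma continuous_matrixEsymm (k : ℕ) : Continuous (matrixEsymm k : Matrix ι ι ℝ → ℝ) := by
  rcases k with _ | k
  · exact continuous_const
  · exact ((continuous_newtonTensor k).matrix_mul continuous_id).matrix_trace.div_const _

end Continuity

/-! ### The limiting Hessian -/

section LimitHessian

open Filter Matrix
open scoped MatrixOrder

lemma IsSmooth.dirDeriv_dirDeriv_add_self {E : Type*} [NormedAddCommGroup E] [NormedSpace ℝ E]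
    {f : E → ℝ} (hf : IsSmooth f) (v w x : E) :
    ∂[v + w] (∂[v + w] f) x = ∂[v] (∂[v] f) x + 2 * ∂[v] (∂[w] f) x + ∂[w] (∂[w] f) x := by
  have hsymm := congrFun (hf.dirDeriv_comm v w) x
  simp only [hf.dirDeriv_dirDeriv, map_add, _root_.add_apply] at hsymm ⊢
  linarith

lemma hessianIn_const_sub {E ι : Type*} [NormedAddCommGroup E] [NormedSpace ℝ E] (b : ι → E)
    (f : E → ℝ) (c : ℝ) (x : E) : hessianIn b (fun x => c - f x) x = -hessianIn b f x := by
  have hdir (e : E) : ∂[e] (fun x => c - f x) = fun x => -∂[e] f x := by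
    ext x
    simp only [dirDeriv, fderiv_const_sub, _root_.neg_apply]
  ext i j
  rw [hessianIn_apply, hdir, Matrix.neg_apply, hessianIn_apply, dirDeriv, fderiv_fun_neg]
  rfl

variable {n k : ℕ} {A M : ℝ} {u : EuclideanSpace ℝ (Fin n) → ℝ}

lemma IsAdmissibleSolution.bddAbove_range_dirDeriv_dirDeriv (hu : IsAdmissibleSolution k A u)
    (hbound : HasHessianBound u M) (e : EuclideanSpace ℝ (Fin n)) :
    BddAbove (Set.range (∂[e] (∂[e] u))) := by
  refine ⟨M * ‖e‖ ^ 2, ?_⟩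
  rintro _ ⟨x, rfl⟩
  obtain ⟨b, l, hdiag⟩ := hu.exists_hessianIn_eq_diagonal x
  exact hu.smooth.dirDeriv_dirDeriv_self_le hdiag
    (fun i => (le_abs_self _).trans (hbound x b l hdiag i)) e

lemma IsAdmissibleSolution.exists_tendsto_iSup_dirDeriv_dirDeriv
    (hu : IsAdmissibleSolution k A u) (hM : 0 < M) (hbound : HasHessianBound u M) :
    ∃ z : Finset (EuclideanSpace ℝ (Fin n)) × ℕ → EuclideanSpace ℝ (Fin n),
      ∀ e, Tendsto (fun p => ∂[e] (∂[e] u) (z p)) atTop (𝓝 (⨆ x, ∂[e] (∂[e] u) x)) := by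
  have hbdd := hu.bddAbove_range_dirDeriv_dirDeriv hbound
  have hsmooth (e : EuclideanSpace ℝ (Fin n)) : IsSmooth (∂[e] (∂[e] u)) :=
    (hu.smooth.dirDeriv e).dirDeriv e
  have hnear (p : Finset (EuclideanSpace ℝ (Fin n)) × ℕ) :
      ∃ x, ∀ e : p.1, (⨆ y, ∂[e.1] (∂[e.1] u) y) - ∂[e.1] (∂[e.1] u) x < 1 / ((p.2 : ℝ) + 1) := by
    refine (hu.isDivFreeElliptic hM hbound
      (EuclideanSpace.basisFun (Fin n) ℝ)).exists_forall_lt_of_isGLB_zero (κ := p.1)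
      (v := fun e x => (⨆ y, ∂[e.1] (∂[e.1] u) y) - ∂[e.1] (∂[e.1] u) x) (by positivity)
      (by positivity) (fun e => contDiff_const.sub (hsmooth e)) (fun e x => ?_)
      (fun e => ⟨?_, fun c hc => ?_⟩) (by positivity)
    · rw [hessianIn_const_sub, mul_neg, trace_neg, neg_nonpos]
      exact hu.trace_newtonTensor_mul_hessianIn_dirDeriv_dirDeriv_nonneg _ e.1 x
    · rintro _ ⟨x, rfl⟩
      exact sub_nonneg.2 (le_ciSup (hbdd e) x)
    · have hsup : ⨆ y, ∂[e.1] (∂[e.1] u) y ≤ (⨆ y, ∂[e.1] (∂[e.1] u) y) - c :=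
        ciSup_le fun x => le_sub_comm.1 (hc ⟨x, rfl⟩)
      linarith
  choose z hz using hnear
  refine ⟨z, fun e => ?_⟩
  have hlim : Tendsto (fun p : Finset (EuclideanSpace ℝ (Fin n)) × ℕ =>
      (⨆ y, ∂[e] (∂[e] u) y) - 1 / ((p.2 : ℝ) + 1)) atTop (𝓝 ((⨆ y, ∂[e] (∂[e] u) y) - 0)) := by
    rw [← prod_atTop_atTop_eq]
    exact tendsto_const_nhds.sub (tendsto_one_div_add_atTop_nhds_zero_nat.comp tendsto_snd)
  rw [sub_zero] at hlim
  refine tendsto_of_tendsto_of_tendsto_of_le_of_le' hlim tendsto_const_nhds ?_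
    (.of_forall fun p => le_ciSup (hbdd e) (z p))
  filter_upwards [eventually_ge_atTop (({e} : Finset (EuclideanSpace ℝ (Fin n))), 0)] with p hp
  linarith [hz p ⟨e, Finset.singleton_subset_iff.1 hp.1⟩]

/-- `Q` is the limit of the Hessians along points at which all pure second derivatives approach
their suprema. -/
lemma IsAdmissibleSolution.exists_forall_hessianIn_le (hu : IsAdmissibleSolution k A u)
    (hM : 0 < M) (hbound : HasHessianBound u M)
    (b : OrthonormalBasis (Fin n) ℝ (EuclideanSpace ℝ (Fin n))) :
    ∃ Q, matrixEsymm (k + 1) Q = 1 ∧ ∀ x, hessianIn b u x ≤ Q := by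
  classical
  obtain ⟨z, hz⟩ := hu.exists_tendsto_iSup_dirDeriv_dirDeriv hM hbound
  set S : EuclideanSpace ℝ (Fin n) → ℝ := fun e => ⨆ x, ∂[e] (∂[e] u) x
  set Q : Matrix (Fin n) (Fin n) ℝ :=
    of fun i j => (S (b i + b j) - S (b i) - S (b j)) / 2 with hQ
  have hlim : Tendsto (fun p => hessianIn b u (z p)) atTop (𝓝 Q) := by
    refine tendsto_pi_nhds.2 fun i => tendsto_pi_nhds.2 fun j => ?_
    refine ((((hz (b i + b j)).sub (hz (b i))).sub (hz (b j))).div_const 2).congr fun p => ?_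
    rw [hu.smooth.dirDeriv_dirDeriv_add_self, hessianIn_apply]
    ring
  have hquad (e : EuclideanSpace ℝ (Fin n)) : b.repr e ⬝ᵥ Q *ᵥ b.repr e = S e := by
    have hcont : Continuous fun H : Matrix (Fin n) (Fin n) ℝ => b.repr e ⬝ᵥ H *ᵥ b.repr e := by
      fun_prop
    refine tendsto_nhds_unique ((hcont.tendsto Q).comp hlim) ((hz e).congr fun p => ?_)
    exact (hu.smooth.dotProduct_hessianIn_mulVec b (z p) e).symm
  have hQsymm : Q.IsHermitian := by
    ext i j
    simp only [hQ, conjTranspose_apply, of_apply, star_trivial, add_comm (b i)]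
    ring
  refine ⟨Q, tendsto_nhds_unique (((continuous_matrixEsymm (k + 1)).tendsto Q).comp hlim) ?_,
    fun x => ?_⟩
  · simp [Function.comp_def, hu.matrixEsymm_hessianIn_eq_one b]
  · refine Matrix.le_iff.2 (PosSemidef.of_dotProduct_mulVec_nonneg
      (hQsymm.sub (hu.smooth.isHermitian_hessianIn b x)) fun ξ => ?_)
    obtain ⟨e, he⟩ := b.repr.surjective (WithLp.toLp 2 ξ)
    obtain rfl : (b.repr e : Fin n → ℝ) = ξ := by rw [he]
    rw [star_trivial, sub_mulVec, dotProduct_sub, hquad, hu.smooth.dotProduct_hessianIn_mulVec,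
      sub_nonneg]
    exact le_ciSup (hu.bddAbove_range_dirDeriv_dirDeriv hbound e) x

end LimitHessian

section Conclusion

open Matrix
open scoped MatrixOrder

lemma IsSmooth.apply_add_eq_of_dirDeriv_dirDeriv_eq {E : Type*} [NormedAddCommGroup E]
    [NormedSpace ℝ E] {f : E → ℝ} (hf : IsSmooth f) {e : E} {c : ℝ}
    (hc : ∀ y, ∂[e] (∂[e] f) y = c) (x : E) : f (x + e) = f x + ∂[e] f x + c / 2 := by
  have hfirst (t : ℝ) : ∂[e] f (x + t • e) = ∂[e] f x + t * c := by
    have hderiv (t : ℝ) : HasDerivAt (fun t : ℝ => ∂[e] f (x + t • e) - t * c) 0 t :=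
      ((hasDerivAt_line (hf.dirDeriv e).differentiable x e t).fun_sub
        (hasDerivAt_mul_const c)).congr_deriv (by rw [hc, sub_self])
    have hconst := is_const_of_deriv_eq_zero (fun t => (hderiv t).differentiableAt)
      (fun t => (hderiv t).deriv) t 0
    simp only [zero_smul, add_zero, zero_mul, sub_zero] at hconst
    linarith
  have hderiv (t : ℝ) :
      HasDerivAt (fun t : ℝ => f (x + t • e) - (t * ∂[e] f x + t ^ 2 * (c / 2))) 0 t :=
    ((hasDerivAt_line hf.differentiable x e t).fun_sub ((hasDerivAt_mul_const (∂[e] f x)).fun_add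
      ((hasDerivAt_pow 2 t).mul_const (c / 2)))).congr_deriv (by rw [hfirst]; push_cast; ring)
  have hconst := is_const_of_deriv_eq_zero (fun t => (hderiv t).differentiableAt)
    (fun t => (hderiv t).deriv) 1 0
  simp only [one_smul, zero_smul, add_zero] at hconst
  linarith

variable {n k : ℕ} {A : ℝ} {u : EuclideanSpace ℝ (Fin n) → ℝ}

lemma IsSmooth.isQuadraticPolynomial_of_hessianIn_eq (hu : IsSmooth u)
    {Q : Matrix (Fin n) (Fin n) ℝ}
    (hQ : ∀ x, hessianIn (EuclideanSpace.basisFun (Fin n) ℝ) u x = Q) :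
    IsQuadraticPolynomial u := by
  set b := EuclideanSpace.basisFun (Fin n) ℝ
  have hinner (i : Fin n) (x : EuclideanSpace ℝ (Fin n)) : ⟪b i, x⟫_ℝ = x i := by
    simp [b, EuclideanSpace.inner_single_left]
  refine ⟨Q, fun i => ∂[b i] u 0, u 0, by rw [← hQ 0]; exact hu.transpose_hessianIn b 0,
    fun x => ?_⟩
  have hsecond (y : EuclideanSpace ℝ (Fin n)) :
      ∂[x] (∂[x] u) y = ∑ i, ∑ j, Q i j * x i * x j := by
    rw [hu.dirDeriv_dirDeriv_eq_sum b, hQ]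
    refine Finset.sum_congr rfl fun i _ => Finset.sum_congr rfl fun j _ => ?_
    rw [hinner, hinner]
    ring
  have hfirst : ∂[x] u 0 = ∑ i, ∂[b i] u 0 * x i := by
    rw [dirDeriv_eq_sum b]
    exact Finset.sum_congr rfl fun i _ => by rw [hinner, mul_comm]
  have htaylor := hu.apply_add_eq_of_dirDeriv_dirDeriv_eq hsecond 0
  rw [zero_add, hfirst] at htaylor
  linarith

theorem IsAdmissibleSolution.isQuadraticPolynomial (hu : IsAdmissibleSolution k A u)
    (hA : 0 ≤ A) (hgrowth : QuadraticGrowth u) : IsQuadraticPolynomial u := by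
  obtain ⟨M, hM, hbound⟩ := hu.exists_hasHessianBound hA hgrowth
  obtain ⟨Q, hQ, hle⟩ := hu.exists_forall_hessianIn_le (by positivity) hbound
    (EuclideanSpace.basisFun (Fin n) ℝ)
  refine hu.smooth.isQuadraticPolynomial_of_hessianIn_eq (Q := Q) fun x => ?_
  by_contra hne
  have hlt := IsGardingMatrix.matrixEsymm_lt_of_lt ⟨hu.smooth.isHermitian_hessianIn _ x, hu.pos x⟩
    ((hle x).lt_of_ne hne)
  rw [hu.eq_one, hQ] at hlt
  exact lt_irrefl 1 hlt

lemma IsSmooth.hessianMatrix_eq (hu : IsSmooth u) (x : EuclideanSpace ℝ (Fin n)) :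
    hessianMatrix u x = hessianIn (EuclideanSpace.basisFun (Fin n) ℝ) u x := by
  ext i j
  rw [hessianMatrix, iteratedFDeriv_two_apply, hessianIn_apply, hu.dirDeriv_dirDeriv]
  simp

lemma IsSmooth.esymmF_hessEigen (hu : IsSmooth u) (k : ℕ) (x : EuclideanSpace ℝ (Fin n)) :
    esymmF n k (hessEigen u x) =
      matrixEsymm k (hessianIn (EuclideanSpace.basisFun (Fin n) ℝ) u x) := by
  have hH : (hessianMatrix u x).IsHermitian := by
    rw [hu.hessianMatrix_eq]
    exact hu.isHermitian_hessianIn _ x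
  rw [hessEigen, dif_pos hH, ← hu.hessianMatrix_eq, matrixEsymm_eq_esymmOn_eigenvalues hH]
  rfl

end Conclusion

theorem liouville_k_hessian_lower_bound_general (n k : ℕ) (hk : 1 ≤ k)
    (u : EuclideanSpace ℝ (Fin n) → ℝ) (hu : ContDiff ℝ (⊤ : ℕ∞) u)
    (hadm : ∀ x, hessEigen u x ∈ GammaK n k)
    (heq : ∀ x, esymmF n k (hessEigen u x) = 1)
    (hquad : QuadraticGrowth u)
    (A : ℝ)
    (hsig : ∀ x, -A ≤ esymmF n (k + 1) (hessEigen u x)) :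
    IsQuadraticPolynomial u := by
  obtain ⟨m, rfl⟩ := Nat.exists_eq_add_of_le' hk
  have hadmissible : IsAdmissibleSolution m (max A 0) u := by
    refine ⟨hu, fun x j hj => ?_, fun x => ?_, fun x => ?_⟩ <;>
      rw [← IsSmooth.esymmF_hessEigen hu]
    · rcases j with _ | j
      · simp [esymmF]
      · exact hadm x (j + 1) (by omega) hj
    · exact heq x
    · exact (neg_le_neg (le_max_left A 0)).trans (hsig x)
  exact hadmissible.isQuadraticPolynomial (le_max_right A 0) hquad

/-- **Liouville theorem for the `k`-Hessian equation (weak version of `(k+1)`-convexity).**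
A smooth entire `k`-convex solution of `σ_k(D²u) = 1` with quadratic growth satisfying
`σ_{k+1}(D²u) ≥ −A` for a uniform constant `A > 0` is a quadratic polynomial. -/
theorem liouville_k_hessian_lower_bound (n k : ℕ) (hn : 2 ≤ n) (hk1 : 1 ≤ k) (hk2 : k ≤ n - 1)
    (u : EuclideanSpace ℝ (Fin n) → ℝ) (hu : ContDiff ℝ (⊤ : ℕ∞) u)
    (hadm : ∀ x, hessEigen u x ∈ GammaK n k)
    (heq : ∀ x, esymmF n k (hessEigen u x) = 1)
    (hquad : QuadraticGrowth u)
    (A : ℝ) (hA : 0 < A)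
    (hsig : ∀ x, -A ≤ esymmF n (k + 1) (hessEigen u x)) :
    IsQuadraticPolynomial u :=
  liouville_k_hessian_lower_bound_general n k hk1 u hu hadm heq hquad A hsig
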